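/- arXiv:math-ph/0606058 — 2 statements merged into one kernel-verified Lean document; each statement's English description precedes it below -/
import Mathlib

section
/- Let ε > 0, let n ≥ 2 be an integer, and let Ω = Ω(ε) satisfy 0 ≤ Ω(ε) ≤ 1/(√π ε). Suppose Ψ_n(r,θ) = ξ_n(r)e^{inθ} minimizes the GP functional E^GP_{ε,Ω} among all L²(B₁)-normalized functions Ψ ∈ H¹(B₁;ℂ) satisfying LΨ = nΨ. Then Ψ_n is not a local minimizer of E^GP_{ε,Ω}: for every δ > 0 there exists Φ ∈ H¹(B₁;ℂ) with ‖Φ‖_{L²(B₁)} = 1, ‖Φ − Ψ_n‖_{H¹(B₁)} < δ, and E^GP_{ε,Ω}[Φ] < E^GP_{ε,Ω}[Ψ_n]. -/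
open MeasureTheory Real Filter

noncomputable section

/-- Points of the plane. -/
abbrev Pt : Type := EuclideanSpace ℝ (Fin 2)

/-- The open unit disc. -/
def B1 : Set Pt := Metric.ball 0 1

/-- First partial derivative of a complex-valued function. -/
def pd1 (Ψ : Pt → ℂ) (x : Pt) : ℂ := fderiv ℝ Ψ x (EuclideanSpace.single 0 1)

/-- Second partial derivative of a complex-valued function. -/
def pd2 (Ψ : Pt → ℂ) (x : Pt) : ℂ := fderiv ℝ Ψ x (EuclideanSpace.single 1 1)

/-- Angular momentum operator `L = -i (x₁ ∂₂ - x₂ ∂₁)`. -/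
def angMom (Ψ : Pt → ℂ) (x : Pt) : ℂ :=
  -Complex.I * ((x 0 : ℂ) * pd2 Ψ x - (x 1 : ℂ) * pd1 Ψ x)

/-- The Gross-Pitaevskii energy density `|∇Ψ|² - Ω conj(Ψ) LΨ + |Ψ|⁴/ε²`. -/
def gpDensity (ε Ω : ℝ) (Ψ : Pt → ℂ) (x : Pt) : ℝ :=
  ‖pd1 Ψ x‖ ^ 2 + ‖pd2 Ψ x‖ ^ 2
    - Ω * (starRingEnd ℂ (Ψ x) * angMom Ψ x).re
    + ‖Ψ x‖ ^ 4 / ε ^ 2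

/-- The Gross-Pitaevskii functional on the unit disc. -/
def gpEnergy (ε Ω : ℝ) (Ψ : Pt → ℂ) : ℝ := ∫ x in B1, gpDensity ε Ω Ψ x

/-- Admissible (H¹, normalized) wave functions. -/
def gpAdm (Ψ : Pt → ℂ) : Prop :=
  DifferentiableOn ℝ Ψ B1 ∧
  IntegrableOn (fun x => ‖Ψ x‖ ^ 2) B1 ∧
  IntegrableOn (fun x => ‖pd1 Ψ x‖ ^ 2 + ‖pd2 Ψ x‖ ^ 2) B1 ∧
  IntegrableOn (fun x => ‖Ψ x‖ ^ 4) B1 ∧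
  IntegrableOn (fun x => (starRingEnd ℂ (Ψ x) * angMom Ψ x).re) B1 ∧
  (∫ x in B1, ‖Ψ x‖ ^ 2) = 1

/-- The GP ground-state energy: infimum of the functional over normalized functions. -/
def gpGround (ε Ω : ℝ) : ℝ := sInf {E | ∃ Ψ : Pt → ℂ, gpAdm Ψ ∧ E = gpEnergy ε Ω Ψ}

/-- A GP minimizer: a normalized admissible function attaining the infimum. -/
def IsGPMinimizer (ε Ω : ℝ) (Ψ : Pt → ℂ) : Prop :=
  gpAdm Ψ ∧ gpEnergy ε Ω Ψ = gpGround ε Ω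

/-- The Thomas-Fermi functional. -/
def tfEnergy (Ω₀ : ℝ) (ρ : Pt → ℝ) : ℝ :=
  ∫ x in B1, ((ρ x) ^ 2 - Ω₀ ^ 2 * ‖x‖ ^ 2 * ρ x / 4)

/-- Admissible TF densities: nonnegative, in L²(B₁), of total mass one. -/
def tfAdm (ρ : Pt → ℝ) : Prop :=
  IntegrableOn ρ B1 ∧ IntegrableOn (fun x => (ρ x) ^ 2) B1 ∧
  (∀ᵐ x ∂(volume.restrict B1), 0 ≤ ρ x) ∧ (∫ x in B1, ρ x) = 1

/-- The TF ground-state energy. -/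
def tfGround (Ω₀ : ℝ) : ℝ := sInf {E | ∃ ρ : Pt → ℝ, tfAdm ρ ∧ E = tfEnergy Ω₀ ρ}

/-- Radius of the TF "hole". -/
def R0 (Ω₀ : ℝ) : ℝ := Real.sqrt (1 - 4 / (Real.sqrt π * Ω₀))

/-- The TF minimizer. -/
def rhoTF (Ω₀ : ℝ) (x : Pt) : ℝ :=
  if Ω₀ ≤ 4 / Real.sqrt π then 1 / π - Ω₀ ^ 2 / 16 * (1 - 2 * ‖x‖ ^ 2)
  else max 0 (Ω₀ ^ 2 / 8 * (‖x‖ ^ 2 - 1) + Ω₀ / (2 * Real.sqrt π))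

open MeasureTheory Real Filter

noncomputable section

/-- Complex coordinate. -/
def zc (x : Pt) : ℂ := (x 0 : ℂ) + (x 1 : ℂ) * Complex.I

/-- Functions of the form `F(r) e^{imθ}`. -/
def md (F : ℝ → ℂ) (m : ℕ) (x : Pt) : ℂ := F ‖x‖ * (zc x / (‖x‖ : ℂ)) ^ m

lemma norm_sq_pt (x : Pt) : ‖x‖ ^ 2 = x 0 ^ 2 + x 1 ^ 2 := by
  rw [EuclideanSpace.norm_sq_eq]; simp [Fin.sum_univ_two]

lemma norm_zc (x : Pt) : ‖zc x‖ = ‖x‖ := by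
  have h : ‖zc x‖ ^ 2 = ‖x‖ ^ 2 := by
    rw [norm_sq_pt, ← Complex.normSq_eq_norm_sq, Complex.normSq_apply]
    simp [zc]; ring
  exact (sq_eq_sq₀ (norm_nonneg _) (norm_nonneg _)).1 h

lemma norm_ev {x : Pt} (hx : x ≠ 0) : ‖zc x / (‖x‖ : ℂ)‖ = 1 := by
  have : ‖x‖ ≠ 0 := norm_ne_zero_iff.2 hx
  rw [norm_div, norm_zc]; simp [this]

lemma norm_md {x : Pt} (hx : x ≠ 0) (F : ℝ → ℂ) (m : ℕ) : ‖md F m x‖ = ‖F ‖x‖‖ := by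
  rw [md, norm_mul, norm_pow, norm_ev hx]; simp


/-- `zc` as a continuous linear map. -/
def zcL : Pt →L[ℝ] ℂ := (Complex.ofRealCLM.comp (EuclideanSpace.proj 0)) +
  (ContinuousLinearMap.restrictScalars ℝ (ContinuousLinearMap.mul ℂ ℂ Complex.I)).comp
    (Complex.ofRealCLM.comp (EuclideanSpace.proj 1))

lemma zcL_apply (x : Pt) : zcL x = zc x := by
  simp [zc, zcL, mul_comm]

lemma hasFDerivAt_zc (x : Pt) : HasFDerivAt zc zcL x := by
  have : zc = fun x => zcL x := by ext x; rw [zcL_apply]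
  rw [this]; exact zcL.hasFDerivAt

lemma zcL_e0 : zcL (EuclideanSpace.single 0 1) = 1 := by rw [zcL_apply]; simp [zc]
lemma zcL_e1 : zcL (EuclideanSpace.single 1 1) = Complex.I := by rw [zcL_apply]; simp [zc]

lemma hasFDerivAt_nrm {x : Pt} (hx : x ≠ 0) : ∃ L : Pt →L[ℝ] ℝ, HasFDerivAt (fun y : Pt => ‖y‖)
    L x ∧ L (EuclideanSpace.single 0 1) = x 0 / ‖x‖ ∧ L (EuclideanSpace.single 1 1) = x 1 / ‖x‖ := by
  have h := (hasStrictFDerivAt_norm_sq x).hasFDerivAt.sqrt (by simpa using hx)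
  simp only [Real.sqrt_sq (norm_nonneg _)] at h
  have hr : ‖x‖ ≠ 0 := norm_ne_zero_iff.2 hx
  refine ⟨_, h, ?_, ?_⟩ <;> simp [EuclideanSpace.inner_single_right] <;> field_simp

lemma zc_ne {x : Pt} (hx : x ≠ 0) : zc x ≠ 0 := by
  rw [← norm_ne_zero_iff, norm_zc]; exact norm_ne_zero_iff.2 hx

lemma md_hasFDerivAt {F : ℝ → ℂ} {F' : ℂ} {m : ℕ} {x : Pt} (hx : x ≠ 0)
    (hF : HasDerivAt F F' ‖x‖) : DifferentiableAt ℝ (md F m) x ∧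
    pd1 (md F m) x = (F' * (x 0 / ‖x‖) - Complex.I * m * F ‖x‖ * (x 1 / ‖x‖ ^ 2)) *
      (zc x / (‖x‖ : ℂ)) ^ m ∧
    pd2 (md F m) x = (F' * (x 1 / ‖x‖) + Complex.I * m * F ‖x‖ * (x 0 / ‖x‖ ^ 2)) *
      (zc x / (‖x‖ : ℂ)) ^ m := by
  have hr : ‖x‖ ≠ 0 := norm_ne_zero_iff.2 hx
  have hrc : (‖x‖ : ℂ) ≠ 0 := by exact_mod_cast hr
  obtain ⟨L, hN, hL0, hL1⟩ := hasFDerivAt_nrm hx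
  have h1 : HasFDerivAt (fun y : Pt => F ‖y‖) _ x := hF.hasFDerivAt.comp x hN
  have h2 : HasFDerivAt (fun y : Pt => ((‖y‖⁻¹ : ℝ) : ℂ)) _ x :=
    Complex.ofRealCLM.hasFDerivAt.comp x ((hasDerivAt_inv hr).comp_hasFDerivAt x hN)
  have h3 := ((hasFDerivAt_zc x).mul h2).pow m
  have h4 := h1.mul h3
  have e : md F m = fun y => F ‖y‖ * (zc y * ((‖y‖⁻¹ : ℝ) : ℂ)) ^ m := by
    ext y; simp [md, div_eq_mul_inv]
  have hz : zc x = (x 0 : ℂ) + (x 1 : ℂ) * Complex.I := rfl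
  have hs : (‖x‖ : ℂ) ^ 2 = x 0 ^ 2 + x 1 ^ 2 := by exact_mod_cast norm_sq_pt x
  have hI := Complex.I_sq
  have hzn := zc_ne hx
  have hp : (m : ℂ) * (zc x / ‖x‖) ^ (m - 1) = m * (zc x / ‖x‖) ^ m * (‖x‖ / zc x) := by
    rcases m with _ | m
    · simp
    · simp only [Nat.add_sub_cancel, pow_succ]; field_simp
  refine ⟨?_, ?_, ?_⟩
  · rw [e]; exact h4.differentiableAt
  · rw [pd1, e]
    erw [h4.fderiv]
    simp only [add_apply, smul_apply, zcL_e0, hL0,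
      ContinuousLinearMap.comp_apply]
    simp [hL0, hL1, div_eq_mul_inv] at hp ⊢
    have key : (‖x‖ : ℂ) * (zc x)⁻¹ * (-(zc x * ((((‖x‖ : ℂ) ^ 2)⁻¹ * (x 0 * (‖x‖ : ℂ)⁻¹))))
        + (‖x‖ : ℂ)⁻¹) = -Complex.I * (x 1 * ((‖x‖ : ℂ) ^ 2)⁻¹) := by
      field_simp
      rw [hs, hz]
      linear_combination ((x 1 : ℂ) ^ 2) * hI
    rw [hp]
    linear_combination (F ‖x‖ * m * (zc x * (‖x‖ : ℂ)⁻¹) ^ m) * key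
  · rw [pd2, e]
    erw [h4.fderiv]
    simp only [add_apply, smul_apply, zcL_e1, hL1,
      ContinuousLinearMap.comp_apply]
    simp [hL0, hL1, div_eq_mul_inv] at hp ⊢
    have key : (‖x‖ : ℂ) * (zc x)⁻¹ * (-(zc x * ((((‖x‖ : ℂ) ^ 2)⁻¹ * (x 1 * (‖x‖ : ℂ)⁻¹))))
        + (‖x‖ : ℂ)⁻¹ * Complex.I) = Complex.I * (x 0 * ((‖x‖ : ℂ) ^ 2)⁻¹) := by
      field_simp
      rw [hs, hz]
      linear_combination (-(x 1 : ℂ) * x 0) * hI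
    rw [hp]
    linear_combination (F ‖x‖ * m * (zc x * (‖x‖ : ℂ)⁻¹) ^ m) * key

/-- Rotation by `π/4`. -/
lemma exists_rot : ∃ R : Pt ≃ₗᵢ[ℝ] Pt, ∀ x, zc (R x) ^ 2 = Complex.I * zc x ^ 2 := by
  have hz : ∀ x, zc x = Complex.orthonormalBasisOneI.repr.symm x := by
    intro x
    rw [← Complex.orthonormalBasisOneI.sum_repr (Complex.orthonormalBasisOneI.repr.symm x)]
    simp [zc, Fin.sum_univ_two]
  refine ⟨Complex.orthonormalBasisOneI.repr.symm.trans
    ((rotation (Circle.exp (π / 4))).trans Complex.orthonormalBasisOneI.repr), fun x => ?_⟩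
  rw [hz, hz]
  simp only [LinearIsometryEquiv.trans_apply, LinearIsometryEquiv.symm_apply_apply, rotation_apply,
    Circle.coe_exp, mul_pow]
  congr 1
  rw [← Complex.exp_nat_mul]
  convert Complex.exp_pi_div_two_mul_I using 2
  push_cast; ring

lemma integral_rot (R : Pt ≃ₗᵢ[ℝ] Pt) (F : Pt → ℝ) :
    ∫ x in B1, F (R x) = ∫ x in B1, F x := by
  have h := R.measurePreserving.setIntegral_preimage_emb
    R.toHomeomorph.measurableEmbedding F B1
  have e : R ⁻¹' B1 = B1 := by
    ext x; simp [B1]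
  rwa [e] at h

lemma vol_B1 : (volume : Measure Pt).real (Metric.ball 0 1) = π := by
  simp [Measure.real, EuclideanSpace.volume_ball_fin_two, Real.pi_pos.le]

lemma ind_B1 {E : Type*} [Zero E] (φ : ℝ → E) :
    (B1.indicator (fun x : Pt => φ ‖x‖)) = fun x : Pt => (Set.Iio (1:ℝ)).indicator φ ‖x‖ := by
  ext x; simp [Set.indicator, B1]

lemma radial_integral (φ : ℝ → ℝ) :
    ∫ x in B1, φ ‖x‖ = 2 * π * ∫ r in (0:ℝ)..1, r * φ r := by
  rw [← integral_indicator (by exact measurableSet_ball), ind_B1, integral_fun_norm_addHaar, vol_B1]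
  have : ∀ y : ℝ, y ^ (Module.finrank ℝ Pt - 1) • (Set.Iio (1:ℝ)).indicator φ y
      = (Set.Iio (1:ℝ)).indicator (fun r => r * φ r) y := by
    intro y; simp [Set.indicator]
  simp only [this]
  rw [setIntegral_indicator measurableSet_Iio, intervalIntegral.integral_of_le zero_le_one,
    integral_Ioc_eq_integral_Ioo]
  simp [Set.Ioi_inter_Iio]; ring

lemma radial_integrable (φ : ℝ → ℝ) :
    IntegrableOn (fun x : Pt => φ ‖x‖) B1 ↔ IntegrableOn (fun r => r * φ r) (Set.Ioo 0 1) := by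
  rw [← integrable_indicator_iff (by exact measurableSet_ball), ind_B1,
    integrable_fun_norm_addHaar]
  have : ∀ y : ℝ, y ^ (Module.finrank ℝ Pt - 1) • (Set.Iio (1:ℝ)).indicator φ y
      = (Set.Iio (1:ℝ)).indicator (fun r => r * φ r) y := by
    intro y; simp [Set.indicator]
  simp only [this]
  rw [IntegrableOn, integrable_indicator_iff measurableSet_Iio, IntegrableOn,
    Measure.restrict_restrict measurableSet_Iio, Set.inter_comm, Set.Ioi_inter_Iio]
  rfl

end

open MeasureTheory Real Filter

noncomputable section

/-- Bounded differentiable perturbations with bounded gradient. -/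
def Nice (w : Pt → ℂ) : Prop := DifferentiableOn ℝ w B1 ∧
  ∃ C : ℝ, 0 ≤ C ∧ ∀ x ∈ B1, ‖w x‖ ≤ C ∧ ‖pd1 w x‖ ≤ C ∧ ‖pd2 w x‖ ≤ C

/-- real inner product of complex numbers -/
def rip (a b : ℂ) : ℝ := (starRingEnd ℂ a * b).re

lemma rip_le (a b : ℂ) : |rip a b| ≤ ‖a‖ * ‖b‖ := by
  refine (Complex.abs_re_le_norm _).trans ?_
  simp

lemma rip_eq (a b : ℂ) : rip a b = a.re * b.re + a.im * b.im := by
  simp [rip]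

lemma nsq (a : ℂ) : ‖a‖ ^ 2 = a.re * a.re + a.im * a.im := by
  rw [← Complex.normSq_eq_norm_sq, Complex.normSq_apply]

lemma measB1 : MeasurableSet B1 := measurableSet_ball

lemma isOpenB1 : IsOpen B1 := Metric.isOpen_ball

lemma aes {w : Pt → ℂ} (h : DifferentiableOn ℝ w B1) :
    AEStronglyMeasurable w (volume.restrict B1) :=
  h.continuousOn.aestronglyMeasurable measB1

lemma meas_pd1 (w : Pt → ℂ) : Measurable (pd1 w) := measurable_fderiv_apply_const ℝ w _
lemma meas_pd2 (w : Pt → ℂ) : Measurable (pd2 w) := measurable_fderiv_apply_const ℝ w _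

lemma aes_pd1 (w : Pt → ℂ) : AEStronglyMeasurable (pd1 w) (volume.restrict B1) :=
  (meas_pd1 w).aestronglyMeasurable
lemma aes_pd2 (w : Pt → ℂ) : AEStronglyMeasurable (pd2 w) (volume.restrict B1) :=
  (meas_pd2 w).aestronglyMeasurable

lemma aes_x (i : Fin 2) : AEStronglyMeasurable (fun x : Pt => ((x i : ℝ) : ℂ)) (volume.restrict B1) := by
  apply Continuous.aestronglyMeasurable; fun_prop

lemma aes_L (w : Pt → ℂ) : AEStronglyMeasurable (angMom w) (volume.restrict B1) := by
  unfold angMom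
  exact (((aes_x 0).mul (aes_pd2 w)).sub ((aes_x 1).mul (aes_pd1 w))).const_mul _

lemma aes_rip {a b : Pt → ℂ} (ha : AEStronglyMeasurable a (volume.restrict B1))
    (hb : AEStronglyMeasurable b (volume.restrict B1)) :
    AEStronglyMeasurable (fun x => rip (a x) (b x)) (volume.restrict B1) := by
  unfold rip
  exact Complex.continuous_re.comp_aestronglyMeasurable
    ((Complex.continuous_conj.comp_aestronglyMeasurable ha).mul hb)

lemma int_const (c : ℝ) : IntegrableOn (fun _ : Pt => c) B1 :=
  integrableOn_const (by rw [B1, EuclideanSpace.volume_ball_fin_two]; finiteness)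

lemma int_of_le {F G : Pt → ℝ} (hF : AEStronglyMeasurable F (volume.restrict B1))
    (hG : IntegrableOn G B1) (h : ∀ x ∈ B1, |F x| ≤ G x) : IntegrableOn F B1 := by
  refine Integrable.mono' hG hF ?_
  filter_upwards [ae_restrict_mem measB1] with x hx
  exact h x hx

lemma coord_le {x : Pt} (hx : x ∈ B1) (i : Fin 2) : ‖((x i : ℝ) : ℂ)‖ ≤ 1 := by
  have : ‖x‖ < 1 := by simpa [B1] using hx
  rw [Complex.norm_real]
  exact (PiLp.norm_apply_le x i).trans this.le

lemma angMom_le {w : Pt → ℂ} {x : Pt} (hx : x ∈ B1) : ‖angMom w x‖ ≤ ‖pd1 w x‖ + ‖pd2 w x‖ := by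
  unfold angMom
  rw [norm_mul, norm_neg, Complex.norm_I, one_mul]
  refine (norm_sub_le _ _).trans ?_
  rw [norm_mul, norm_mul]
  have h0 := coord_le hx 0
  have h1 := coord_le hx 1
  nlinarith [norm_nonneg (pd1 w x), norm_nonneg (pd2 w x)]

variable {Ψ w : Pt → ℂ}

lemma pd_lin (hΨ : DifferentiableOn ℝ Ψ B1) (hw : DifferentiableOn ℝ w B1) (c d : ℂ) {x : Pt}
    (hx : x ∈ B1) :
    pd1 (fun y => c * Ψ y + d * w y) x = c * pd1 Ψ x + d * pd1 w x ∧
    pd2 (fun y => c * Ψ y + d * w y) x = c * pd2 Ψ x + d * pd2 w x := by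
  have h1 := (hΨ.differentiableAt (isOpenB1.mem_nhds hx)).hasFDerivAt
  have h2 := (hw.differentiableAt (isOpenB1.mem_nhds hx)).hasFDerivAt
  have h := (h1.const_mul c).add (h2.const_mul d)
  constructor
  · rw [pd1]; erw [h.fderiv]; simp [pd1]
  · rw [pd2]; erw [h.fderiv]; simp [pd2]

lemma angMom_lin (hΨ : DifferentiableOn ℝ Ψ B1) (hw : DifferentiableOn ℝ w B1) (c d : ℂ) {x : Pt}
    (hx : x ∈ B1) :
    angMom (fun y => c * Ψ y + d * w y) x = c * angMom Ψ x + d * angMom w x := by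
  unfold angMom
  rw [(pd_lin hΨ hw c d hx).1, (pd_lin hΨ hw c d hx).2]; ring

/-- quadratic gradient part -/
def gG (Ψ : Pt → ℂ) (x : Pt) : ℝ := ‖pd1 Ψ x‖ ^ 2 + ‖pd2 Ψ x‖ ^ 2
/-- bilinear gradient part -/
def gB (Ψ w : Pt → ℂ) (x : Pt) : ℝ := rip (pd1 Ψ x) (pd1 w x) + rip (pd2 Ψ x) (pd2 w x)
/-- bilinear angular momentum part -/
def gL (Ψ w : Pt → ℂ) (x : Pt) : ℝ := rip (Ψ x) (angMom w x)

/-- coefficient of `t` in the quadratic part -/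
def dE1 (Ω : ℝ) (Ψ w : Pt → ℂ) (x : Pt) : ℝ := 2 * gB Ψ w x - Ω * (gL Ψ w x + gL w Ψ x)
/-- coefficient of `t ^ 2` in the quadratic part -/
def dE2 (Ω : ℝ) (w : Pt → ℂ) (x : Pt) : ℝ := gG w x - Ω * gL w w x
/-- coefficient of `t` in the quartic part -/
def dF1 (ε : ℝ) (Ψ w : Pt → ℂ) (x : Pt) : ℝ := 4 * ‖Ψ x‖ ^ 2 * rip (Ψ x) (w x) / ε ^ 2
/-- coefficient of `t^2` in the quartic part -/
def dF2 (ε : ℝ) (Ψ w : Pt → ℂ) (x : Pt) : ℝ :=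
  (4 * rip (Ψ x) (w x) ^ 2 + 2 * ‖Ψ x‖ ^ 2 * ‖w x‖ ^ 2) / ε ^ 2
/-- coefficient of `t^3` in the quartic part -/
def dF3 (ε : ℝ) (Ψ w : Pt → ℂ) (x : Pt) : ℝ := 4 * rip (Ψ x) (w x) * ‖w x‖ ^ 2 / ε ^ 2

lemma int_cross (hadm : gpAdm Ψ) (hw : Nice w) :
    IntegrableOn (fun x => rip (Ψ x) (w x)) B1 ∧
    IntegrableOn (fun x => ‖w x‖ ^ 2) B1 ∧
    IntegrableOn (gB Ψ w) B1 ∧ IntegrableOn (gL Ψ w) B1 ∧ IntegrableOn (gL w Ψ) B1 ∧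
    IntegrableOn (gG w) B1 ∧ IntegrableOn (gL w w) B1 ∧
    IntegrableOn (fun x => ‖Ψ x‖ ^ 2 * rip (Ψ x) (w x)) B1 ∧
    IntegrableOn (fun x => rip (Ψ x) (w x) ^ 2) B1 ∧
    IntegrableOn (fun x => ‖Ψ x‖ ^ 2 * ‖w x‖ ^ 2) B1 ∧
    IntegrableOn (fun x => rip (Ψ x) (w x) * ‖w x‖ ^ 2) B1 ∧
    IntegrableOn (fun x => ‖w x‖ ^ 4) B1 := by
  obtain ⟨hd, i2, iG, i4, iL, -⟩ := hadm
  obtain ⟨hwd, C, hC, hb⟩ := hw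
  have mΨ := aes hd
  have mw := aes hwd
  have mnΨ := mΨ.norm
  have mnw := mw.norm
  have mr := aes_rip mΨ mw
  have hr : ∀ x ∈ B1, |rip (Ψ x) (w x)| ≤ C * ‖Ψ x‖ := fun x hx => by
    refine (rip_le _ _).trans ?_
    rw [mul_comm]; exact mul_le_mul_of_nonneg_right (hb x hx).1 (norm_nonneg _)
  have iΨ : IntegrableOn (fun x => ‖Ψ x‖) B1 := by
    refine int_of_le mnΨ ((int_const 1).add i2) fun x _ => ?_
    simp only [Pi.add_apply]
    rw [abs_of_nonneg (norm_nonneg _)]; nlinarith [sq_nonneg (‖Ψ x‖ - 1), sq_nonneg (‖Ψ x‖)]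
  have iΨ3 : IntegrableOn (fun x => ‖Ψ x‖ ^ 3) B1 := by
    refine int_of_le (mnΨ.pow 3) (i2.add i4) fun x _ => ?_
    simp only [Pi.add_apply]
    have := norm_nonneg (Ψ x)
    rw [abs_of_nonneg (by positivity)]
    nlinarith [mul_nonneg (sq_nonneg ‖Ψ x‖) (sq_nonneg (‖Ψ x‖ - 1)), sq_nonneg (‖Ψ x‖ ^ 2)]
  have ig : IntegrableOn (fun x => ‖pd1 Ψ x‖ + ‖pd2 Ψ x‖) B1 := by
    refine int_of_le ((aes_pd1 Ψ).norm.add (aes_pd2 Ψ).norm) ((int_const 1).add iG) fun x _ => ?_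
    simp only [Pi.add_apply]
    rw [abs_of_nonneg (by positivity)]
    nlinarith [sq_nonneg (‖pd1 Ψ x‖ - 1), sq_nonneg (‖pd2 Ψ x‖ - 1), sq_nonneg (‖pd1 Ψ x‖), sq_nonneg ‖pd2 Ψ x‖]
  have hw2 : ∀ x ∈ B1, ‖w x‖ ^ 2 ≤ C ^ 2 := fun x hx => by
    have := (hb x hx).1; gcongr
  refine ⟨?_, ?_, ?_, ?_, ?_, ?_, ?_, ?_, ?_, ?_, ?_, ?_⟩
  · exact int_of_le mr (iΨ.const_mul C) hr
  · refine int_of_le (mnw.pow 2) (int_const (C ^ 2)) fun x hx => ?_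
    rw [abs_of_nonneg (by positivity)]; exact hw2 x hx
  · refine int_of_le ((aes_rip (aes_pd1 _) (aes_pd1 _)).add (aes_rip (aes_pd2 _) (aes_pd2 _)))
      (ig.const_mul C) fun x hx => ?_
    refine (abs_add_le _ _).trans ?_
    have h1 := rip_le (pd1 Ψ x) (pd1 w x)
    have h2 := rip_le (pd2 Ψ x) (pd2 w x)
    obtain ⟨-, h3, h4⟩ := hb x hx
    nlinarith [mul_le_mul_of_nonneg_left h3 (norm_nonneg (pd1 Ψ x)), mul_le_mul_of_nonneg_left h4 (norm_nonneg (pd2 Ψ x))]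
  · refine int_of_le (aes_rip mΨ (aes_L w)) (iΨ.const_mul (2 * C)) fun x hx => ?_
    refine (rip_le _ _).trans ?_
    rw [mul_comm]
    refine mul_le_mul_of_nonneg_right ((angMom_le hx).trans ?_) (norm_nonneg _)
    linarith [(hb x hx).2.1, (hb x hx).2.2]
  · refine int_of_le (aes_rip mw (aes_L Ψ)) (ig.const_mul C) fun x hx => ?_
    refine (rip_le _ _).trans ?_
    exact mul_le_mul (hb x hx).1 (angMom_le hx) (norm_nonneg _) hC
  · refine int_of_le (((aes_pd1 w).norm.pow 2).add ((aes_pd2 w).norm.pow 2)) (int_const (C ^ 2 + C ^ 2)) fun x hx => ?_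
    obtain ⟨-, h3, h4⟩ := hb x hx
    have : 0 ≤ gG w x := by unfold gG; positivity
    rw [abs_of_nonneg this]
    unfold gG
    gcongr
  · refine int_of_le (aes_rip mw (aes_L w)) (int_const (C * (C + C))) fun x hx => ?_
    refine (rip_le _ _).trans ?_
    obtain ⟨h2, h3, h4⟩ := hb x hx
    exact mul_le_mul h2 ((angMom_le hx).trans (add_le_add h3 h4)) (norm_nonneg _) hC
  · refine int_of_le ((mnΨ.pow 2).mul mr) (iΨ3.const_mul C) fun x hx => ?_
    rw [abs_mul, abs_of_nonneg (sq_nonneg ‖Ψ x‖)]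
    nlinarith [mul_le_mul_of_nonneg_left (hr x hx) (sq_nonneg ‖Ψ x‖)]
  · refine int_of_le (mr.pow 2) (i2.const_mul (C ^ 2)) fun x hx => ?_
    rw [abs_pow, ← mul_pow]
    exact pow_le_pow_left₀ (abs_nonneg _) (hr x hx) 2
  · refine int_of_le ((mnΨ.pow 2).mul (mnw.pow 2)) (i2.const_mul (C ^ 2)) fun x hx => ?_
    rw [abs_of_nonneg (by positivity), mul_comm]
    exact mul_le_mul_of_nonneg_right (hw2 x hx) (sq_nonneg _)
  · refine int_of_le (mr.mul (mnw.pow 2)) (iΨ.const_mul (C * C ^ 2)) fun x hx => ?_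
    rw [abs_mul, abs_of_nonneg (sq_nonneg ‖w x‖)]
    have := mul_le_mul (hr x hx) (hw2 x hx) (sq_nonneg _) (by positivity)
    linarith
  · refine int_of_le (mnw.pow 4) (int_const (C ^ 4)) fun x hx => ?_
    rw [abs_of_nonneg (by positivity)]
    have := (hb x hx).1; gcongr

end

open MeasureTheory Real Filter

noncomputable section

variable {Ψ w : Pt → ℂ}

/-- the perturbed function -/
def pert (c t : ℝ) (Ψ w : Pt → ℂ) : Pt → ℂ := fun x => (c : ℂ) * Ψ x + ((c * t : ℝ) : ℂ) * w x

lemma IA {f g : Pt → ℝ} (hf : IntegrableOn f B1) (hg : IntegrableOn g B1) :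
    IntegrableOn (fun x => f x + g x) B1 := hf.add hg
lemma IS {f g : Pt → ℝ} (hf : IntegrableOn f B1) (hg : IntegrableOn g B1) :
    IntegrableOn (fun x => f x - g x) B1 := hf.sub hg
lemma IM {f : Pt → ℝ} (c : ℝ) (hf : IntegrableOn f B1) :
    IntegrableOn (fun x => c * f x) B1 := hf.const_mul c

lemma nsq_comb (c t : ℝ) (a b : ℂ) : ‖(c : ℂ) * a + ((c * t : ℝ) : ℂ) * b‖ ^ 2 =
    c ^ 2 * (‖a‖ ^ 2 + 2 * t * rip a b + t ^ 2 * ‖b‖ ^ 2) := by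
  simp only [nsq, rip_eq]; simp; ring

lemma rip_comb (c t : ℝ) (a b a' b' : ℂ) : rip ((c : ℂ) * a + ((c * t : ℝ) : ℂ) * b)
     ((c : ℂ) * a' + ((c * t : ℝ) : ℂ) * b') =
    c ^ 2 * (rip a a' + t * (rip a b' + rip b a') + t ^ 2 * rip b b') := by
  simp only [rip_eq]; simp; ring

lemma pert_pt (hΨ : DifferentiableOn ℝ Ψ B1) (hw : DifferentiableOn ℝ w B1) (c t : ℝ) {x : Pt}
    (hx : x ∈ B1) :
    ‖pert c t Ψ w x‖ ^ 2 = c ^ 2 * (‖Ψ x‖ ^ 2 + 2 * t * rip (Ψ x) (w x) + t ^ 2 * ‖w x‖ ^ 2) ∧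
    gG (pert c t Ψ w) x = c ^ 2 * (gG Ψ x + 2 * t * gB Ψ w x + t ^ 2 * gG w x) ∧
    gL (pert c t Ψ w) (pert c t Ψ w) x =
      c ^ 2 * (gL Ψ Ψ x + t * (gL Ψ w x + gL w Ψ x) + t ^ 2 * gL w w x) ∧
    ‖pert c t Ψ w x‖ ^ 4 = c ^ 4 * (‖Ψ x‖ ^ 4 + t * (4 * (‖Ψ x‖ ^ 2 * rip (Ψ x) (w x)))
      + t ^ 2 * (4 * rip (Ψ x) (w x) ^ 2 + 2 * (‖Ψ x‖ ^ 2 * ‖w x‖ ^ 2))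
      + t ^ 3 * (4 * (rip (Ψ x) (w x) * ‖w x‖ ^ 2)) + t ^ 4 * ‖w x‖ ^ 4) := by
  have h := nsq_comb c t (Ψ x) (w x)
  refine ⟨h, ?_, ?_, ?_⟩
  · unfold gG gB pert
    rw [(pd_lin hΨ hw _ _ hx).1, (pd_lin hΨ hw _ _ hx).2, nsq_comb, nsq_comb]; ring
  · unfold gL pert
    rw [angMom_lin hΨ hw _ _ hx, rip_comb]
  · have : ‖pert c t Ψ w x‖ ^ 4 = (‖pert c t Ψ w x‖ ^ 2) ^ 2 := by ring
    rw [this]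
    unfold pert
    rw [h]; ring

lemma gpEnergy_split (ε Ω : ℝ) (h1 : IntegrableOn (gG Ψ) B1) (h2 : IntegrableOn (gL Ψ Ψ) B1)
    (h3 : IntegrableOn (fun x => ‖Ψ x‖ ^ 4) B1) :
    gpEnergy ε Ω Ψ = (∫ x in B1, gG Ψ x) - Ω * (∫ x in B1, gL Ψ Ψ x)
      + (∫ x in B1, ‖Ψ x‖ ^ 4) / ε ^ 2 := by
  rw [← integral_const_mul, ← integral_div, ← integral_sub h1 (h2.const_mul Ω),
    ← integral_add (IS h1 (IM Ω h2)) (h3.div_const _)]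
  rfl

lemma var_lemma (ε Ω : ℝ) (hadm : gpAdm Ψ) (hw : Nice w) (t N c n1 n2 : ℝ)
    (hn1 : n1 = ∫ x in B1, rip (Ψ x) (w x)) (hn2 : n2 = ∫ x in B1, ‖w x‖ ^ 2)
    (hN : N = 1 + 2 * t * n1 + t ^ 2 * n2) (hNp : 0 < N) (hc : c = 1 / √N) :
    gpAdm (pert c t Ψ w) ∧
    gpEnergy ε Ω (pert c t Ψ w) * N ^ 2 =
      ((gpEnergy ε Ω Ψ - (∫ x in B1, ‖Ψ x‖ ^ 4) / ε ^ 2) + t * (∫ x in B1, dE1 Ω Ψ w x)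
        + t ^ 2 * (∫ x in B1, dE2 Ω w x)) * N
      + ((∫ x in B1, ‖Ψ x‖ ^ 4) / ε ^ 2 + t * (∫ x in B1, dF1 ε Ψ w x)
        + t ^ 2 * (∫ x in B1, dF2 ε Ψ w x)
        + t ^ 3 * (∫ x in B1, dF3 ε Ψ w x) + t ^ 4 * ((∫ x in B1, ‖w x‖ ^ 4) / ε ^ 2)) := by
  obtain ⟨j1, j2, j3, j4, j5, j6, j7, j8, j9, j10, j11, j12⟩ := int_cross hadm hw
  obtain ⟨hd, i2, iG, i4, iL, hnorm⟩ := hadm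
  have iG : IntegrableOn (gG Ψ) B1 := iG
  have iL : IntegrableOn (gL Ψ Ψ) B1 := iL
  have hp : ∀ x ∈ B1, _ := fun x hx => pert_pt hd hw.1 c t hx
  have k2 : IntegrableOn (fun x => ‖Ψ x‖ ^ 2 + 2 * t * rip (Ψ x) (w x) + t ^ 2 * ‖w x‖ ^ 2) B1 :=
    (i2.add (j1.const_mul _)).add (j2.const_mul _)
  have kG : IntegrableOn (fun x => gG Ψ x + 2 * t * gB Ψ w x + t ^ 2 * gG w x) B1 :=
    (iG.add (j3.const_mul _)).add (j6.const_mul _)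
  have kL : IntegrableOn (fun x => gL Ψ Ψ x + t * (gL Ψ w x + gL w Ψ x) + t ^ 2 * gL w w x) B1 :=
    (iL.add ((j4.add j5).const_mul _)).add (j7.const_mul _)
  have a1 : IntegrableOn (fun x => 4 * (‖Ψ x‖ ^ 2 * rip (Ψ x) (w x))) B1 := j8.const_mul _
  have a2 : IntegrableOn (fun x => 4 * rip (Ψ x) (w x) ^ 2 + 2 * (‖Ψ x‖ ^ 2 * ‖w x‖ ^ 2)) B1 :=
    (j9.const_mul _).add (j10.const_mul _)
  have a3 : IntegrableOn (fun x => 4 * (rip (Ψ x) (w x) * ‖w x‖ ^ 2)) B1 := j11.const_mul _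
  have k4 : IntegrableOn (fun x => ‖Ψ x‖ ^ 4 + t * (4 * (‖Ψ x‖ ^ 2 * rip (Ψ x) (w x)))
      + t ^ 2 * (4 * rip (Ψ x) (w x) ^ 2 + 2 * (‖Ψ x‖ ^ 2 * ‖w x‖ ^ 2))
      + t ^ 3 * (4 * (rip (Ψ x) (w x) * ‖w x‖ ^ 2)) + t ^ 4 * ‖w x‖ ^ 4) B1 :=
    (((i4.add (a1.const_mul _)).add (a2.const_mul _)).add (a3.const_mul _)).add (j12.const_mul _)
  have P2 : IntegrableOn (fun x => ‖pert c t Ψ w x‖ ^ 2) B1 :=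
    (integrableOn_congr_fun (fun x hx => (hp x hx).1) measB1).2 (k2.const_mul _)
  have PG : IntegrableOn (gG (pert c t Ψ w)) B1 :=
    (integrableOn_congr_fun (fun x hx => (hp x hx).2.1) measB1).2 (kG.const_mul _)
  have PL : IntegrableOn (gL (pert c t Ψ w) (pert c t Ψ w)) B1 :=
    (integrableOn_congr_fun (fun x hx => (hp x hx).2.2.1) measB1).2 (kL.const_mul _)
  have P4 : IntegrableOn (fun x => ‖pert c t Ψ w x‖ ^ 4) B1 :=
    (integrableOn_congr_fun (fun x hx => (hp x hx).2.2.2) measB1).2 (k4.const_mul _)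
  have hcN : c ^ 2 * N = 1 := by
    rw [hc, div_pow, Real.sq_sqrt hNp.le]; field_simp
  have v2 : ∫ x in B1, ‖pert c t Ψ w x‖ ^ 2 = c ^ 2 * N := by
    rw [setIntegral_congr_fun measB1 (fun x hx => (hp x hx).1), integral_const_mul,
      integral_add (IA i2 (IM _ j1)) (IM _ j2),
      integral_add i2 (j1.const_mul _), integral_const_mul, integral_const_mul, hnorm,
      ← hn1, ← hn2, ← hN]
  have vG : ∫ x in B1, gG (pert c t Ψ w) x = c ^ 2 * ((∫ x in B1, gG Ψ x)
      + 2 * t * (∫ x in B1, gB Ψ w x) + t ^ 2 * (∫ x in B1, gG w x)) := by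
    rw [setIntegral_congr_fun measB1 (fun x hx => (hp x hx).2.1), integral_const_mul,
      integral_add (IA iG (IM _ j3)) (IM _ j6),
      integral_add iG (j3.const_mul _), integral_const_mul, integral_const_mul]
  have vL : ∫ x in B1, gL (pert c t Ψ w) (pert c t Ψ w) x = c ^ 2 * ((∫ x in B1, gL Ψ Ψ x)
      + t * ((∫ x in B1, gL Ψ w x) + (∫ x in B1, gL w Ψ x)) + t ^ 2 * (∫ x in B1, gL w w x)) := by
    rw [setIntegral_congr_fun measB1 (fun x hx => (hp x hx).2.2.1), integral_const_mul,
      integral_add (IA iL (IM _ (IA j4 j5))) (IM _ j7),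
      integral_add iL (IM _ (IA j4 j5)), integral_const_mul, integral_const_mul,
      integral_add j4 j5]
  have v4 : ∫ x in B1, ‖pert c t Ψ w x‖ ^ 4 = c ^ 4 * ((∫ x in B1, ‖Ψ x‖ ^ 4)
      + t * (∫ x in B1, 4 * (‖Ψ x‖ ^ 2 * rip (Ψ x) (w x)))
      + t ^ 2 * (∫ x in B1, (4 * rip (Ψ x) (w x) ^ 2 + 2 * (‖Ψ x‖ ^ 2 * ‖w x‖ ^ 2)))
      + t ^ 3 * (∫ x in B1, 4 * (rip (Ψ x) (w x) * ‖w x‖ ^ 2))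
      + t ^ 4 * (∫ x in B1, ‖w x‖ ^ 4)) := by
    rw [setIntegral_congr_fun measB1 (fun x hx => (hp x hx).2.2.2), integral_const_mul,
      integral_add (IA (IA (IA i4 (IM _ a1)) (IM _ a2)) (IM _ a3))
        (j12.const_mul _),
      integral_add (IA (IA i4 (IM _ a1)) (IM _ a2)) (a3.const_mul _),
      integral_add (IA i4 (IM _ a1)) (a2.const_mul _),
      integral_add i4 (a1.const_mul _)]
    simp only [integral_const_mul]
  refine ⟨⟨?_, P2, PG, P4, PL, by rw [v2, hcN]⟩, ?_⟩
  · exact (hd.const_mul _).add (hw.1.const_mul _)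
  have e1 : ∫ x in B1, dE1 Ω Ψ w x = 2 * (∫ x in B1, gB Ψ w x)
      - Ω * ((∫ x in B1, gL Ψ w x) + (∫ x in B1, gL w Ψ x)) := by
    unfold dE1
    rw [integral_sub (IM _ j3) (IM _ (IA j4 j5)), integral_const_mul,
      integral_const_mul, integral_add j4 j5]
  have e2 : ∫ x in B1, dE2 Ω w x = (∫ x in B1, gG w x) - Ω * (∫ x in B1, gL w w x) := by
    unfold dE2
    rw [integral_sub j6 (j7.const_mul _), integral_const_mul]
  have f1 : ∫ x in B1, dF1 ε Ψ w x = (∫ x in B1, 4 * (‖Ψ x‖ ^ 2 * rip (Ψ x) (w x))) / ε ^ 2 := by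
    unfold dF1; rw [integral_div]; simp only [mul_assoc]
  have f2 : ∫ x in B1, dF2 ε Ψ w x =
      (∫ x in B1, (4 * rip (Ψ x) (w x) ^ 2 + 2 * (‖Ψ x‖ ^ 2 * ‖w x‖ ^ 2))) / ε ^ 2 := by
    unfold dF2; rw [integral_div]; simp only [mul_assoc]
  have f3 : ∫ x in B1, dF3 ε Ψ w x = (∫ x in B1, 4 * (rip (Ψ x) (w x) * ‖w x‖ ^ 2)) / ε ^ 2 := by
    unfold dF3; rw [integral_div]; simp only [mul_assoc]
  have hc4 : c ^ 4 * N ^ 2 = 1 := by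
    have : c ^ 4 * N ^ 2 = (c ^ 2 * N) ^ 2 := by ring
    rw [this, hcN]; ring
  rw [gpEnergy_split ε Ω PG PL P4, gpEnergy_split ε Ω iG iL i4, vG, vL, v4, e1, e2, f1, f2, f3]
  generalize (∫ x in B1, gG Ψ x) = X1
  generalize (∫ x in B1, gB Ψ w x) = X2
  generalize (∫ x in B1, gG w x) = X3
  generalize (∫ x in B1, gL Ψ Ψ x) = X4
  generalize (∫ x in B1, gL Ψ w x) = X5
  generalize (∫ x in B1, gL w Ψ x) = X6
  generalize (∫ x in B1, gL w w x) = X7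
  generalize (∫ x in B1, ‖Ψ x‖ ^ 4) = X8
  generalize (∫ x in B1, 4 * (‖Ψ x‖ ^ 2 * rip (Ψ x) (w x))) = X9
  generalize (∫ x in B1, (4 * rip (Ψ x) (w x) ^ 2 + 2 * (‖Ψ x‖ ^ 2 * ‖w x‖ ^ 2))) = X10
  generalize (∫ x in B1, 4 * (rip (Ψ x) (w x) * ‖w x‖ ^ 2)) = X11
  generalize (∫ x in B1, ‖w x‖ ^ 4) = X12
  simp only [div_eq_mul_inv]
  linear_combination (X1 + 2 * t * X2 + t ^ 2 * X3 - Ω * (X4 + t * (X5 + X6) + t ^ 2 * X7)) * N * hcN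
    + (X8 + t * X9 + t ^ 2 * X10 + t ^ 3 * X11 + t ^ 4 * X12) * (ε ^ 2)⁻¹ * hc4

/-- H¹ density -/
def hD (w : Pt → ℂ) (x : Pt) : ℝ := ‖w x‖ ^ 2 + ‖pd1 w x‖ ^ 2 + ‖pd2 w x‖ ^ 2

lemma dist_lemma (hadm : gpAdm Ψ) (hw : Nice w) (c t : ℝ) :
    ∫ x in B1, (‖Ψ x - pert c t Ψ w x‖ ^ 2 +
        ‖pd1 (fun y => Ψ y - pert c t Ψ w y) x‖ ^ 2 + ‖pd2 (fun y => Ψ y - pert c t Ψ w y) x‖ ^ 2)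
      ≤ 2 * (1 - c) ^ 2 * (∫ x in B1, hD Ψ x) + 2 * (c * t) ^ 2 * (∫ x in B1, hD w x) := by
  obtain ⟨j1, j2, j3, j4, j5, j6, j7, j8, j9, j10, j11, j12⟩ := int_cross hadm hw
  obtain ⟨hd, i2, iG, i4, iL, hnorm⟩ := hadm
  have h1 : IntegrableOn (hD Ψ) B1 := by
    have := i2.add iG
    refine this.congr (Eventually.of_forall fun x => ?_)
    simp [hD]; ring
  have h2 : IntegrableOn (hD w) B1 := by
    have := j2.add j6
    refine this.congr (Eventually.of_forall fun x => ?_)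
    simp [hD, gG]; ring
  rw [← integral_const_mul, ← integral_const_mul, ← integral_add (h1.const_mul _) (h2.const_mul _)]
  refine integral_mono_of_nonneg (Eventually.of_forall fun x => by positivity)
    ((h1.const_mul _).add (h2.const_mul _)) ?_
  filter_upwards [ae_restrict_mem measB1] with x hx
  have e : (fun y => Ψ y - pert c t Ψ w y) =
      fun y => ((1 - c : ℝ) : ℂ) * Ψ y + ((-(c * t) : ℝ) : ℂ) * w y := by
    ext y; simp [pert]; ring
  have key : ∀ a b : ℂ, ‖((1 - c : ℝ) : ℂ) * a + ((-(c * t) : ℝ) : ℂ) * b‖ ^ 2 ≤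
      2 * (1 - c) ^ 2 * ‖a‖ ^ 2 + 2 * (c * t) ^ 2 * ‖b‖ ^ 2 := by
    intro a b
    simp only [nsq]
    simp
    nlinarith [sq_nonneg ((1 - c) * a.re + c * t * b.re), sq_nonneg ((1 - c) * a.im + c * t * b.im)]
  have e0 := congrFun e x
  rw [e, (pd_lin hd hw.1 _ _ hx).1, (pd_lin hd hw.1 _ _ hx).2, e0]
  simp only [hD]
  have k1 := key (Ψ x) (w x)
  have k2 := key (pd1 Ψ x) (pd1 w x)
  have k3 := key (pd2 Ψ x) (pd2 w x)
  linarith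

lemma dist_small (hadm : gpAdm Ψ) (hw : Nice w) (n1 n2 : ℝ) {δ : ℝ} (hδ : 0 < δ) :
    ∀ᶠ t in nhds (0:ℝ), 0 < 1 + 2 * t * n1 + t ^ 2 * n2 ∧
     √(∫ x in B1, (‖Ψ x - pert (1 / √(1 + 2 * t * n1 + t ^ 2 * n2)) t Ψ w x‖ ^ 2 +
        ‖pd1 (fun y => Ψ y - pert (1 / √(1 + 2 * t * n1 + t ^ 2 * n2)) t Ψ w y) x‖ ^ 2 +
        ‖pd2 (fun y => Ψ y - pert (1 / √(1 + 2 * t * n1 + t ^ 2 * n2)) t Ψ w y) x‖ ^ 2)) < δ := by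
  have hN : ContinuousAt (fun t : ℝ => 1 + 2 * t * n1 + t ^ 2 * n2) 0 := by fun_prop
  have hNp : ∀ᶠ t in nhds (0:ℝ), 0 < 1 + 2 * t * n1 + t ^ 2 * n2 :=
    hN.eventually (lt_mem_nhds (by simp))
  have hc : ContinuousAt (fun t : ℝ => 1 / √(1 + 2 * t * n1 + t ^ 2 * n2)) 0 := by
    refine ContinuousAt.div continuousAt_const hN.sqrt (by simp)
  have hb : ContinuousAt (fun t : ℝ =>
    2 * (1 - 1 / √(1 + 2 * t * n1 + t ^ 2 * n2)) ^ 2 * (∫ x in B1, hD Ψ x)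
      + 2 * (1 / √(1 + 2 * t * n1 + t ^ 2 * n2) * t) ^ 2 * (∫ x in B1, hD w x)) 0 := by
    fun_prop
  have h0 : 2 * (1 - 1 / √(1 + 2 * (0:ℝ) * n1 + 0 ^ 2 * n2)) ^ 2 * (∫ x in B1, hD Ψ x)
      + 2 * (1 / √(1 + 2 * (0:ℝ) * n1 + 0 ^ 2 * n2) * 0) ^ 2 * (∫ x in B1, hD w x) < δ ^ 2 := by
    norm_num; positivity
  have hbs := hb.eventually (gt_mem_nhds h0)
  filter_upwards [hNp, hbs] with t h1 h2
  refine ⟨h1, ?_⟩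
  rw [Real.sqrt_lt' hδ]
  exact (dist_lemma hadm hw _ t).trans_lt h2

end

open MeasureTheory Real Filter

noncomputable section

/-- first basis vector -/
abbrev e0 : Pt := EuclideanSpace.single 0 1
/-- second basis vector -/
abbrev e1 : Pt := EuclideanSpace.single 1 1

lemma repr_md {Ψ : Pt → ℂ} {n : ℕ} (hd : DifferentiableOn ℝ Ψ B1)
    (heig : ∀ x ∈ B1, angMom Ψ x = (n : ℂ) * Ψ x) {x : Pt} (hx : x ∈ B1) (hx0 : x ≠ 0) :
    Ψ x = md (fun r => Ψ (r • e0)) n x := by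
  set r := ‖x‖ with hr
  have hrp : 0 < r := norm_pos_iff.2 hx0
  have hr1 : r < 1 := by simpa [B1] using hx
  let γ : ℝ → Pt := fun θ => (r * cos θ) • e0 + (r * sin θ) • e1
  have γ0 : ∀ θ, γ θ 0 = r * cos θ := fun θ => by simp [γ]
  have γ1 : ∀ θ, γ θ 1 = r * sin θ := fun θ => by simp [γ]
  have γn : ∀ θ, ‖γ θ‖ = r := fun θ => by
    have : ‖γ θ‖ ^ 2 = r ^ 2 := by
      rw [norm_sq_pt, γ0, γ1]; linear_combination r ^ 2 * cos_sq_add_sin_sq θ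
    exact (sq_eq_sq₀ (norm_nonneg _) hrp.le).1 this
  have γB : ∀ θ, γ θ ∈ B1 := fun θ => by simpa [B1, γn] using hr1
  have hγ : ∀ θ, HasDerivAt γ ((r * -sin θ) • e0 + (r * cos θ) • e1) θ := fun θ =>
    (((hasDerivAt_cos θ).const_mul r).smul_const _).add (((hasDerivAt_sin θ).const_mul r).smul_const _)
  have hΨγ : ∀ θ, HasDerivAt (fun θ => Ψ (γ θ)) (Complex.I * n * Ψ (γ θ)) θ := fun θ => by
    have h1 := (hd.differentiableAt (isOpenB1.mem_nhds (γB θ))).hasFDerivAt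
    have h2 := h1.comp_hasDerivAt θ (hγ θ)
    refine HasDerivAt.congr_deriv h2 ?_
    have h3 := heig _ (γB θ)
    rw [angMom, γ0, γ1] at h3
    rw [map_add, map_smul, map_smul]
    simp only [pd1, pd2] at h3
    rw [mul_assoc, ← h3]
    simp only [Complex.real_smul]
    push_cast
    linear_combination (((r:ℂ) * Complex.cos θ * fderiv ℝ Ψ (γ θ) (EuclideanSpace.single 1 1) - r * Complex.sin θ * fderiv ℝ Ψ (γ θ) (EuclideanSpace.single 0 1))) * Complex.I_sq
  have hex : ∀ θ : ℝ, HasDerivAt (fun θ : ℝ => Complex.exp (-(Complex.I * n * θ)))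
      (Complex.exp (-(Complex.I * n * θ)) * (-(Complex.I * n))) θ := fun θ => by
    have h1 : HasDerivAt (fun θ : ℝ => (θ : ℂ)) 1 θ := Complex.ofRealCLM.hasDerivAt
    have h2 := ((h1.const_mul (Complex.I * n)).neg).cexp
    simpa using h2
  have hg : ∀ θ : ℝ, HasDerivAt (fun θ : ℝ => Ψ (γ θ) * Complex.exp (-(Complex.I * n * θ))) 0 θ := by
    intro θ
    refine HasDerivAt.congr_deriv ((hΨγ θ).mul (hex θ)) ?_
    ring
  have hc := is_const_of_deriv_eq_zero (fun θ => (hg θ).differentiableAt) (fun θ => (hg θ).deriv)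
    (Complex.arg (zc x)) 0
  have hz : zc x = r * Complex.exp (Complex.arg (zc x) * Complex.I) := by
    rw [hr, ← norm_zc]; exact (Complex.norm_mul_exp_arg_mul_I _).symm
  have hγx : γ (Complex.arg (zc x)) = x := by
    have hre := congrArg Complex.re hz
    have him := congrArg Complex.im hz
    rw [Complex.re_ofReal_mul, Complex.exp_ofReal_mul_I_re] at hre
    rw [Complex.im_ofReal_mul, Complex.exp_ofReal_mul_I_im] at him
    ext i
    fin_cases i
    · simp only [Fin.zero_eta, γ0]; rw [← hre]; simp [zc]
    · simp only [Fin.mk_one, γ1]; rw [← him]; simp [zc]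
  have hγ0 : γ 0 = r • e0 := by simp [γ]
  rw [hγx, hγ0] at hc
  simp only [Complex.ofReal_zero, mul_zero, neg_zero, Complex.exp_zero, mul_one] at hc
  have hzr : zc x / (r:ℂ) = Complex.exp (Complex.arg (zc x) * Complex.I) := by
    have : (r : ℂ) ≠ 0 := by exact_mod_cast hrp.ne'
    field_simp
    exact hz
  rw [md, ← hr, hzr, ← hc, mul_assoc, ← Complex.exp_nat_mul, ← Complex.exp_add]
  ring_nf
  simp

lemma mem_B1_e0 {r : ℝ} (h0 : 0 < r) (h1 : r < 1) : r • e0 ∈ B1 := by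
  simp [B1, norm_smul, abs_of_pos h0, h1]

lemma f_deriv {Ψ : Pt → ℂ} (hd : DifferentiableOn ℝ Ψ B1) {r : ℝ} (h0 : 0 < r) (h1 : r < 1) :
    HasDerivAt (fun r : ℝ => Ψ (r • e0)) (pd1 Ψ (r • e0)) r := by
  have h1 := (hd.differentiableAt (isOpenB1.mem_nhds (mem_B1_e0 h0 h1))).hasFDerivAt
  have h2 : HasDerivAt (fun r : ℝ => r • e0) ((1:ℝ) • e0) r := (hasDerivAt_id r).smul_const _
  have := h1.comp_hasDerivAt r h2
  exact HasDerivAt.congr_deriv this (by simp [pd1])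

lemma f_small {Ψ : Pt → ℂ} {n : ℕ} (hn : n ≠ 0) (hd : DifferentiableOn ℝ Ψ B1)
    (heig : ∀ x ∈ B1, angMom Ψ x = (n : ℂ) * Ψ x) :
    Ψ 0 = 0 ∧ ∃ C η : ℝ, 0 ≤ C ∧ 0 < η ∧ η < 1 ∧ ∀ r, 0 < r → r < η → ‖Ψ (r • e0)‖ ≤ C * r := by
  have hB : (0:Pt) ∈ B1 := by simp [B1]
  have h0 : Ψ 0 = 0 := by
    have := heig 0 hB
    simp [angMom] at this
    simpa [hn] using this
  refine ⟨h0, ?_⟩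
  have h1 := (hd.differentiableAt (isOpenB1.mem_nhds hB)).isBigO_sub
  obtain ⟨C, hC⟩ := h1.bound
  rw [Metric.eventually_nhds_iff] at hC
  obtain ⟨η, hη, hC⟩ := hC
  refine ⟨max C 0, min η (1/2), le_max_right _ _, by positivity, (min_le_right _ _).trans_lt (by norm_num), fun r hr hr' => ?_⟩
  have := @hC (r • e0) (by simp [norm_smul, abs_of_pos hr]; exact hr'.trans_le (min_le_left _ _))
  simp [h0, norm_smul, abs_of_pos hr] at this
  refine this.trans (mul_le_mul_of_nonneg_right (le_max_left _ _) hr.le)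

/-- Two-dimensional identities for modes -/
lemma md_ang {F : ℝ → ℂ} {F' : ℂ} {m : ℕ} {x : Pt} (hx : x ≠ 0)
    (hF : HasDerivAt F F' ‖x‖) : angMom (md F m) x = m * md F m x := by
  obtain ⟨-, h1, h2⟩ := md_hasFDerivAt (m := m) hx hF
  have hr : (‖x‖ : ℂ) ≠ 0 := by exact_mod_cast norm_ne_zero_iff.2 hx
  have hs : (‖x‖ : ℂ) ^ 2 = x 0 ^ 2 + x 1 ^ 2 := by exact_mod_cast norm_sq_pt x
  rw [angMom, h1, h2, md]
  field_simp
  linear_combination ((zc x / (‖x‖ : ℂ)) ^ m) * ((-(m:ℂ) * F ‖x‖ * (x 0 ^ 2 + x 1 ^ 2)) * Complex.I_sq - m * F ‖x‖ * hs)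

lemma rip_rot {e : ℂ} (he : ‖e‖ = 1) (a b : ℂ) : rip (a * e) (b * e) = rip a b := by
  have h : e.re * e.re + e.im * e.im = 1 := by rw [← nsq, he]; norm_num
  simp only [rip_eq, Complex.mul_re, Complex.mul_im]
  linear_combination (a.re * b.re + a.im * b.im) * h

lemma norm_evm {x : Pt} (hx : x ≠ 0) (m : ℕ) : ‖(zc x / (‖x‖ : ℂ)) ^ m‖ = 1 := by
  rw [norm_pow, norm_ev hx, one_pow]

lemma md_gB {F G : ℝ → ℂ} {F' G' : ℂ} {m : ℕ} {x : Pt} (hx : x ≠ 0)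
    (hF : HasDerivAt F F' ‖x‖) (hG : HasDerivAt G G' ‖x‖) :
    gB (md F m) (md G m) x = rip F' G' + m ^ 2 * rip (F ‖x‖) (G ‖x‖) / ‖x‖ ^ 2 := by
  obtain ⟨-, h1, h2⟩ := md_hasFDerivAt (m := m) hx hF
  obtain ⟨-, h3, h4⟩ := md_hasFDerivAt (m := m) hx hG
  have hr : ‖x‖ ≠ 0 := norm_ne_zero_iff.2 hx
  have hs := norm_sq_pt x
  rw [gB, h1, h2, h3, h4, rip_rot (norm_evm hx m), rip_rot (norm_evm hx m)]
  have c1 : ((x 0 : ℂ) / (‖x‖ : ℂ)) = ((x 0 / ‖x‖ : ℝ) : ℂ) := by push_cast; ring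
  have c2 : ((x 1 : ℂ) / (‖x‖ : ℂ)) = ((x 1 / ‖x‖ : ℝ) : ℂ) := by push_cast; ring
  have c3 : ((x 0 : ℂ) / (‖x‖ : ℂ)^2) = ((x 0 / ‖x‖ ^ 2 : ℝ) : ℂ) := by push_cast; ring
  have c4 : ((x 1 : ℂ) / (‖x‖ : ℂ)^2) = ((x 1 / ‖x‖ ^ 2 : ℝ) : ℂ) := by push_cast; ring
  rw [c1, c2, c3, c4]
  have d1 : (x 0 / ‖x‖) ^ 2 + (x 1 / ‖x‖) ^ 2 = 1 := by field_simp; linarith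
  have d2 : (x 0 / ‖x‖ ^ 2) ^ 2 + (x 1 / ‖x‖ ^ 2) ^ 2 = 1 / ‖x‖ ^ 2 := by field_simp; linarith
  have d3 : (x 0 / ‖x‖) * (x 1 / ‖x‖ ^ 2) = (x 1 / ‖x‖) * (x 0 / ‖x‖ ^ 2) := by ring
  generalize x 0 / ‖x‖ = p at *
  generalize x 1 / ‖x‖ = q at *
  generalize x 0 / ‖x‖ ^ 2 = s at *
  generalize x 1 / ‖x‖ ^ 2 = t at *
  rw [div_eq_mul_one_div, ← d2]
  generalize F ‖x‖ = a
  generalize G ‖x‖ = b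
  simp only [rip_eq]
  simp
  linear_combination (F'.re * G'.re + F'.im * G'.im) * d1 + (m * (F'.re * b.im - F'.im * b.re + a.im * G'.re - a.re * G'.im)) * d3

end

open MeasureTheory Real Filter

noncomputable section

lemma ae_ne0 : ∀ᵐ x : Pt ∂(volume.restrict B1), x ≠ 0 :=
  ae_restrict_of_ae (Measure.ae_ne volume 0)

lemma rad_int {D : Pt → ℝ} {φ : ℝ → ℝ} (h : ∀ x ∈ B1, x ≠ 0 → D x = φ ‖x‖) :
    ∫ x in B1, D x = 2 * π * ∫ r in (0:ℝ)..1, r * φ r := by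
  rw [← radial_integral]
  refine integral_congr_ae ?_
  filter_upwards [ae_ne0, ae_restrict_mem measB1] with x h1 h2 using h x h2 h1

lemma rad_intble {D : Pt → ℝ} {φ : ℝ → ℝ} (h : ∀ x ∈ B1, x ≠ 0 → D x = φ ‖x‖) :
    IntegrableOn D B1 ↔ IntegrableOn (fun r => r * φ r) (Set.Ioo 0 1) := by
  rw [← radial_integrable]
  refine integrable_congr ?_
  filter_upwards [ae_ne0, ae_restrict_mem measB1] with x h1 h2 using h x h2 h1

lemma rip_self (a : ℂ) : rip a a = ‖a‖ ^ 2 := by rw [nsq, rip_eq]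

lemma nrm_mem {x : Pt} (hx : x ∈ B1) (h0 : x ≠ 0) : ‖x‖ ∈ Set.Ioo (0:ℝ) 1 :=
  ⟨norm_pos_iff.2 h0, by simpa [B1] using hx⟩

/-- equality off the origin gives equality of derivatives -/
lemma pd_congr {Ψ w : Pt → ℂ} (h : ∀ x ∈ B1, x ≠ 0 → Ψ x = w x) {x : Pt} (hx : x ∈ B1) (h0 : x ≠ 0) :
    pd1 Ψ x = pd1 w x ∧ pd2 Ψ x = pd2 w x ∧ angMom Ψ x = angMom w x := by
  have he : Ψ =ᶠ[nhds x] w := by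
    filter_upwards [isOpenB1.mem_nhds hx, isOpen_ne.mem_nhds h0] with y h1 h2 using h y h1 h2
  have := he.fderiv_eq (𝕜 := ℝ)
  have h1 : pd1 Ψ x = pd1 w x := by rw [pd1, this, pd1]
  have h2 : pd2 Ψ x = pd2 w x := by rw [pd2, this, pd2]
  exact ⟨h1, h2, by rw [angMom, angMom, h1, h2]⟩

lemma gG_repr {Ψ : Pt → ℂ} {n : ℕ} {f : ℝ → ℂ} (hd : ∀ r ∈ Set.Ioo (0:ℝ) 1, DifferentiableAt ℝ f r)
    (hrep : ∀ x ∈ B1, x ≠ 0 → Ψ x = md f n x) : ∀ x ∈ B1, x ≠ 0 →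
    gG Ψ x = (fun r => ‖deriv f r‖ ^ 2 + n ^ 2 * ‖f r‖ ^ 2 / r ^ 2) ‖x‖ := by
  intro x hx h0
  have hF := (hd _ (nrm_mem hx h0)).hasDerivAt
  obtain ⟨h1, h2, -⟩ := pd_congr hrep hx h0
  have := md_gB (m := n) h0 hF hF
  simp only [gB, rip_self] at this
  simp only [gG, h1, h2]
  exact this

lemma int_f' {Ψ : Pt → ℂ} {n : ℕ} {f : ℝ → ℂ} (hd : ∀ r ∈ Set.Ioo (0:ℝ) 1, DifferentiableAt ℝ f r)
    (hrep : ∀ x ∈ B1, x ≠ 0 → Ψ x = md f n x) (hadm : gpAdm Ψ) :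
    IntegrableOn (fun r => r * ‖deriv f r‖ ^ 2) (Set.Ioo 0 1) := by
  have h := (rad_intble (D := gG Ψ) (φ := fun r => ‖deriv f r‖ ^ 2 + n ^ 2 * ‖f r‖ ^ 2 / r ^ 2) (gG_repr hd hrep)).1 hadm.2.2.1
  refine Integrable.mono' h ?_ ?_
  · exact (measurable_id.mul ((measurable_deriv f).norm.pow_const 2)).aestronglyMeasurable
  · filter_upwards [ae_restrict_mem measurableSet_Ioo] with r hr
    have := hr.1
    rw [Real.norm_of_nonneg (by positivity)]
    have : 0 ≤ (n:ℝ) ^ 2 * ‖f r‖ ^ 2 / r ^ 2 := by positivity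
    nlinarith [hr.1]

lemma f_bound {Ψ : Pt → ℂ} {n : ℕ} {f : ℝ → ℂ} (hd : ∀ r ∈ Set.Ioo (0:ℝ) 1, DifferentiableAt ℝ f r)
    (hrep : ∀ x ∈ B1, x ≠ 0 → Ψ x = md f n x) (hadm : gpAdm Ψ) {C η : ℝ} (hC : 0 ≤ C) (hη : 0 < η)
    (hη1 : η < 1) (hs : ∀ r, 0 < r → r < η → ‖f r‖ ≤ C * r) :
    ∃ C', 0 ≤ C' ∧ ∀ r ∈ Set.Ioo (0:ℝ) 1, ‖f r‖ ≤ C' * r := by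
  have hi := int_f' hd hrep hadm
  have hi2 : IntegrableOn (fun r => ‖deriv f r‖) (Set.Ioo (η/2) 1) := by
    have h1 : IntegrableOn (fun r => 1 + (2/η) * (r * ‖deriv f r‖ ^ 2)) (Set.Ioo (η/2) 1) := by
      refine Integrable.add ?_ (Integrable.const_mul (hi.mono_set (Set.Ioo_subset_Ioo_left (by positivity))) _)
      exact integrableOn_const (by simp)
    refine Integrable.mono' h1 (measurable_deriv f).norm.aestronglyMeasurable ?_
    filter_upwards [ae_restrict_mem measurableSet_Ioo] with r hr
    rw [norm_norm]
    have : 1 ≤ 2 / η * r := by rw [div_mul_eq_mul_div, le_div_iff₀ hη]; linarith [hr.1]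
    nlinarith [sq_nonneg (‖deriv f r‖ - 1), sq_nonneg (‖deriv f r‖)]
  set J := ∫ r in Set.Ioo (η/2) 1, ‖deriv f r‖ with hJ
  have key : ∀ r, η/2 < r → r < 1 → ‖f r‖ ≤ ‖f (η/2)‖ + J := by
    intro r h1 h2
    have hII : IntervalIntegrable (deriv f) volume (η/2) r := by
      rw [intervalIntegrable_iff_integrableOn_Ioo_of_le h1.le]
      refine (IntegrableOn.mono_set ?_ (Set.Ioo_subset_Ioo_right h2.le))
      exact (integrable_norm_iff (measurable_deriv f).aestronglyMeasurable).1 hi2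
    have h3 : ∫ s in (η/2)..r, deriv f s = f r - f (η/2) := by
      refine intervalIntegral.integral_eq_sub_of_hasDerivAt (fun s hs => ?_) hII
      rw [Set.uIcc_of_le h1.le] at hs
      exact (hd s ⟨by linarith [hs.1], by linarith [hs.2]⟩).hasDerivAt
    have h4 : ‖∫ s in (η/2)..r, deriv f s‖ ≤ J := by
      rw [intervalIntegral.integral_of_le h1.le, integral_Ioc_eq_integral_Ioo]
      refine (norm_integral_le_integral_norm _).trans ?_
      exact setIntegral_mono_set hi2 (Eventually.of_forall fun _ => norm_nonneg _)
        (Set.Ioo_subset_Ioo_right h2.le).eventuallyLE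
    have : f r = (∫ s in (η/2)..r, deriv f s) + f (η/2) := by rw [h3]; ring
    rw [this]
    refine (norm_add_le _ _).trans (by linarith)
  have hJ0 : 0 ≤ J := by rw [hJ]; positivity
  refine ⟨max C ((‖f (η/2)‖ + J) * (2/η)), le_max_of_le_left hC, fun r hr => ?_⟩
  by_cases h : r < η
  · exact (hs r hr.1 h).trans (mul_le_mul_of_nonneg_right (le_max_left _ _) hr.1.le)
  · push Not at h
    refine (key r (by linarith) hr.2).trans ?_
    refine le_trans ?_ (mul_le_mul_of_nonneg_right (le_max_right _ _) hr.1.le)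
    have : 1 ≤ 2 / η * r := by rw [div_mul_eq_mul_div, le_div_iff₀ hη]; linarith
    nlinarith [norm_nonneg (f (η/2))]

/-- first variation -/
lemma first_var {Ψ w : Pt → ℂ} (ε Ω : ℝ) (hadm : gpAdm Ψ) (hw : Nice w)
    (hmin : ∀ c t, gpAdm (pert c t Ψ w) → gpEnergy ε Ω Ψ ≤ gpEnergy ε Ω (pert c t Ψ w)) :
    (∫ x in B1, dE1 Ω Ψ w x) + (∫ x in B1, dF1 ε Ψ w x) =
     2 * (∫ x in B1, rip (Ψ x) (w x)) * (gpEnergy ε Ω Ψ + (∫ x in B1, ‖Ψ x‖ ^ 4) / ε ^ 2) := by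
  have hvl := fun t h => var_lemma ε Ω hadm hw t _ _ _ _ rfl rfl rfl h rfl
  have hds := dist_small hadm hw (∫ x in B1, rip (Ψ x) (w x)) (∫ x in B1, ‖w x‖ ^ 2) one_pos
  generalize (∫ x in B1, dE1 Ω Ψ w x) = A at *
  generalize (∫ x in B1, dE2 Ω w x) = B at *
  generalize (∫ x in B1, dF1 ε Ψ w x) = C at *
  generalize (∫ x in B1, dF2 ε Ψ w x) = D at *
  generalize (∫ x in B1, dF3 ε Ψ w x) = F at *
  generalize (∫ x in B1, ‖w x‖ ^ 4) / ε ^ 2 = G at *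
  generalize (∫ x in B1, ‖Ψ x‖ ^ 4) / ε ^ 2 = E4 at *
  generalize (∫ x in B1, rip (Ψ x) (w x)) = n1 at *
  generalize (∫ x in B1, ‖w x‖ ^ 2) = n2 at *
  set E := gpEnergy ε Ω Ψ with hE
  set p : ℝ → ℝ := fun t => (A + C - 2 * n1 * (E + E4)) * t + t ^ 2 *
    (B + D + 2 * n1 * A + n2 * (E - E4) - E * (2 * n2 + 4 * n1 ^ 2) + t * (F + 2 * n1 * B + n2 * A - E * 4 * n1 * n2)
      + t ^ 2 * (G + B * n2 - E * n2 ^ 2)) with hp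
  have hpm : IsLocalMin p 0 := by
    filter_upwards [hds] with t ht
    obtain ⟨h1, h2⟩ := hvl t ht.1
    have h3 := hmin _ _ h1
    have h4 := mul_le_mul_of_nonneg_right h3 (sq_nonneg (1 + 2 * t * n1 + t ^ 2 * n2))
    rw [h2] at h4
    have h0 : p 0 = 0 := by simp [hp]
    rw [h0]
    simp only [hp]
    linarith
  have hq : HasDerivAt p (A + C - 2 * n1 * (E + E4)) 0 := by
    have hd : DifferentiableAt ℝ (fun t : ℝ => (B + D + 2 * n1 * A + n2 * (E - E4) - E * (2 * n2 + 4 * n1 ^ 2) + t * (F + 2 * n1 * B + n2 * A - E * 4 * n1 * n2)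
      + t ^ 2 * (G + B * n2 - E * n2 ^ 2))) 0 := by fun_prop
    have := ((hasDerivAt_id (0:ℝ)).const_mul (A + C - 2 * n1 * (E + E4))).add
      ((hasDerivAt_pow 2 (0:ℝ)).mul hd.hasDerivAt)
    exact HasDerivAt.congr_deriv this (by simp)
  have := hpm.hasDerivAt_eq_zero hq
  linarith

end

open MeasureTheory Real Filter

noncomputable section

lemma nice_md {F F' : ℝ → ℂ} {m : ℕ} {C : ℝ} (hC : 0 ≤ C) (F0 : F 0 = 0)
    (hF : ∀ r ∈ Set.Ioo (0:ℝ) 1, HasDerivAt F (F' r) r ∧ ‖F r‖ ≤ C * r ^ 2 ∧ ‖F' r‖ ≤ C) :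
    Nice (md F m) ∧ md F m 0 = 0 := by
  have z : md F m 0 = 0 := by simp [md, F0]
  have d0 : HasFDerivAt (md F m) (0 : Pt →L[ℝ] ℂ) 0 := by
    rw [hasFDerivAt_iff_isLittleO_nhds_zero]
    have h1 : (fun h : Pt => md F m (0 + h) - md F m 0 - (0 : Pt →L[ℝ] ℂ) h) =O[nhds 0] (fun h : Pt => ‖h‖ ^ 2) := by
      refine Asymptotics.IsBigO.of_bound C ?_
      filter_upwards [isOpenB1.mem_nhds (show (0:Pt) ∈ B1 by simp [B1])] with h hh
      by_cases h0 : h = 0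
      · simp [h0]
      · simp only [zero_add, z, sub_zero, zero_apply, norm_md h0]
        rw [Real.norm_of_nonneg (by positivity)]
        exact (hF _ (nrm_mem hh h0)).2.1
    refine h1.trans_isLittleO ?_
    have := Asymptotics.isLittleO_norm_pow_id (E' := Pt) (n := 2) (by norm_num)
    exact this
  refine ⟨⟨?_, (1 + m) * C, by positivity, ?_⟩, z⟩
  · intro x hx
    by_cases h0 : x = 0
    · rw [h0]; exact d0.differentiableAt.differentiableWithinAt
    · exact (md_hasFDerivAt h0 (hF _ (nrm_mem hx h0)).1).1.differentiableWithinAt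
  · intro x hx
    by_cases h0 : x = 0
    · subst h0
      rw [pd1, pd2, d0.fderiv, z]
      simp; positivity
    · have hm := nrm_mem hx h0
      obtain ⟨h1, h2, h3⟩ := hF _ hm
      obtain ⟨-, p1, p2⟩ := md_hasFDerivAt (m := m) h0 h1
      have hr := hm.1
      have c0 : |x 0| ≤ ‖x‖ := PiLp.norm_apply_le x 0
      have c1 : |x 1| ≤ ‖x‖ := PiLp.norm_apply_le x 1
      have q : ∀ i, |x i| ≤ ‖x‖ → ‖((x i : ℝ) : ℂ) / (‖x‖ : ℂ)‖ ≤ 1 := fun i hi => by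
        rw [norm_div, Complex.norm_real, Complex.norm_real, norm_norm, div_le_one hr]; exact hi
      have q2 : ∀ i, |x i| ≤ ‖x‖ → ‖Complex.I * m * F ‖x‖ * (((x i : ℝ) : ℂ) / (‖x‖ : ℂ) ^ 2)‖ ≤ m * C := fun i hi => by
        rw [norm_mul, norm_mul, norm_mul, norm_div, norm_pow, Complex.norm_real, Complex.norm_real, norm_norm,
          Complex.norm_I, one_mul, Complex.norm_natCast, mul_assoc]
        refine mul_le_mul_of_nonneg_left ?_ (Nat.cast_nonneg _)
        rw [mul_div_assoc', div_le_iff₀ (by positivity)]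
        have : ‖x i‖ ≤ 1 := hi.trans hm.2.le
        nlinarith [norm_nonneg (x i), norm_nonneg (F ‖x‖)]
      have q3 : ∀ i, |x i| ≤ ‖x‖ → ‖F' ‖x‖ * (((x i : ℝ) : ℂ) / (‖x‖ : ℂ))‖ ≤ C := fun i hi => by
        rw [norm_mul]
        nlinarith [q i hi, norm_nonneg (F' ‖x‖)]
      refine ⟨?_, ?_, ?_⟩
      · rw [norm_md h0]
        have : C * ‖x‖ ^ 2 ≤ C * 1 := mul_le_mul_of_nonneg_left (by nlinarith [hm.2]) hC
        nlinarith [mul_nonneg (Nat.cast_nonneg (α := ℝ) m) hC]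
      · rw [p1, norm_mul, norm_evm h0, mul_one]
        refine (norm_sub_le _ _).trans ?_
        linarith [q3 0 c0, q2 1 c1]
      · rw [p2, norm_mul, norm_evm h0, mul_one]
        refine (norm_add_le _ _).trans ?_
        linarith [q3 1 c1, q2 0 c0]

/-- right-hand side of the ODE for `K = r f'` -/
def kap (n : ℕ) (ε M : ℝ) (f : ℝ → ℂ) (r : ℝ) : ℂ :=
  (n:ℂ) ^ 2 * f r / r + ((r * (2 * ‖f r‖ ^ 2 / ε ^ 2 - M) : ℝ) : ℂ) * f r

lemma kap_bound {n : ℕ} {ε M C : ℝ} {f : ℝ → ℂ} (hC : 0 ≤ C)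
    (hb : ∀ r ∈ Set.Ioo (0:ℝ) 1, ‖f r‖ ≤ C * r) : ∃ D, ∀ r ∈ Set.Ioo (0:ℝ) 1, ‖kap n ε M f r‖ ≤ D := by
  refine ⟨n ^ 2 * C + (2 * C ^ 2 / ε ^ 2 + |M|) * C, fun r hr => ?_⟩
  have h1 := hb r hr
  have h2 : ‖f r‖ ≤ C := h1.trans (by nlinarith [hr.2])
  unfold kap
  refine (norm_add_le _ _).trans (add_le_add ?_ ?_)
  · rw [norm_div, norm_mul, norm_pow, Complex.norm_natCast, Complex.norm_real, Real.norm_of_nonneg hr.1.le,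
      div_le_iff₀ hr.1, mul_assoc]
    exact mul_le_mul_of_nonneg_left h1 (by positivity)
  · rw [norm_mul, Complex.norm_real, norm_mul, Real.norm_of_nonneg hr.1.le]
    refine mul_le_mul ?_ h2 (norm_nonneg _) (by positivity)
    have : ‖2 * ‖f r‖ ^ 2 / ε ^ 2 - M‖ ≤ 2 * C ^ 2 / ε ^ 2 + |M| := by
      refine (norm_sub_le _ _).trans (add_le_add ?_ le_rfl)
      rw [Real.norm_of_nonneg (by positivity)]
      gcongr
    nlinarith [hr.2, hr.1, norm_nonneg (2 * ‖f r‖ ^ 2 / ε ^ 2 - M)]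

lemma rip_real_mul (s : ℝ) (a c : ℂ) : rip a ((s:ℂ) * c) = rip ((s:ℂ) * a) c := by
  simp only [rip_eq]; simp; ring

/-- weak radial Euler-Lagrange equation, tested against a single function -/
lemma EL_one {Ψ : Pt → ℂ} {n : ℕ} {f : ℝ → ℂ} (ε Ω : ℝ) (hn : n ≠ 0)
    (hd : ∀ r ∈ Set.Ioo (0:ℝ) 1, DifferentiableAt ℝ f r)
    (hrep : ∀ x ∈ B1, x ≠ 0 → Ψ x = md f n x) (hadm : gpAdm Ψ)
    (heig : ∀ x ∈ B1, angMom Ψ x = (n : ℂ) * Ψ x)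
    (hmin : ∀ Φ : Pt → ℂ, gpAdm Φ → (∀ x ∈ B1, angMom Φ x = (n : ℂ) * Φ x) →
      gpEnergy ε Ω Ψ ≤ gpEnergy ε Ω Φ)
    {φ χ : ℝ → ℝ} {C : ℝ} (hC : 0 ≤ C) (φ0 : φ 0 = 0)
    (hφ : ∀ r ∈ Set.Ioo (0:ℝ) 1, HasDerivAt φ (χ r) r ∧ |φ r| ≤ C * r ^ 2 ∧ |χ r| ≤ C) (c : ℂ) :
    ∫ r in (0:ℝ)..1, rip ((χ r : ℂ) * ((r:ℂ) * deriv f r) +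
      (φ r : ℂ) * kap n ε (gpEnergy ε Ω Ψ + (∫ x in B1, ‖Ψ x‖ ^ 4) / ε ^ 2 + n * Ω) f r) c = 0 := by
  set μ := gpEnergy ε Ω Ψ + (∫ x in B1, ‖Ψ x‖ ^ 4) / ε ^ 2 with hμ
  let F : ℝ → ℂ := fun r => (φ r : ℂ) * c
  have hF : ∀ r ∈ Set.Ioo (0:ℝ) 1, HasDerivAt F ((χ r : ℂ) * c) r := fun r hr =>
    ((hφ r hr).1.ofReal_comp).mul_const c
  obtain ⟨hw, w0⟩ := nice_md (F := F) (m := n) (F' := fun r => (χ r : ℂ) * c) (C := C * ‖c‖) (by positivity)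
    (by simp [F, φ0]) (fun r hr => ⟨hF r hr, by
      simp only [F, norm_mul, Complex.norm_real, Real.norm_eq_abs]
      nlinarith [(hφ r hr).2.1, norm_nonneg c], by
      simp only [norm_mul, Complex.norm_real, Real.norm_eq_abs]
      nlinarith [(hφ r hr).2.2, norm_nonneg c]⟩)
  set w := md F n with hwdef
  have hLw : ∀ x ∈ B1, angMom w x = n * w x := by
    intro x hx
    by_cases h0 : x = 0
    · subst h0; rw [w0]; simp [angMom]
    · exact md_ang h0 (hF _ (nrm_mem hx h0))
  have hfv := first_var ε Ω hadm hw (fun c t ha => hmin _ ha (fun x hx => by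
    unfold pert
    rw [angMom_lin hadm.1 hw.1 _ _ hx, heig x hx, hLw x hx]; ring))
  rw [← hμ] at hfv
  obtain ⟨j1, j2, j3, j4, j5, j6, j7, j8, j9, j10, j11, j12⟩ := int_cross hadm hw
  have k1 : IntegrableOn (dE1 Ω Ψ w) B1 := IS (IM _ j3) (IM _ (IA j4 j5))
  have k2 : IntegrableOn (dF1 ε Ψ w) B1 := by
    have := (j8.const_mul 4).div_const (ε ^ 2)
    refine this.congr (Eventually.of_forall fun x => ?_)
    simp only [dF1]; ring
  have hsum : ∫ x in B1, (dE1 Ω Ψ w x + dF1 ε Ψ w x - 2 * μ * rip (Ψ x) (w x)) = 0 := by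
    rw [integral_sub (IA k1 k2) (IM _ j1), integral_add k1 k2, integral_const_mul, hfv]; ring
  rw [rad_int (φ := fun r => 2 * (rip (deriv f r) ((χ r : ℂ) * c) + n ^ 2 * rip (f r) (F r) / r ^ 2
    - Ω * n * rip (f r) (F r) + 2 * ‖f r‖ ^ 2 * rip (f r) (F r) / ε ^ 2 - μ * rip (f r) (F r))) ?_] at hsum
  · have : ∫ r in (0:ℝ)..1, r * (2 * (rip (deriv f r) ((χ r : ℂ) * c) + n ^ 2 * rip (f r) (F r) / r ^ 2
    - Ω * n * rip (f r) (F r) + 2 * ‖f r‖ ^ 2 * rip (f r) (F r) / ε ^ 2 - μ * rip (f r) (F r))) =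
      2 * ∫ r in (0:ℝ)..1, rip ((χ r : ℂ) * ((r:ℂ) * deriv f r) +
      (φ r : ℂ) * kap n ε (μ + n * Ω) f r) c := by
      rw [← intervalIntegral.integral_const_mul]
      refine intervalIntegral.integral_congr_ae ?_
      refine Eventually.of_forall fun r hr => ?_
      rw [Set.uIoc_of_le zero_le_one] at hr
      have hr0 : r ≠ 0 := hr.1.ne'
      simp only [F, rip_real_mul]
      have e1 : (φ r : ℂ) * kap n ε (μ + n * Ω) f r = ((φ r * (n ^ 2 / r + r * (2 * ‖f r‖ ^ 2 / ε ^ 2 - (μ + n * Ω))) : ℝ) : ℂ) * f r := by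
        unfold kap; push_cast; ring
      have e2 : (χ r : ℂ) * ((r:ℂ) * deriv f r) = ((χ r * r : ℝ) : ℂ) * deriv f r := by push_cast; ring
      rw [e1, e2]
      have e3 : (n:ℝ) ^ 2 / r = r * (n ^ 2 / r ^ 2) := by field_simp
      rw [e3]
      simp only [rip_eq, Complex.add_re, Complex.add_im, Complex.re_ofReal_mul, Complex.im_ofReal_mul]
      ring
    rw [this] at hsum
    have hpi := Real.pi_pos.ne'
    simpa [hpi] using hsum
  · intro x hx h0
    have hm := nrm_mem hx h0
    have hfd := (hd _ hm).hasDerivAt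
    obtain ⟨p1, p2, -⟩ := pd_congr hrep hx h0
    have eB : gB Ψ w x = rip (deriv f ‖x‖) ((χ ‖x‖ : ℂ) * c) + n ^ 2 * rip (f ‖x‖) (F ‖x‖) / ‖x‖ ^ 2 := by
      rw [← md_gB (m := n) h0 hfd (hF _ hm), gB, p1, p2, gB]
    have er : rip (Ψ x) (w x) = rip (f ‖x‖) (F ‖x‖) := by
      rw [hrep x hx h0, hwdef, md, md, rip_rot (norm_evm h0 n)]
    have en : ‖Ψ x‖ = ‖f ‖x‖‖ := by rw [hrep x hx h0, norm_md h0]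
    have eL : gL Ψ w x = n * rip (f ‖x‖) (F ‖x‖) := by
      rw [gL, hLw x hx, ← er, rip, rip]; simp; ring
    have eL' : gL w Ψ x = n * rip (f ‖x‖) (F ‖x‖) := by
      rw [gL, heig x hx, ← er, rip, rip]; simp; ring
    simp only [dE1, dF1, eB, eL, eL', er, en]
    ring

end

open MeasureTheory Real Filter

noncomputable section

/-- radial solutions of the Euler-Lagrange system -/
structure Sol (n : ℕ) (ε M : ℝ) (f K : ℝ → ℂ) : Prop where
  Kc : Continuous K
  K1 : K 1 = 0
  hf : ∀ r, 0 < r → HasDerivAt f (K r / r) r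
  hK : ∀ r ∈ Set.Ioo (0:ℝ) 1, HasDerivAt K (kap n ε M f r) r
  b : ∃ C, 0 ≤ C ∧ ∀ r ∈ Set.Ioc (0:ℝ) 1, ‖f r‖ ≤ C * r

lemma test_fun {χ : ℝ → ℝ} (hχ : Continuous χ) (hcs : HasCompactSupport χ)
    (hsub : tsupport χ ⊆ Set.Ioo 0 1) : ∃ φ : ℝ → ℝ, φ 0 = 0 ∧ (∀ r, HasDerivAt φ (χ r) r) ∧
    ∃ C, 0 ≤ C ∧ ∀ r ∈ Set.Ioo (0:ℝ) 1, |φ r| ≤ C * r ^ 2 ∧ |χ r| ≤ C := by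
  obtain ⟨B, hB⟩ := hcs.exists_bound_of_continuous hχ
  have hB0 : 0 ≤ B := (norm_nonneg _).trans (hB 0)
  have hd : ∀ r, HasDerivAt (fun r => ∫ s in (0:ℝ)..r, χ s) (χ r) r := fun r =>
    intervalIntegral.integral_hasDerivAt_right (hχ.intervalIntegrable _ _)
      (hχ.stronglyMeasurableAtFilter _ _) hχ.continuousAt
  obtain ⟨η, hη, hz⟩ : ∃ η, 0 < η ∧ ∀ s, s < η → χ s = 0 := by
    by_cases hne : (tsupport χ).Nonempty
    · obtain ⟨η, h1, h2⟩ := hcs.isCompact.exists_isLeast hne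
      refine ⟨η, (hsub h1).1, fun s hs => ?_⟩
      by_contra h
      exact absurd (h2 (subset_tsupport χ h)) (by linarith)
    · refine ⟨1, one_pos, fun s _ => ?_⟩
      by_contra h
      exact hne ⟨s, subset_tsupport χ h⟩
  refine ⟨fun r => ∫ s in (0:ℝ)..r, χ s, by simp, hd, max B (B / η ^ 2), le_max_of_le_left hB0, fun r hr =>
    ⟨?_, (hB r).trans (le_max_left _ _)⟩⟩
  show |∫ s in (0:ℝ)..r, χ s| ≤ _
  by_cases h : r < η
  · have : ∫ s in (0:ℝ)..r, χ s = 0 := by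
      rw [intervalIntegral.integral_congr (g := fun _ => 0)]
      · simp
      · intro s hs
        rw [Set.uIcc_of_le hr.1.le] at hs
        exact hz s (by linarith [hs.2])
    rw [this, abs_zero]
    have := hr.1
    have : 0 ≤ max B (B / η ^ 2) := le_max_of_le_left hB0
    positivity
  · push Not at h
    have h1 : |∫ s in (0:ℝ)..r, χ s| ≤ B * |r - 0| :=
      intervalIntegral.norm_integral_le_of_norm_le_const fun s _ => hB s
    rw [sub_zero, abs_of_pos hr.1] at h1
    have h2 : B * r ≤ B := by nlinarith [hr.2]
    refine (h1.trans h2).trans ?_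
    calc B = B / η ^ 2 * η ^ 2 := by field_simp
      _ ≤ max B (B / η ^ 2) * r ^ 2 := by
        apply mul_le_mul (le_max_right _ _) _ (by positivity) (le_max_of_le_left hB0)
        gcongr

lemma get_sol {Ψ : Pt → ℂ} {n : ℕ} {f : ℝ → ℂ} (ε Ω : ℝ) (hn : n ≠ 0)
    (hd : ∀ r ∈ Set.Ioo (0:ℝ) 1, DifferentiableAt ℝ f r)
    (hrep : ∀ x ∈ B1, x ≠ 0 → Ψ x = md f n x) (hadm : gpAdm Ψ)
    (heig : ∀ x ∈ B1, angMom Ψ x = (n : ℂ) * Ψ x)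
    (hmin : ∀ Φ : Pt → ℂ, gpAdm Φ → (∀ x ∈ B1, angMom Φ x = (n : ℂ) * Φ x) →
      gpEnergy ε Ω Ψ ≤ gpEnergy ε Ω Φ)
    {C : ℝ} (hC : 0 ≤ C) (hb : ∀ r ∈ Set.Ioo (0:ℝ) 1, ‖f r‖ ≤ C * r) :
    ∃ g K : ℝ → ℂ, (∀ r ∈ Set.Ioo (0:ℝ) 1, g r = f r) ∧
      Sol n ε (gpEnergy ε Ω Ψ + (∫ x in B1, ‖Ψ x‖ ^ 4) / ε ^ 2 + n * Ω) g K := by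
  have hEL := fun {φ χ : ℝ → ℝ} {C : ℝ} => EL_one (φ := φ) (χ := χ) (C := C) ε Ω hn hd hrep hadm heig hmin
  set M := gpEnergy ε Ω Ψ + (∫ x in B1, ‖Ψ x‖ ^ 4) / ε ^ 2 + n * Ω with hM
  set κ := kap n ε M f with hκ
  have hfc : ContinuousOn f (Set.Ioo 0 1) := fun r hr => (hd r hr).continuousAt.continuousWithinAt
  have hκc : ContinuousOn κ (Set.Ioo 0 1) := by
    have h0 : ∀ r ∈ Set.Ioo (0:ℝ) 1, ((r:ℝ):ℂ) ≠ 0 := fun r hr => by exact_mod_cast hr.1.ne'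
    have hfn := hfc.norm
    unfold κ kap
    refine ContinuousOn.add (ContinuousOn.div (continuousOn_const.mul hfc) (by fun_prop) h0)
      (ContinuousOn.mul ?_ hfc)
    refine Complex.continuous_ofReal.comp_continuousOn ?_
    fun_prop
  obtain ⟨D, hD⟩ := kap_bound (n := n) (ε := ε) (M := M) hC hb
  have hκi : IntegrableOn κ (Set.Ioo 0 1) := by
    refine Integrable.mono' (g := fun _ => D) (integrableOn_const (by simp))
      (hκc.aestronglyMeasurable measurableSet_Ioo) ?_
    filter_upwards [ae_restrict_mem measurableSet_Ioo] with r hr using hD r hr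
  set κt : ℝ → ℂ := (Set.Ioo (0:ℝ) 1).indicator κ with hκt
  have hκti : Integrable κt := (integrable_indicator_iff measurableSet_Ioo).2 hκi
  let K : ℝ → ℂ := fun r => ∫ s in (1:ℝ)..r, κt s
  have hKc : Continuous K := intervalIntegral.continuous_primitive (fun a b => hκti.intervalIntegrable) 1
  have hK1 : K 1 = 0 := by simp [K]
  have hKd : ∀ r ∈ Set.Ioo (0:ℝ) 1, HasDerivAt K (κ r) r := by
    intro r hr
    have he : κt =ᶠ[nhds r] κ := by
      filter_upwards [isOpen_Ioo.mem_nhds hr] with s hs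
      simp [hκt, hs]
    have h1 : ContinuousAt κt r := ((hκc.continuousAt (isOpen_Ioo.mem_nhds hr))).congr he.symm
    have h2 := intervalIntegral.integral_hasDerivAt_right (a := 1) (b := r) hκti.intervalIntegrable
      (hκti.aestronglyMeasurable.stronglyMeasurableAtFilter) h1
    rwa [he.eq_of_nhds] at h2
  -- integrability of r f'
  have hf'2 := int_f' hd hrep hadm
  have hrf' : IntegrableOn (fun r : ℝ => (r:ℂ) * deriv f r) (Set.Ioo 0 1) := by
    have h1 : IntegrableOn (fun r => 1 + (r * ‖deriv f r‖ ^ 2)) (Set.Ioo (0:ℝ) 1) :=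
      Integrable.add (integrableOn_const (by simp)) hf'2
    refine Integrable.mono' h1 ((Complex.measurable_ofReal.mul (measurable_deriv f)).aestronglyMeasurable) ?_
    filter_upwards [ae_restrict_mem measurableSet_Ioo] with r hr
    rw [norm_mul, Complex.norm_real, Real.norm_of_nonneg hr.1.le]
    nlinarith [mul_nonneg hr.1.le (sq_nonneg (‖deriv f r‖ - 1)), mul_nonneg hr.1.le (sq_nonneg (‖deriv f r‖)), hr.2]
  have hae : ∀ᵐ r : ℝ, r ∈ Set.Ioo (0:ℝ) 1 → (r:ℂ) * deriv f r - K r = 0 := by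
    refine isOpen_Ioo.ae_eq_zero_of_integral_contDiff_smul_eq_zero ?_ ?_
    · exact (hrf'.sub ((hKc.integrableOn_Icc (a := 0) (b := 1)).mono_set Set.Ioo_subset_Icc_self)).locallyIntegrableOn
    · intro χ hχ hcs hsub
      obtain ⟨φ, φ0, φd, C', hC', hφ⟩ := test_fun hχ.continuous hcs hsub
      have hφc : Continuous φ := continuous_iff_continuousAt.2 fun r => (φd r).continuousAt
      obtain ⟨B, hB⟩ := hcs.exists_bound_of_continuous hχ.continuous
      have hχf : IntervalIntegrable (fun r => (χ r : ℂ) * ((r:ℂ) * deriv f r)) volume 0 1 := by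
        rw [intervalIntegrable_iff_integrableOn_Ioo_of_le zero_le_one]
        refine Integrable.bdd_mul (c := B) hrf' ?_ (Eventually.of_forall fun r => ?_)
        · exact (Complex.continuous_ofReal.comp hχ.continuous).aestronglyMeasurable
        · rw [Complex.norm_real]; exact hB r
      have hφκ : IntervalIntegrable (fun r => (φ r : ℂ) * κ r) volume 0 1 := by
        rw [intervalIntegrable_iff_integrableOn_Ioo_of_le zero_le_one]
        refine Integrable.bdd_mul (c := C') hκi ?_ ?_
        · exact (Complex.continuous_ofReal.comp hφc).aestronglyMeasurable
        · filter_upwards [ae_restrict_mem measurableSet_Ioo] with r hr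
          rw [Complex.norm_real]; refine (hφ r hr).1.trans ?_
          nlinarith [mul_le_mul_of_nonneg_left (show r ^ 2 ≤ 1 by nlinarith [hr.1, hr.2]) hC']
      have hχK : IntervalIntegrable (fun r => (χ r : ℂ) * K r) volume 0 1 :=
        ((Complex.continuous_ofReal.comp hχ.continuous).mul hKc).intervalIntegrable _ _
      have s1 : ∫ r in (0:ℝ)..1, ((χ r : ℂ) * ((r:ℂ) * deriv f r) + (φ r : ℂ) * κ r) = 0 := by
        set c := ∫ r in (0:ℝ)..1, ((χ r : ℂ) * ((r:ℂ) * deriv f r) + (φ r : ℂ) * κ r) with hc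
        have h1 := hEL hC' φ0 (fun r hr => ⟨φd r, (hφ r hr).1, (hφ r hr).2⟩) c
        have h2 : ∀ a : ℂ, rip a c = inner ℝ c a := fun a => by
          rw [Complex.inner, rip]; simp
        simp only [h2] at h1
        rw [intervalIntegral.integral_of_le zero_le_one, integral_inner, ← intervalIntegral.integral_of_le zero_le_one] at h1
        · rw [← hc] at h1
          exact inner_self_eq_zero.1 h1
        · have := (hχf.add hφκ).1
          exact this
      have s2 : ∫ r in (0:ℝ)..1, ((χ r : ℂ) * K r + (φ r : ℂ) * κ r) = 0 := by
        have h := intervalIntegral.integral_eq_sub_of_hasDerivAt_of_le (a := 0) (b := 1) zero_le_one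
          (f := fun r => (φ r : ℂ) * K r) (f' := fun r => (χ r : ℂ) * K r + (φ r : ℂ) * κ r)
          ((Complex.continuous_ofReal.comp hφc).mul hKc).continuousOn
          (fun r hr => ((φd r).ofReal_comp).mul (hKd r hr)) (hχK.add hφκ)
        rw [h, hK1, φ0]; simp
      have s3 : ∫ r in (0:ℝ)..1, (χ r : ℂ) * ((r:ℂ) * deriv f r - K r) = 0 := by
        have : ∀ r, (χ r : ℂ) * ((r:ℂ) * deriv f r - K r) = ((χ r : ℂ) * ((r:ℂ) * deriv f r) + (φ r : ℂ) * κ r)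
          - ((χ r : ℂ) * K r + (φ r : ℂ) * κ r) := fun r => by ring
        simp only [this]
        rw [intervalIntegral.integral_sub (hχf.add hφκ) (hχK.add hφκ), s1, s2, sub_zero]
      rw [intervalIntegral.integral_of_le zero_le_one, integral_Ioc_eq_integral_Ioo] at s3
      rw [← s3]
      rw [setIntegral_eq_integral_of_forall_compl_eq_zero]
      · simp
      · intro r hr
        have : χ r = 0 := by
          by_contra h
          exact hr (hsub (subset_tsupport χ h))
        simp [this]
  -- the extended function
  have hKr : ContinuousOn (fun r : ℝ => K r / r) (Set.Ioi 0) :=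
    hKc.continuousOn.div (by fun_prop) (fun r hr => by exact_mod_cast (ne_of_gt hr))
  have hii : ∀ r, 0 < r → IntervalIntegrable (fun r : ℝ => K r / r) volume (1/2) r := fun r hr => by
    refine (hKr.mono ?_).intervalIntegrable
    intro s hs
    exact lt_of_lt_of_le (lt_min (by norm_num) hr) hs.1
  let g : ℝ → ℂ := fun r => f (1/2) + ∫ s in (1/2:ℝ)..r, K s / s
  have hg : ∀ r, 0 < r → HasDerivAt g (K r / r) r := fun r hr => by
    have := intervalIntegral.integral_hasDerivAt_right (hii r hr)
      (hKr.stronglyMeasurableAtFilter isOpen_Ioi r hr) (hKr.continuousAt (isOpen_Ioi.mem_nhds hr))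
    exact this.const_add _
  have hgf : ∀ r ∈ Set.Ioo (0:ℝ) 1, g r = f r := by
    intro r hr
    have hsub : Set.uIcc (1/2) r ⊆ Set.Ioo 0 1 := by
      intro s hs
      exact ⟨lt_of_lt_of_le (lt_min (by norm_num) hr.1) hs.1, lt_of_le_of_lt hs.2 (max_lt (by norm_num) hr.2)⟩
    have hcon : ∀ᵐ s : ℝ, s ∈ Set.uIoc (1/2) r → K s / s = deriv f s := by
      filter_upwards [hae] with s hs hs'
      have hs2 := hsub (Set.uIoc_subset_uIcc hs')
      have h3 := hs hs2
      have : (s:ℂ) ≠ 0 := by exact_mod_cast hs2.1.ne'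
      field_simp
      linear_combination -h3
    have hi : IntervalIntegrable (deriv f) volume (1/2) r :=
      (hii r hr.1).congr_ae ((ae_restrict_iff' measurableSet_uIoc).2 hcon)
    have := intervalIntegral.integral_eq_sub_of_hasDerivAt (fun s hs => (hd s (hsub hs)).hasDerivAt) hi
    simp only [g]
    rw [intervalIntegral.integral_congr_ae hcon, this]; ring
  refine ⟨g, K, hgf, hKc, hK1, hg, ?_, C, hC, ?_⟩
  · intro r hr
    have : kap n ε M g r = kap n ε M f r := by simp only [kap, hgf r hr]
    rw [this]; exact hKd r hr
  · intro r hr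
    rcases hr.2.lt_or_eq with h | h
    · rw [hgf r ⟨hr.1, h⟩]; exact hb r ⟨hr.1, h⟩
    · subst h
      have hc1 : Tendsto (fun r => ‖g r‖) (nhdsWithin 1 (Set.Iio 1)) (nhds ‖g 1‖) :=
        ((hg 1 one_pos).continuousAt.norm.tendsto).mono_left nhdsWithin_le_nhds
      have hc2 : Tendsto (fun r => C * r) (nhdsWithin (1:ℝ) (Set.Iio 1)) (nhds (C * 1)) :=
        ((continuous_const.mul continuous_id).tendsto 1).mono_left nhdsWithin_le_nhds
      refine le_of_tendsto_of_tendsto hc1 hc2 ?_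
      filter_upwards [Ioo_mem_nhdsLT (show (0:ℝ) < 1 by norm_num)] with r hr
      rw [hgf r hr]; exact hb r hr

end

open MeasureTheory Real Filter

noncomputable section

/-- potential -/
def VV (ε M : ℝ) (f : ℝ → ℂ) (r : ℝ) : ℝ := 2 * ‖f r‖ ^ 2 / ε ^ 2 - M
/-- `u = K - n f` -/
def uu (n : ℕ) (f K : ℝ → ℂ) (r : ℝ) : ℂ := K r - n * f r
/-- `v = K + n f` -/
def vv (n : ℕ) (f K : ℝ → ℂ) (r : ℝ) : ℂ := K r + n * f r

variable {n : ℕ} {ε M : ℝ} {f K : ℝ → ℂ}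

lemma u_deriv (h : Sol n ε M f K) {r : ℝ} (hr : r ∈ Set.Ioo (0:ℝ) 1) :
    HasDerivAt (uu n f K) (-(n * uu n f K r / r) + r * VV ε M f r * f r) r := by
  refine HasDerivAt.congr_deriv ((h.hK r hr).sub ((h.hf r hr.1).const_mul (n:ℂ))) ?_
  simp only [kap, uu, VV]; push_cast; ring

lemma v_deriv (h : Sol n ε M f K) {r : ℝ} (hr : r ∈ Set.Ioo (0:ℝ) 1) :
    HasDerivAt (vv n f K) (n * vv n f K r / r + r * VV ε M f r * f r) r := by
  refine HasDerivAt.congr_deriv ((h.hK r hr).add ((h.hf r hr.1).const_mul (n:ℂ))) ?_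
  simp only [kap, vv, VV]; push_cast; ring

lemma pow_deriv (m : ℕ) {r : ℝ} (hr : 0 < r) :
    HasDerivAt (fun r : ℝ => (r:ℂ) ^ m) (m * (r:ℂ) ^ m / r) r := by
  have h1 : HasDerivAt (fun θ : ℝ => (θ : ℂ)) 1 r := Complex.ofRealCLM.hasDerivAt
  have h2 := h1.pow m
  refine HasDerivAt.congr_deriv h2 ?_
  have : (r:ℂ) ≠ 0 := by exact_mod_cast hr.ne'
  rcases m with _ | m
  · simp
  · simp only [Nat.add_sub_cancel, pow_succ]; field_simp

lemma ru_deriv (h : Sol n ε M f K) {r : ℝ} (hr : r ∈ Set.Ioo (0:ℝ) 1) :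
    HasDerivAt (fun r : ℝ => (r:ℂ) ^ n * uu n f K r) ((r:ℂ) ^ (n+1) * VV ε M f r * f r) r := by
  refine HasDerivAt.congr_deriv ((pow_deriv n hr.1).mul (u_deriv h hr)) ?_
  ring

lemma rv_deriv (h : Sol n ε M f K) {r : ℝ} (hr : r ∈ Set.Ioo (0:ℝ) 1) :
    HasDerivAt (fun r : ℝ => vv n f K r / (r:ℂ) ^ n) (r * VV ε M f r * f r / (r:ℂ) ^ n) r := by
  have h0 : (r:ℂ) ≠ 0 := by exact_mod_cast hr.1.ne'
  refine HasDerivAt.congr_deriv ((v_deriv h hr).div (pow_deriv n hr.1) (pow_ne_zero _ h0)) ?_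
  field_simp; ring

lemma V_bound (h : Sol n ε M f K) : ∃ V0, 0 ≤ V0 ∧ ∀ r ∈ Set.Ioo (0:ℝ) 1, |VV ε M f r| ≤ V0 := by
  obtain ⟨C, hC, hb⟩ := h.b
  refine ⟨2 * C ^ 2 / ε ^ 2 + |M|, by positivity, fun r hr => ?_⟩
  have h2 : ‖f r‖ ≤ C := (hb r ⟨hr.1, hr.2.le⟩).trans (by nlinarith [hr.2])
  refine (abs_sub _ _).trans (add_le_add ?_ le_rfl)
  rw [abs_of_nonneg (by positivity)]
  gcongr

lemma mvt {g g' : ℝ → ℂ} {a b C : ℝ} (hab : a ≤ b) (h : ∀ r ∈ Set.Icc a b, HasDerivAt g (g' r) r)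
    (hb : ∀ r ∈ Set.Icc a b, ‖g' r‖ ≤ C) : ‖g b - g a‖ ≤ C * (b - a) :=
  norm_image_sub_le_of_norm_deriv_le_segment' (fun x hx => (h x hx).hasDerivWithinAt)
    (fun x hx => hb x ⟨hx.1, hx.2.le⟩) b ⟨hab, le_rfl⟩

lemma uv_bdd (h : Sol n ε M f K) : ∃ B, 0 ≤ B ∧ ∀ r ∈ Set.Ioo (0:ℝ) 1,
    ‖uu n f K r‖ ≤ B ∧ ‖vv n f K r‖ ≤ B := by
  obtain ⟨C, hC, hb⟩ := h.b
  obtain ⟨D, hD⟩ := isCompact_Icc.exists_bound_of_continuousOn (h.Kc.continuousOn (s := Set.Icc 0 1))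
  have hD0 : 0 ≤ D := (norm_nonneg _).trans (hD 0 (by simp))
  refine ⟨D + n * C, by positivity, fun r hr => ?_⟩
  have h2 : ‖f r‖ ≤ C := (hb r ⟨hr.1, hr.2.le⟩).trans (by nlinarith [hr.2])
  have h3 : ‖(n:ℂ) * f r‖ ≤ n * C := by
    rw [norm_mul, Complex.norm_natCast]; gcongr
  have h4 := hD r ⟨hr.1.le, hr.2.le⟩
  exact ⟨(norm_sub_le _ _).trans (by linarith), (norm_add_le _ _).trans (by linarith)⟩

lemma u_step (h : Sol n ε M f K) (hn : 1 ≤ n) {m : ℕ} {C : ℝ} (hC : 0 ≤ C)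
    (hb : ∀ r ∈ Set.Ioo (0:ℝ) 1, ‖f r‖ ≤ C * r ^ m) :
    ∃ C', 0 ≤ C' ∧ ∀ r ∈ Set.Ioo (0:ℝ) 1, ‖uu n f K r‖ ≤ C' * r ^ (m + 2) := by
  obtain ⟨V0, hV0, hV⟩ := V_bound h
  obtain ⟨B, hB, hu⟩ := uv_bdd h
  refine ⟨V0 * C, by positivity, fun r hr => ?_⟩
  set g : ℝ → ℂ := fun r => (r:ℂ) ^ n * uu n f K r with hg
  have key : ∀ s ∈ Set.Ioo 0 r, ‖g r‖ ≤ V0 * C * r ^ (n + 1 + m) * r + s * B := by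
    intro s hs
    have h1 : ‖g r - g s‖ ≤ V0 * C * r ^ (n + 1 + m) * (r - s) := by
      refine mvt hs.2.le (fun x hx => ru_deriv h ⟨hs.1.trans_le hx.1, hx.2.trans_lt hr.2⟩) (fun x hx => ?_)
      have hx0 : 0 < x := hs.1.trans_le hx.1
      have hx1 : x ∈ Set.Ioo (0:ℝ) 1 := ⟨hx0, hx.2.trans_lt hr.2⟩
      rw [norm_mul, norm_mul, norm_pow, Complex.norm_real, Complex.norm_real, Real.norm_of_nonneg hx0.le]
      calc x ^ (n+1) * ‖VV ε M f x‖ * ‖f x‖ ≤ x ^ (n+1) * V0 * (C * x ^ m) :=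
            mul_le_mul (mul_le_mul_of_nonneg_left (hV x hx1) (by positivity)) (hb x hx1) (norm_nonneg _) (by positivity)
        _ = V0 * C * x ^ (n+1+m) := by ring
        _ ≤ _ := by gcongr; exact hx.2
    have h2 : ‖g s‖ ≤ s * B := by
      simp only [hg]
      rw [norm_mul, norm_pow, Complex.norm_real, Real.norm_of_nonneg hs.1.le]
      have hs1 : s ≤ 1 := (hs.2.trans hr.2).le
      refine mul_le_mul ?_ (hu s ⟨hs.1, hs.2.trans hr.2⟩).1 (norm_nonneg _) hs.1.le
      exact (pow_le_pow_of_le_one hs.1.le hs1 hn).trans (by simp)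
    have h3 : g r = (g r - g s) + g s := by ring
    rw [h3]
    refine (norm_add_le _ _).trans (add_le_add (h1.trans ?_) h2)
    have := hr.1
    gcongr
    linarith [hs.1]
  have h5 : ‖g r‖ ≤ V0 * C * r ^ (n + 1 + m) * r := by
    have ht : Tendsto (fun s => V0 * C * r ^ (n + 1 + m) * r + s * B) (nhdsWithin 0 (Set.Ioi 0))
      (nhds (V0 * C * r ^ (n + 1 + m) * r + 0 * B)) :=
      (Continuous.tendsto (by fun_prop) 0).mono_left nhdsWithin_le_nhds
    rw [zero_mul, add_zero] at ht
    refine ge_of_tendsto ht ?_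
    filter_upwards [Ioo_mem_nhdsGT hr.1] with s hs using key s hs
  simp only [hg] at h5
  rw [norm_mul, norm_pow, Complex.norm_real, Real.norm_of_nonneg hr.1.le] at h5
  have hp : 0 < r ^ n := pow_pos hr.1 n
  refine le_of_mul_le_mul_left (h5.trans (le_of_eq ?_)) hp
  ring

lemma hder_bound (h : Sol n ε M f K) {m : ℕ} {C V0 : ℝ} (hV0 : 0 ≤ V0)
    (hV : ∀ r ∈ Set.Ioo (0:ℝ) 1, |VV ε M f r| ≤ V0)
    (hb : ∀ r ∈ Set.Ioo (0:ℝ) 1, ‖f r‖ ≤ C * r ^ m) {r : ℝ} (hr : r ∈ Set.Ioo (0:ℝ) 1) :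
    ‖(r:ℂ) * VV ε M f r * f r / (r:ℂ) ^ n‖ ≤ V0 * C * r ^ (m+1) / r ^ n := by
  have := hr.1
  rw [norm_div, norm_mul, norm_mul, norm_pow, Complex.norm_real, Complex.norm_real, Real.norm_of_nonneg hr.1.le]
  refine div_le_div_of_nonneg_right ?_ (by positivity)
  calc r * ‖VV ε M f r‖ * ‖f r‖ ≤ r * V0 * (C * r ^ m) := 
        mul_le_mul (mul_le_mul_of_nonneg_left (hV r hr) (by positivity)) (hb r hr) (norm_nonneg _) (by positivity)
    _ = _ := by ring

lemma v_step (h : Sol n ε M f K) {m : ℕ} (hm : m + 1 ≤ n) {C : ℝ} (hC : 0 ≤ C)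
    (hb : ∀ r ∈ Set.Ioo (0:ℝ) 1, ‖f r‖ ≤ C * r ^ m) :
    ∃ C', 0 ≤ C' ∧ ∀ r ∈ Set.Ioo (0:ℝ) 1, ‖vv n f K r‖ ≤ C' * r ^ (m + 1) := by
  obtain ⟨V0, hV0, hV⟩ := V_bound h
  obtain ⟨B, hB, hu⟩ := uv_bdd h
  obtain ⟨d, rfl⟩ := Nat.exists_eq_add_of_le hm
  set n := m + 1 + d
  set g : ℝ → ℂ := fun r => vv n f K r / (r:ℂ) ^ n with hg
  refine ⟨max (V0 * C + ‖g (1/2)‖) (B * 2 ^ (m+1)), by positivity, fun r hr => ?_⟩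
  have hr0 := hr.1
  by_cases hlt : r < 1/2
  · have h1 : ‖g (1/2) - g r‖ ≤ V0 * C / r ^ d * (1/2 - r) := by
      refine mvt hlt.le (fun x hx => rv_deriv h ⟨hr.1.trans_le hx.1, hx.2.trans_lt (by norm_num)⟩) (fun x hx => ?_)
      have hx0 : 0 < x := hr.1.trans_le hx.1
      refine (hder_bound h hV0 hV hb ⟨hx0, hx.2.trans_lt (by norm_num)⟩).trans ?_
      have : V0 * C * x ^ (m+1) / x ^ n = V0 * C / x ^ d := by
        simp only [n]; rw [pow_add x (m+1) d]; field_simp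
      rw [this]
      gcongr
      exact hx.1
    have h2 : vv n f K r = (r:ℂ) ^ n * (g (1/2) - (g (1/2) - g r)) := by
      have : (r:ℂ) ≠ 0 := by exact_mod_cast hr0.ne'
      simp only [hg]; field_simp; ring
    rw [h2, norm_mul, norm_pow, Complex.norm_real, Real.norm_of_nonneg hr0.le]
    have h3 : ‖g (1/2) - (g (1/2) - g r)‖ ≤ ‖g (1/2)‖ + V0 * C / r ^ d := by
      refine (norm_sub_le _ _).trans (add_le_add le_rfl (h1.trans ?_))
      have : 0 ≤ V0 * C / r ^ d := by positivity
      nlinarith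
    calc r ^ n * ‖g (1/2) - (g (1/2) - g r)‖ ≤ r ^ n * (‖g (1/2)‖ + V0 * C / r ^ d) := by gcongr
      _ = r ^ (m+1) * (r ^ d * ‖g (1/2)‖ + V0 * C) := by
        simp only [n]; rw [pow_add r (m+1) d]; field_simp
      _ ≤ r ^ (m+1) * (1 * ‖g (1/2)‖ + V0 * C) := by
        gcongr; exact pow_le_one₀ hr0.le hr.2.le
      _ ≤ r ^ (m+1) * max (V0 * C + ‖g (1/2)‖) (B * 2 ^ (m+1)) := by
        gcongr; rw [one_mul, add_comm]; exact le_max_left _ _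
      _ = _ := by ring
  · push Not at hlt
    calc ‖vv n f K r‖ ≤ B := (hu r hr).2
      _ = B * 2 ^ (m+1) * (1/2) ^ (m+1) := by rw [mul_assoc, ← mul_pow]; norm_num
      _ ≤ max (V0 * C + ‖g (1/2)‖) (B * 2 ^ (m+1)) * r ^ (m+1) := by
        apply mul_le_mul (le_max_right _ _) _ (by positivity) (by positivity)
        gcongr

lemma f_of_uv (hn : 1 ≤ n) {r A B : ℝ} (h1 : ‖uu n f K r‖ ≤ A) (h2 : ‖vv n f K r‖ ≤ B) : ‖f r‖ ≤ A + B := by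
  have e : (2 * n : ℂ) * f r = vv n f K r - uu n f K r := by simp only [uu, vv]; ring
  have h3 : ‖(2 * n : ℂ) * f r‖ ≤ A + B := by
    rw [e]; exact (norm_sub_le _ _).trans (by linarith)
  rw [norm_mul, norm_mul, Complex.norm_natCast] at h3
  have : (1:ℝ) ≤ n := by exact_mod_cast hn
  simp at h3
  nlinarith [norm_nonneg (f r)]

lemma f_reg (h : Sol n ε M f K) (hn : 1 ≤ n) : ∀ m, m + 1 ≤ n →
    ∃ C, 0 ≤ C ∧ ∀ r ∈ Set.Ioo (0:ℝ) 1, ‖f r‖ ≤ C * r ^ (m + 1) := by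
  intro m
  induction m with
  | zero => 
    intro _
    obtain ⟨C, hC, hb⟩ := h.b
    exact ⟨C, hC, fun r hr => by simpa using hb r ⟨hr.1, hr.2.le⟩⟩
  | succ m ih =>
    intro hm
    obtain ⟨C, hC, hb⟩ := ih (by omega)
    obtain ⟨C1, hC1, h1⟩ := u_step h hn hC hb
    obtain ⟨C2, hC2, h2⟩ := v_step h hm hC hb
    refine ⟨C1 + C2, by positivity, fun r hr => ?_⟩
    have := hr.1
    refine (f_of_uv hn (h1 r hr) (h2 r hr)).trans ?_
    have : r ^ (m+1+2) ≤ r ^ (m+1+1) := pow_le_pow_of_le_one hr.1.le hr.2.le (by omega)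
    nlinarith

lemma reg (h : Sol n ε M f K) (hn : 1 ≤ n) : ∃ C, ∃ c : ℂ, 0 ≤ C ∧ ∀ r ∈ Set.Ioo (0:ℝ) 1,
    ‖f r‖ ≤ C * r ^ n ∧ ‖K r‖ ≤ C * r ^ n ∧ ‖uu n f K r‖ ≤ C * r ^ (n+2) ∧ ‖vv n f K r‖ ≤ C * r ^ n ∧
    ‖vv n f K r - c * (r:ℂ) ^ n‖ ≤ C * r ^ (n+2) ∧ |VV ε M f r| ≤ C := by
  obtain ⟨C, hC, hb⟩ := f_reg h hn (n-1) (by omega)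
  rw [Nat.sub_add_cancel hn] at hb
  obtain ⟨C1, hC1, h1⟩ := u_step h hn hC hb
  obtain ⟨V0, hV0, hV⟩ := V_bound h
  set g : ℝ → ℂ := fun r => vv n f K r / (r:ℂ) ^ n with hg
  have key : ∀ s r, 0 < s → s ≤ r → r < 1 → ‖g r - g s‖ ≤ V0 * C * r ^ 2 := by
    intro s r hs hsr hr
    have : ‖g r - g s‖ ≤ V0 * C * r * (r - s) := by
      refine mvt hsr (fun x hx => rv_deriv h ⟨hs.trans_le hx.1, hx.2.trans_lt hr⟩) (fun x hx => ?_)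
      have hx0 : 0 < x := hs.trans_le hx.1
      refine (hder_bound h hV0 hV hb ⟨hx0, hx.2.trans_lt hr⟩).trans ?_
      rw [pow_succ, div_le_iff₀ (by positivity)]
      have : V0 * C * (x ^ n * x) = V0 * C * x * x ^ n := by ring
      rw [this]
      gcongr
      exact hx.2
    refine this.trans ?_
    have : 0 ≤ V0 * C * r := by have := hs.trans_le hsr; positivity
    nlinarith
  have sp : ∀ k : ℕ, (0:ℝ) < 1 / ((k:ℝ) + 2) := fun k => by positivity
  have hcs : CauchySeq (fun k : ℕ => g (1 / ((k:ℝ) + 2))) := by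
    have anti : ∀ k l : ℕ, k ≤ l → 1 / ((l:ℝ) + 2) ≤ 1 / ((k:ℝ) + 2) := fun k l hkl => by
      have : (k:ℝ) ≤ l := by exact_mod_cast hkl
      gcongr
    have lt1 : ∀ k : ℕ, 1 / ((k:ℝ) + 2) < 1 := fun k => by
      rw [div_lt_one (by positivity)]; linarith [(Nat.cast_nonneg k : (0:ℝ) ≤ k)]
    refine cauchySeq_of_le_tendsto_0 (fun N : ℕ => V0 * C * (1 / ((N:ℝ) + 1)) ) ?_ ?_
    · intro k l N hk hl
      have gen : ∀ k l : ℕ, N ≤ k → k ≤ l → ‖g (1 / ((k:ℝ) + 2)) - g (1 / ((l:ℝ) + 2))‖ ≤ V0 * C * (1 / ((N:ℝ) + 1)) := by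
        intro k l hk hkl
        refine (key _ _ (sp l) (anti k l hkl) (lt1 k)).trans ?_
        refine mul_le_mul_of_nonneg_left ?_ (by positivity)
        have a1 := anti N k hk
        have a2 : 1 / ((N:ℝ) + 2) ≤ 1 / ((N:ℝ) + 1) := by gcongr; norm_num
        have := lt1 k
        have := sp k
        nlinarith
      rcases le_total k l with hkl | hkl
      · rw [dist_eq_norm]; exact gen k l hk hkl
      · rw [dist_comm, dist_eq_norm]; exact gen l k hl hkl
    · have := (tendsto_one_div_add_atTop_nhds_zero_nat (𝕜 := ℝ)).const_mul (V0 * C)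
      simpa using this
  obtain ⟨c, hc⟩ := cauchySeq_tendsto_of_complete hcs
  have hgc : ∀ r ∈ Set.Ioo (0:ℝ) 1, ‖g r - c‖ ≤ V0 * C * r ^ 2 := by
    intro r hr
    refine le_of_tendsto (hc.const_sub (g r)).norm ?_
    have h3 : Tendsto (fun k : ℕ => 1 / ((k:ℝ) + 2)) atTop (nhds 0) := by
      have := (tendsto_one_div_add_atTop_nhds_zero_nat (𝕜 := ℝ)).comp (tendsto_add_atTop_nat 1)
      refine this.congr fun k => ?_
      simp; ring
    filter_upwards [h3.eventually (gt_mem_nhds hr.1)] with k hk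
    exact key _ _ (sp k) hk.le hr.2
  have hvc : ∀ r ∈ Set.Ioo (0:ℝ) 1, ‖vv n f K r - c * (r:ℂ) ^ n‖ ≤ V0 * C * r ^ (n+2) := by
    intro r hr
    have h0 : (r:ℂ) ≠ 0 := by exact_mod_cast hr.1.ne'
    have : vv n f K r - c * (r:ℂ) ^ n = (r:ℂ) ^ n * (g r - c) := by simp only [hg]; field_simp
    rw [this, norm_mul, norm_pow, Complex.norm_real, Real.norm_of_nonneg hr.1.le]
    calc r ^ n * ‖g r - c‖ ≤ r ^ n * (V0 * C * r ^ 2) := mul_le_mul_of_nonneg_left (hgc r hr) (pow_nonneg hr.1.le _)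
      _ = _ := by ring
  refine ⟨C + C1 + V0 * C + V0 * C + ‖c‖ + V0, c, by positivity, fun r hr => ?_⟩
  have hr0 := hr.1
  have hp2 : r ^ (n+2) ≤ r ^ n := pow_le_pow_of_le_one hr.1.le hr.2.le (by omega)
  have p1 : 0 ≤ r ^ (n+2) := by positivity
  have hVC : 0 ≤ V0 * C := by positivity
  have hv : ‖vv n f K r‖ ≤ V0 * C * r ^ (n+2) + ‖c‖ * r ^ n := by
    have : vv n f K r = (vv n f K r - c * (r:ℂ) ^ n) + c * (r:ℂ) ^ n := by ring
    rw [this]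
    refine (norm_add_le _ _).trans (add_le_add (hvc r hr) ?_)
    rw [norm_mul, norm_pow, Complex.norm_real, Real.norm_of_nonneg hr.1.le]
  have hu := h1 r hr
  have hK : ‖K r‖ ≤ ‖uu n f K r‖ + ‖vv n f K r‖ := by
    have e : (2:ℂ) * K r = uu n f K r + vv n f K r := by simp only [uu, vv]; ring
    have h3 : ‖(2:ℂ) * K r‖ ≤ ‖uu n f K r‖ + ‖vv n f K r‖ := by rw [e]; exact norm_add_le _ _
    rw [norm_mul] at h3
    simp at h3
    linarith [norm_nonneg (K r)]
  have hc0 := norm_nonneg c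
  have m1 := mul_le_mul_of_nonneg_left hp2 hVC
  have m2 := mul_le_mul_of_nonneg_left hp2 hC1
  have q1 := mul_nonneg hC p1
  have q2 := mul_nonneg hC1 p1
  have q3 := mul_nonneg hVC p1
  have q4 := mul_nonneg hc0 p1
  have q5 := mul_nonneg hV0 p1
  have p3 : 0 ≤ r ^ n := by positivity
  have t1 := mul_nonneg hC p3
  have t2 := mul_nonneg hC1 p3
  have t3 := mul_nonneg hVC p3
  have t4 := mul_nonneg hc0 p3
  have t5 := mul_nonneg hV0 p3
  refine ⟨(hb r hr).trans (by nlinarith), by nlinarith, by nlinarith, by nlinarith,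
    (hvc r hr).trans (by nlinarith), (hV r hr).trans (by linarith)⟩

end

open MeasureTheory Real Filter

noncomputable section

variable {n : ℕ} {ε M : ℝ} {f K : ℝ → ℂ}

lemma rip_deriv {f g : ℝ → ℂ} {f' g' : ℂ} {r : ℝ} (hf : HasDerivAt f f' r) (hg : HasDerivAt g g' r) :
    HasDerivAt (fun t => rip (f t) (g t)) (rip (f r) g' + rip f' (g r)) r := by
  have := HasDerivAt.inner ℝ hf hg
  have e : ∀ a b : ℂ, inner ℝ a b = rip a b := fun a b => by
    rw [Complex.inner, rip, mul_comm]
  simpa only [e] using this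

/-- density -/
def rh (f : ℝ → ℂ) (r : ℝ) : ℝ := rip (f r) (f r)
/-- first derivative quantity -/
def sg (f K : ℝ → ℂ) (r : ℝ) : ℝ := rip (f r) (K r)
/-- squared derivative quantity -/
def ta (K : ℝ → ℂ) (r : ℝ) : ℝ := rip (K r) (K r)

lemma rip_div (a b : ℂ) (r : ℝ) : rip a (b / r) = rip a b / r := by
  simp only [rip_eq, Complex.div_ofReal_re, Complex.div_ofReal_im]; ring

lemma rip_div' (a b : ℂ) (r : ℝ) : rip (b / r) a = rip b a / r := by
  simp only [rip_eq, Complex.div_ofReal_re, Complex.div_ofReal_im]; ring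

lemma kap_eq (r : ℝ) : kap n ε M f r = ((((n:ℝ)^2 / r + r * VV ε M f r : ℝ)) : ℂ) * f r := by
  simp only [kap, VV]; push_cast; ring

lemma rip_smul (s : ℝ) (a c : ℂ) : rip a ((s:ℂ) * c) = s * rip a c := by
  simp only [rip_eq]; simp; ring
lemma rip_smul' (s : ℝ) (a c : ℂ) : rip ((s:ℂ) * c) a = s * rip c a := by
  simp only [rip_eq]; simp; ring
lemma rip_comm (a c : ℂ) : rip a c = rip c a := by
  simp only [rip_eq]; ring

lemma rh_deriv (h : Sol n ε M f K) {r : ℝ} (hr : 0 < r) :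
    HasDerivAt (rh f) (2 * sg f K r / r) r := by
  refine (rip_deriv (h.hf r hr) (h.hf r hr)).congr_deriv ?_
  rw [rip_div, rip_div', rip_comm (K r), sg]; ring

lemma sg_deriv (h : Sol n ε M f K) {r : ℝ} (hr : r ∈ Set.Ioo (0:ℝ) 1) :
    HasDerivAt (sg f K) (ta K r / r + ((n:ℝ)^2 / r + r * VV ε M f r) * rh f r) r := by
  refine (rip_deriv (h.hf r hr.1) (h.hK r hr)).congr_deriv ?_
  rw [rip_div', kap_eq, rip_smul, ta, rh]; ring

lemma ta_deriv (h : Sol n ε M f K) {r : ℝ} (hr : r ∈ Set.Ioo (0:ℝ) 1) :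
    HasDerivAt (ta K) (2 * ((n:ℝ)^2 / r + r * VV ε M f r) * sg f K r) r := by
  refine (rip_deriv (h.hK r hr) (h.hK r hr)).congr_deriv ?_
  rw [kap_eq, rip_smul, rip_smul', rip_comm (K r), sg]; ring

lemma VV_eq (r : ℝ) : VV ε M f r = 2 * rh f r / ε^2 - M := by
  rw [VV, rh, rip_self]

lemma VV_deriv (h : Sol n ε M f K) {r : ℝ} (hr : 0 < r) :
    HasDerivAt (VV ε M f) (4 * sg f K r / (r * ε^2)) r := by
  have : VV ε M f = fun r => 2 * rh f r / ε^2 - M := funext fun r => VV_eq r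
  rw [this]
  refine ((((rh_deriv h hr).const_mul 2).div_const (ε^2)).sub_const M).congr_deriv ?_
  have := hr.ne'
  field_simp; ring

/-- quartic potential -/
def WW (ε M : ℝ) (f : ℝ → ℂ) (r : ℝ) : ℝ := rh f r ^ 2 / (2 * ε^2) - M * rh f r / 2

lemma WW_deriv (h : Sol n ε M f K) {r : ℝ} (hr : 0 < r) :
    HasDerivAt (WW ε M f) (VV ε M f r * sg f K r / r) r := by
  refine ((((rh_deriv h hr).pow 2).div_const (2 * ε^2)).sub
    (((rh_deriv h hr).const_mul M).div_const 2)).congr_deriv ?_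
  rw [VV_eq]
  by_cases he : ε = 0
  · subst he; simp; ring
  · have := hr.ne'
    field_simp; simp

/-- the antiderivative -/
def TT (n : ℕ) (ε Ω M : ℝ) (f K : ℝ → ℂ) (r : ℝ) : ℝ :=
  (-4 * ta K r + 4 * n^2 * sg f K r - 4 * n^2 * rh f r) / r^4
    + (2 * (VV ε M f r * sg f K r) + 4 * WW ε M f r + 4 * n * Ω * rh f r) / r^2

/-- first coefficient -/
def aa (n : ℕ) (f K : ℝ → ℂ) (r : ℝ) : ℂ := uu n f K r / r^2
/-- second coefficient -/
def bb (n : ℕ) (f K : ℝ → ℂ) (r : ℝ) : ℂ := vv n f K r / r^2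
/-- derivative of the first coefficient -/
def aa' (n : ℕ) (ε M : ℝ) (f K : ℝ → ℂ) (r : ℝ) : ℂ :=
  -((n:ℂ)+2) * uu n f K r / r^3 + VV ε M f r * f r / r
/-- derivative of the second coefficient -/
def bb' (n : ℕ) (ε M : ℝ) (f K : ℝ → ℂ) (r : ℝ) : ℂ :=
  ((n:ℂ)-2) * vv n f K r / r^3 + VV ε M f r * f r / r

/-- radial second variation density -/
def qr (n : ℕ) (ε Ω M : ℝ) (f K : ℝ → ℂ) (r : ℝ) : ℝ :=
  ‖aa' n ε M f K r‖^2 + ‖bb' n ε M f K r‖^2 + ((n:ℝ)+2)^2 / r^2 * ‖aa n f K r‖^2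
    + ((n:ℝ)-2)^2 / r^2 * ‖bb n f K r‖^2
    - 2 * Ω * (‖aa n f K r‖^2 - ‖bb n f K r‖^2)
    + (4 * ‖f r‖^2 * (‖aa n f K r‖^2 + ‖bb n f K r‖^2)
      + 4 * ((starRingEnd ℂ (f r))^2 * (aa n f K r * bb n f K r)).re) / ε^2
    - M * (‖aa n f K r‖^2 + ‖bb n f K r‖^2)

lemma qr_id {r : ℝ} (hr : 0 < r) (hε : 0 < ε) (Ω : ℝ) (F k : ℂ) (V : ℝ) (hV : V = 2 * ‖F‖^2 / ε^2 - M) (N : ℝ):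
    r * (‖-((N:ℂ)+2) * (k - N * F) / r^3 + V * F / r‖^2 + ‖((N:ℂ)-2) * (k + N * F) / r^3 + V * F / r‖^2
    + (N+2)^2 / r^2 * ‖(k - N * F) / (r:ℂ)^2‖^2
    + (N-2)^2 / r^2 * ‖(k + N * F) / (r:ℂ)^2‖^2
    - 2 * Ω * (‖(k - N * F) / (r:ℂ)^2‖^2 - ‖(k + N * F) / (r:ℂ)^2‖^2)
    + (4 * ‖F‖^2 * (‖(k - N * F) / (r:ℂ)^2‖^2 + ‖(k + N * F) / (r:ℂ)^2‖^2)
      + 4 * ((starRingEnd ℂ F)^2 * ((k - N * F) / (r:ℂ)^2 * ((k + N * F) / (r:ℂ)^2))).re) / ε^2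
    - M * (‖(k - N * F) / (r:ℂ)^2‖^2 + ‖(k + N * F) / (r:ℂ)^2‖^2))
    = ((-4 * (2 * (N^2 / r + r * V) * rip F k) + 4 * N^2 * (rip k k / r + (N^2 / r + r * V) * rip F F) - 4 * N^2 * (2 * rip F k / r)) * r^4 -
        (-4 * rip k k + 4 * N^2 * rip F k - 4 * N^2 * rip F F) * (4 * r^3)) / (r^4)^2
      + ((2 * ((4 * rip F k / (r * ε^2)) * rip F k + V * (rip k k / r + (N^2 / r + r * V) * rip F F))
        + 4 * (V * rip F k / r) + 4 * N * Ω * (2 * rip F k / r)) * r^2 -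
        (2 * (V * rip F k) + 4 * (rip F F^2 / (2 * ε^2) - M * rip F F / 2) + 4 * N * Ω * rip F F) * (2 * r)) / (r^2)^2
      + (8 * (rip F F^2 / (2 * ε^2) - M * rip F F / 2) + 8 * N * Ω * rip F F) / r^3 := by
  have hM : M = 2 * (F.re * F.re + F.im * F.im) / ε^2 - V := by rw [hV, nsq]; ring
  have e1 : ∀ z : ℂ, z / (r:ℂ)^2 = ((1/r^2 : ℝ):ℂ) * z := fun z => by push_cast; ring
  have e2 : ∀ z : ℂ, z / (r:ℂ)^3 = ((1/r^3 : ℝ):ℂ) * z := fun z => by push_cast; ring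
  have e3 : ∀ z : ℂ, z / (r:ℂ) = ((1/r : ℝ):ℂ) * z := fun z => by push_cast; ring
  simp only [e1, e2, e3, nsq, rip_eq, pow_two (starRingEnd ℂ F), Complex.mul_re, Complex.mul_im, Complex.add_re, Complex.add_im, Complex.sub_re,
    Complex.sub_im, Complex.neg_re, Complex.neg_im, Complex.ofReal_re, Complex.ofReal_im, Complex.conj_re,
    Complex.conj_im, Complex.re_ofNat, Complex.im_ofNat]
  rw [hM]
  obtain ⟨F1, F2⟩ := F
  obtain ⟨k1, k2⟩ := k
  simp only
  clear hM hV e1 e2 e3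
  have := hr.ne'
  have := hε.ne'
  field_simp
  ring

end

open MeasureTheory Real Filter

noncomputable section

variable {n : ℕ} {ε M : ℝ} {f K : ℝ → ℂ}

lemma TT_deriv (h : Sol n ε M f K) (hε : 0 < ε) (Ω : ℝ) {r : ℝ} (hr : r ∈ Set.Ioo (0:ℝ) 1) :
    HasDerivAt (TT n ε Ω M f K) (r * qr n ε Ω M f K r -
      (8 * WW ε M f r + 8 * n * Ω * rh f r) / r^3) r := by
  have d1 := ((((ta_deriv h hr).const_mul (-4)).add ((sg_deriv h hr).const_mul (4 * (n:ℝ)^2))).sub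
    ((rh_deriv h hr.1).const_mul (4 * (n:ℝ)^2))).div (hasDerivAt_pow 4 r) (pow_ne_zero 4 hr.1.ne')
  have d2 := (((((VV_deriv h hr.1).mul (sg_deriv h hr)).const_mul 2).add
    ((WW_deriv h hr.1).const_mul 4)).add
    ((rh_deriv h hr.1).const_mul (4 * n * Ω))).div (hasDerivAt_pow 2 r) (pow_ne_zero 2 hr.1.ne')
  refine (d1.add d2).congr_deriv ?_
  have := qr_id (M := M) hr.1 hε Ω (f r) (K r) (VV ε M f r) rfl (n:ℝ)
  simp only [Complex.ofReal_natCast] at this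
  have e := eq_sub_of_add_eq this.symm
  simp only [qr, aa, bb, aa', bb', uu, vv]
  simp only [WW, ta, sg, rh, Pi.add_apply, Pi.sub_apply, Pi.mul_apply, Nat.cast_ofNat]
  rw [← e]
  norm_num

lemma rh_cont (h : Sol n ε M f K) {r : ℝ} (hr : 0 < r) : ContinuousAt (rh f) r :=
  (rh_deriv h hr).continuousAt

lemma rh_nn (f : ℝ → ℂ) (r : ℝ) : 0 ≤ rh f r := by rw [rh, rip_self]; positivity

lemma exists_max (h : Sol n ε M f K) {r1 : ℝ} (hr1 : r1 ∈ Set.Ioc (0:ℝ) 1) (hp : 0 < rh f r1) :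
    ∃ r0 ∈ Set.Ioc (0:ℝ) 1, ∀ r ∈ Set.Ioc (0:ℝ) 1, rh f r ≤ rh f r0 := by
  obtain ⟨C, hC, hb⟩ := h.b
  have hb' : ∀ r ∈ Set.Ioc (0:ℝ) 1, rh f r ≤ C^2 * r^2 := fun r hr => by
    rw [rh, rip_self, ← mul_pow]; exact pow_le_pow_left₀ (norm_nonneg _) (hb r hr) 2
  have ht : Tendsto (fun s : ℝ => C^2 * s^2) (nhdsWithin 0 (Set.Ioi 0)) (nhds 0) := by
    have : Continuous (fun s : ℝ => C^2 * s^2) := by fun_prop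
    simpa using (this.tendsto 0).mono_left nhdsWithin_le_nhds
  obtain ⟨s, hs1, hs2⟩ := ((ht.eventually (gt_mem_nhds hp)).and
    (Ioo_mem_nhdsGT hr1.1)).exists
  have hcont : ContinuousOn (rh f) (Set.Icc s 1) := fun r hr =>
    (rh_cont h (hs2.1.trans_le hr.1)).continuousWithinAt
  obtain ⟨r0, hr0, hmax⟩ := isCompact_Icc.exists_isMaxOn ⟨r1, hs2.2.le, hr1.2⟩ hcont
  refine ⟨r0, ⟨hs2.1.trans_le hr0.1, hr0.2⟩, fun r hr => ?_⟩
  rcases le_total s r with h1 | h1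
  · exact hmax ⟨h1, hr.2⟩
  · have := hmax (⟨hs2.2.le, hr1.2⟩ : r1 ∈ Set.Icc s 1)
    refine (hb' r hr).trans (le_trans ?_ this)
    have : C^2 * r^2 ≤ C^2 * s^2 := by
      have := hr.1; gcongr
    linarith

lemma max_bound (h : Sol n ε M f K) {r0 : ℝ} (hr0 : r0 ∈ Set.Ioc (0:ℝ) 1) (hp : 0 < rh f r0)
    (hm : ∀ r ∈ Set.Ioc (0:ℝ) 1, rh f r ≤ rh f r0) : 2 * rh f r0 / ε^2 ≤ M - (n:ℝ)^2 := by
  have hr00 := hr0.1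
  have hs0 : sg f K r0 = 0 := by
    rcases eq_or_lt_of_le hr0.2 with h1 | h1
    · rw [sg, h1, h.K1]; simp [rip]
    · have hl : IsLocalMax (rh f) r0 := by
        filter_upwards [Ioo_mem_nhds hr0.1 h1] with r hr using hm r ⟨hr.1, hr.2.le⟩
      have := hl.hasDerivAt_eq_zero (rh_deriv h hr0.1)
      field_simp at this
      linarith
  by_contra! hc
  have hV : 0 < VV ε M f r0 + (n:ℝ)^2 / r0^2 := by
    have : (n:ℝ)^2 ≤ (n:ℝ)^2 / r0^2 := by
      rw [le_div_iff₀ (by positivity)]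
      have : r0^2 ≤ 1 := pow_le_one₀ hr00.le hr0.2
      nlinarith [sq_nonneg (n:ℝ)]
    rw [VV_eq]; linarith
  have c1 : ContinuousAt (fun r => VV ε M f r + (n:ℝ)^2 / r^2) r0 :=
    (VV_deriv h hr0.1).continuousAt.add (continuousAt_const.div (by fun_prop) (pow_ne_zero 2 hr00.ne'))
  have ev := (c1.eventually (lt_mem_nhds hV)).and ((rh_cont h hr0.1).eventually (lt_mem_nhds hp))
  obtain ⟨d, hd, hball⟩ := Metric.eventually_nhds_iff.1 ev
  set s := max (r0 - d/2) (r0/2) with hs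
  have hs1 : s < r0 := max_lt (by linarith) (by linarith)
  have hs2 : 0 < s := lt_of_lt_of_le (by linarith) (le_max_right _ _)
  have hs3 : r0 - d/2 ≤ s := le_max_left _ _
  have hin : ∀ r ∈ Set.Icc s r0, 0 < VV ε M f r + (n:ℝ)^2 / r^2 ∧ 0 < rh f r := fun r hr => by
    refine hball ?_
    rw [Real.dist_eq, abs_lt]; constructor <;> linarith [hr.1, hr.2]
  have hsgc : ContinuousOn (sg f K) (Set.Icc s r0) := fun r hr => by
    have h1 := (h.hf r (hs2.trans_le hr.1)).continuousAt
    have h2 := h.Kc.continuousAt (x := r)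
    have : ContinuousAt (fun r => (starRingEnd ℂ (f r) * K r).re) r :=
      Complex.continuous_re.continuousAt.comp ((Complex.continuous_conj.continuousAt.comp h1).mul h2)
    exact this.continuousWithinAt
  have hmono : StrictMonoOn (sg f K) (Set.Icc s r0) := by
    refine strictMonoOn_of_deriv_pos (convex_Icc _ _) hsgc fun r hr => ?_
    rw [interior_Icc] at hr
    have hr' : r ∈ Set.Ioo (0:ℝ) 1 := ⟨hs2.trans hr.1, hr.2.trans_le hr0.2⟩
    rw [(sg_deriv h hr').deriv]
    obtain ⟨k1, k2⟩ := hin r ⟨hr.1.le, hr.2.le⟩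
    have : (n:ℝ)^2 / r + r * VV ε M f r = r * (VV ε M f r + (n:ℝ)^2 / r^2) := by
      have := hr'.1.ne'; field_simp
      ring
    rw [this]
    have k3 : 0 ≤ ta K r := rh_nn K r
    have := hr'.1
    positivity
  have hanti : StrictAntiOn (rh f) (Set.Icc s r0) := by
    refine strictAntiOn_of_deriv_neg (convex_Icc _ _)
      (fun r hr => (rh_cont h (hs2.trans_le hr.1)).continuousWithinAt) fun r hr => ?_
    rw [interior_Icc] at hr
    have h0 : 0 < r := hs2.trans hr.1
    rw [(rh_deriv h h0).deriv]
    have := hmono ⟨hr.1.le, hr.2.le⟩ ⟨hs1.le, le_rfl⟩ hr.2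
    rw [hs0] at this
    exact div_neg_of_neg_of_pos (by linarith) h0
  have := hanti ⟨le_rfl, hs1.le⟩ ⟨hs1.le, le_rfl⟩ hs1
  linarith [hm s ⟨hs2, hs1.le.trans hr0.2⟩]

end

open MeasureTheory Real Filter

noncomputable section

variable {n : ℕ} {ε M : ℝ} {f K : ℝ → ℂ}

lemma WW_eq (r : ℝ) : WW ε M f r = rh f r * (VV ε M f r - M) / 4 := by
  rw [WW, VV_eq]
  by_cases he : ε = 0
  · subst he; simp; ring
  · field_simp; ring

lemma TT_eq (Ω : ℝ) (r : ℝ) : TT n ε Ω M f K r = (-4 * ‖uu n f K r‖^2 + 4 * n * ((n:ℝ)-2) * sg f K r) / r^4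
    + (2 * (VV ε M f r * sg f K r) + 4 * WW ε M f r + 4 * n * Ω * rh f r) / r^2 := by
  rw [TT, nsq, uu]
  simp only [ta, sg, rh, rip_eq, Complex.sub_re, Complex.sub_im, Complex.mul_re, Complex.mul_im,
    Complex.natCast_re, Complex.natCast_im]
  ring

lemma bds (h : Sol n ε M f K) (hn : 2 ≤ n) : ∃ C, 0 ≤ C ∧ ∀ r ∈ Set.Ioo (0:ℝ) 1,
    rh f r ≤ C * r^4 ∧ |sg f K r| ≤ C * r^4 ∧ ((n:ℝ)-2) * |sg f K r| ≤ ((n:ℝ)-2) * (C * r^6) ∧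
    ‖uu n f K r‖^2 ≤ C * r^6 ∧ |VV ε M f r| ≤ C := by
  obtain ⟨C, c, hC, hb⟩ := reg h (by omega)
  refine ⟨C^2 + C, by positivity, fun r hr => ?_⟩
  obtain ⟨h1, h2, h3, -, -, h4⟩ := hb r hr
  have hr0 := hr.1
  have p2 : r^n ≤ r^2 := pow_le_pow_of_le_one hr.1.le hr.2.le hn
  have p3 : r^(n+2) ≤ r^3 := pow_le_pow_of_le_one hr.1.le hr.2.le (by omega)
  have f2 : ‖f r‖ ≤ C * r^2 := h1.trans (by gcongr)
  have k2 : ‖K r‖ ≤ C * r^2 := h2.trans (by gcongr)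
  have u2 : ‖uu n f K r‖ ≤ C * r^3 := h3.trans (by gcongr)
  refine ⟨?_, ?_, ?_, ?_, h4.trans (by nlinarith)⟩
  · rw [rh, rip_self]
    calc ‖f r‖^2 ≤ (C * r^2)^2 := by gcongr
      _ ≤ _ := by nlinarith [pow_pos hr0 4]
  · calc |sg f K r| ≤ ‖f r‖ * ‖K r‖ := rip_le _ _
      _ ≤ (C * r^2) * (C * r^2) := by gcongr
      _ ≤ _ := by nlinarith [pow_pos hr0 4]
  · rcases eq_or_lt_of_le hn with h5 | h5
    · rw [← h5]; norm_num
    · have : (2:ℝ) ≤ n := by exact_mod_cast hn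
      refine mul_le_mul_of_nonneg_left ?_ (by linarith)
      have p3 : r^n ≤ r^3 := pow_le_pow_of_le_one hr.1.le hr.2.le h5
      have f2 : ‖f r‖ ≤ C * r^3 := h1.trans (by gcongr)
      have k2 : ‖K r‖ ≤ C * r^3 := h2.trans (by gcongr)
      calc |sg f K r| ≤ ‖f r‖ * ‖K r‖ := rip_le _ _
        _ ≤ (C * r^3) * (C * r^3) := by gcongr
        _ ≤ _ := by nlinarith [pow_pos hr0 6]
  · calc ‖uu n f K r‖^2 ≤ (C * r^3)^2 := by gcongr
      _ ≤ _ := by nlinarith [pow_pos hr0 6]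

lemma TT_zero (h : Sol n ε M f K) (hn : 2 ≤ n) (Ω : ℝ) :
    Tendsto (TT n ε Ω M f K) (nhdsWithin 0 (Set.Ioi 0)) (nhds 0) := by
  obtain ⟨C, hC, hb⟩ := bds h hn
  have n2 : (2:ℝ) ≤ n := by exact_mod_cast hn
  set D := 4 * C + 4 * n * (((n:ℝ)-2) * C) + 2 * (C * C) + C * (C + |M|) + 4 * n * |Ω| * C with hD
  have key : ∀ r ∈ Set.Ioo (0:ℝ) 1, |TT n ε Ω M f K r| ≤ D * r^2 := by
    intro r hr
    obtain ⟨h1, h2, h3, h4, h5⟩ := hb r hr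
    have hr0 := hr.1
    have hrn := rh_nn f r
    rw [TT_eq, WW_eq]
    have a1 : |-4 * ‖uu n f K r‖^2 + 4 * n * ((n:ℝ)-2) * sg f K r| ≤ 4 * (C * r^6) + 4 * n * (((n:ℝ)-2) * (C * r^6)) := by
      refine (abs_add_le _ _).trans (add_le_add ?_ ?_)
      · rw [abs_mul, abs_of_nonneg (sq_nonneg ‖uu n f K r‖)]; norm_num; exact h4
      · rw [mul_assoc, abs_mul, abs_mul ((n:ℝ)-2), abs_of_nonneg (by positivity : (0:ℝ) ≤ 4 * n),
          abs_of_nonneg (by linarith : (0:ℝ) ≤ (n:ℝ)-2)]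
        gcongr
    have a2 : |2 * (VV ε M f r * sg f K r) + 4 * (rh f r * (VV ε M f r - M) / 4) + 4 * n * Ω * rh f r| ≤
        2 * (C * (C * r^4)) + C * r^4 * (C + |M|) + 4 * n * |Ω| * (C * r^4) := by
      refine (abs_add_le _ _).trans (add_le_add ((abs_add_le _ _).trans (add_le_add ?_ ?_)) ?_)
      · rw [abs_mul, abs_mul]; norm_num; gcongr
      · rw [mul_div_cancel₀ _ (by norm_num : (4:ℝ) ≠ 0), abs_mul, abs_of_nonneg hrn]
        gcongr
        exact (abs_sub _ _).trans (by linarith)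
      · rw [abs_mul, abs_mul, abs_of_nonneg hrn, abs_of_nonneg (by positivity : (0:ℝ) ≤ 4 * n)]
        gcongr
    calc _ ≤ _ := abs_add_le _ _
      _ = |-4 * ‖uu n f K r‖^2 + 4 * n * ((n:ℝ)-2) * sg f K r| / r^4 + |2 * (VV ε M f r * sg f K r) + 4 * (rh f r * (VV ε M f r - M) / 4) + 4 * n * Ω * rh f r| / r^2 := by
        rw [abs_div, abs_div, abs_of_pos (pow_pos hr0 4), abs_of_pos (pow_pos hr0 2)]
      _ ≤ (4 * (C * r^6) + 4 * n * (((n:ℝ)-2) * (C * r^6))) / r^4 + (2 * (C * (C * r^4)) + C * r^4 * (C + |M|) + 4 * n * |Ω| * (C * r^4)) / r^2 := by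
        gcongr
      _ = D * r^2 := by rw [hD]; field_simp; ring
  refine squeeze_zero_norm' (a := fun r => D * r^2) ?_ ?_
  · filter_upwards [Ioo_mem_nhdsGT one_pos] with r hr using key r hr
  · have : Continuous (fun s : ℝ => D * s^2) := by fun_prop
    simpa using (this.tendsto 0).mono_left nhdsWithin_le_nhds

lemma TT_one (h : Sol n ε M f K) (Ω : ℝ) :
    Tendsto (TT n ε Ω M f K) (nhdsWithin 1 (Set.Iio 1)) (nhds (- 4 * n^2 * rh f 1 + 4 * WW ε M f 1 + 4 * n * Ω * rh f 1)) := by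
  have h1 := (h.hf 1 one_pos).continuousAt
  have h2 := h.Kc.continuousAt (x := 1)
  have cr : ContinuousAt (rh f) 1 := rh_cont h one_pos
  have cV : ContinuousAt (VV ε M f) 1 := (VV_deriv h one_pos).continuousAt
  have cW : ContinuousAt (WW ε M f) 1 := (WW_deriv h one_pos).continuousAt
  have cs : ContinuousAt (sg f K) 1 :=
    Complex.continuous_re.continuousAt.comp ((Complex.continuous_conj.continuousAt.comp h1).mul h2)
  have ct : ContinuousAt (ta K) 1 :=
    Complex.continuous_re.continuousAt.comp ((Complex.continuous_conj.continuousAt.comp h2).mul h2)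
  have : ContinuousAt (TT n ε Ω M f K) 1 := by
    refine ContinuousAt.add (ContinuousAt.div ?_ (by fun_prop) (by norm_num)) (ContinuousAt.div ?_ (by fun_prop) (by norm_num))
    · exact ((continuousAt_const.mul ct).add (continuousAt_const.mul cs)).sub (continuousAt_const.mul cr)
    · exact ((continuousAt_const.mul (cV.mul cs)).add (continuousAt_const.mul cW)).add (continuousAt_const.mul cr)
  have e : TT n ε Ω M f K 1 = - 4 * n^2 * rh f 1 + 4 * WW ε M f 1 + 4 * n * Ω * rh f 1 := by
    have s1 : sg f K 1 = 0 := by rw [sg, h.K1]; simp [rip]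
    have t1 : ta K 1 = 0 := by rw [ta, h.K1]; simp [rip]
    rw [TT, s1, t1]; ring
  rw [← e]
  exact this.tendsto.mono_left nhdsWithin_le_nhds

lemma bdd_int {g : ℝ → ℝ} {C : ℝ} (hc : ContinuousOn g (Set.Ioo 0 1)) (hb : ∀ r ∈ Set.Ioo (0:ℝ) 1, |g r| ≤ C) :
    IntegrableOn g (Set.Ioo 0 1) := by
  refine IntegrableOn.of_bound (by simp) (hc.aestronglyMeasurable measurableSet_Ioo) C ?_
  filter_upwards [ae_restrict_mem measurableSet_Ioo] with r hr using hb r hr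

lemma ii_iff {g : ℝ → ℝ} : IntervalIntegrable g volume 0 1 ↔ IntegrableOn g (Set.Ioo 0 1) := by
  rw [intervalIntegrable_iff_integrableOn_Ioo_of_le zero_le_one]

lemma M_bound (h : Sol n ε M f K) (hε : 0 < ε)
    (hint : IntegrableOn (fun r => r * rh f r) (Set.Ioo 0 1))
    (hnorm : 2 * π * ∫ r in (0:ℝ)..1, r * rh f r = 1) :
    2 / (π * ε^2) < M - (n:ℝ)^2 ∧ ∀ r ∈ Set.Ioc (0:ℝ) 1, 2 * rh f r / ε^2 ≤ M - (n:ℝ)^2 := by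
  have hi : IntervalIntegrable (fun r => r * rh f r) volume 0 1 := ii_iff.2 hint
  have ex : ∃ r1 ∈ Set.Ioc (0:ℝ) 1, 0 < rh f r1 := by
    by_contra! hc
    have : ∫ r in (0:ℝ)..1, r * rh f r = 0 := by
      refine intervalIntegral.integral_zero_ae ?_
      filter_upwards with r hr
      rw [Set.uIoc_of_le zero_le_one] at hr
      rw [le_antisymm (hc r hr) (rh_nn f r), mul_zero]
    rw [this] at hnorm; simp at hnorm
  obtain ⟨r1, hr1, hp1⟩ := ex
  obtain ⟨r0, hr0, hm⟩ := exists_max h hr1 hp1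
  have hp : 0 < rh f r0 := hp1.trans_le (hm r1 hr1)
  have hb := max_bound h hr0 hp hm
  refine ⟨lt_of_lt_of_le ?_ hb, fun r hr => le_trans ?_ hb⟩
  · -- strict
    have hs : ∫ r in (0:ℝ)..1, r * rh f r < rh f r0 / 2 := by
      obtain ⟨C, hC, hbC⟩ := h.b
      have hb' : ∀ r ∈ Set.Ioc (0:ℝ) 1, rh f r ≤ C^2 * r^2 := fun r hr => by
        rw [rh, rip_self, ← mul_pow]; exact pow_le_pow_left₀ (norm_nonneg _) (hbC r hr) 2
      have ht : Tendsto (fun s : ℝ => C^2 * s^2) (nhdsWithin 0 (Set.Ioi 0)) (nhds 0) := by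
        have : Continuous (fun s : ℝ => C^2 * s^2) := by fun_prop
        simpa using (this.tendsto 0).mono_left nhdsWithin_le_nhds
      obtain ⟨s, hs1, hs2⟩ := ((ht.eventually (gt_mem_nhds hp)).and
        (Ioo_mem_nhdsGT one_pos)).exists
      have ic : IntervalIntegrable (fun r => r * rh f r0) volume 0 1 :=
        (by fun_prop : Continuous (fun r => r * rh f r0)).intervalIntegrable _ _
      have id : IntervalIntegrable (fun r => r * rh f r0 - r * rh f r) volume 0 1 := ic.sub hi
      have sub1 : Set.uIcc 0 s ⊆ Set.uIcc (0:ℝ) 1 := by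
        rw [Set.uIcc_of_le hs2.1.le, Set.uIcc_of_le zero_le_one]; exact Set.Icc_subset_Icc le_rfl hs2.2.le
      have sub2 : Set.uIcc s 1 ⊆ Set.uIcc (0:ℝ) 1 := by
        rw [Set.uIcc_of_le hs2.2.le, Set.uIcc_of_le zero_le_one]; exact Set.Icc_subset_Icc hs2.1.le le_rfl
      have i1 := id.mono_set sub1
      have i2 := id.mono_set sub2
      have p1 : 0 < ∫ r in (0:ℝ)..s, (r * rh f r0 - r * rh f r) := by
        refine intervalIntegral.intervalIntegral_pos_of_pos_on i1 (fun r hr => ?_) hs2.1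
        have := hb' r ⟨hr.1, hr.2.le.trans hs2.2.le⟩
        have h3 : C^2 * r^2 ≤ C^2 * s^2 := by
          have := hr.1; have := hr.2.le; gcongr
        have : 0 < r * (rh f r0 - rh f r) := mul_pos hr.1 (by linarith)
        linarith
      have p2 : 0 ≤ ∫ r in s..1, (r * rh f r0 - r * rh f r) := by
        refine intervalIntegral.integral_nonneg hs2.2.le fun r hr => ?_
        have h0 : 0 < r := hs2.1.trans_le hr.1
        have := mul_le_mul_of_nonneg_left (hm r ⟨h0, hr.2⟩) h0.le
        linarith
      have p3 := intervalIntegral.integral_add_adjacent_intervals i1 i2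
      rw [intervalIntegral.integral_sub ic hi, intervalIntegral.integral_mul_const, integral_id] at p3
      norm_num at p3
      linarith
    have pp := Real.pi_pos
    have h2 : 1 < π * rh f r0 := by nlinarith
    rw [div_lt_div_iff₀ (by positivity) (by positivity)]
    nlinarith [pow_pos hε 2]
  · have := hm r hr
    gcongr

theorem q_neg (h : Sol n ε M f K) (hn : 2 ≤ n) (hε : 0 < ε) {Ω : ℝ} (hΩ : 0 ≤ Ω)
    (hΩ' : Ω ≤ 1 / (Real.sqrt π * ε))
    (hint : IntegrableOn (fun r => r * rh f r) (Set.Ioo 0 1))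
    (hnorm : 2 * π * ∫ r in (0:ℝ)..1, r * rh f r = 1)
    (hq : IntegrableOn (fun r => r * qr n ε Ω M f K r) (Set.Ioo 0 1)) :
    ∫ r in (0:ℝ)..1, r * qr n ε Ω M f K r < 0 := by
  obtain ⟨hM1, hM2⟩ := M_bound h hε hint hnorm
  have pp := Real.pi_pos
  -- algebra
  have hA : 0 < M + (n:ℝ)^2 - 4 * n * Ω := by
    have s1 : Real.sqrt π ^ 2 = π := Real.sq_sqrt pp.le
    have s2 : 0 < Real.sqrt π := Real.sqrt_pos.2 pp
    have e1 : 2 / (π * ε^2) = 2 * (1 / (Real.sqrt π * ε))^2 := by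
      rw [div_pow, mul_pow, s1]; ring
    rw [e1] at hM1
    have : n * Ω ≤ n * (1 / (Real.sqrt π * ε)) := by gcongr
    nlinarith [sq_nonneg ((n:ℝ) - 1 / (Real.sqrt π * ε))]
  have hW : ∀ r ∈ Set.Ioc (0:ℝ) 1, 4 * WW ε M f r + 4 * n * Ω * rh f r ≤ -(M + (n:ℝ)^2 - 4 * n * Ω) * rh f r := by
    intro r hr
    have h1 := hM2 r hr
    have h2 := rh_nn f r
    rw [WW_eq, VV_eq]
    nlinarith
  obtain ⟨C, hC, hb⟩ := bds h hn
  have crh : ContinuousOn (fun r => rh f r / r^3) (Set.Ioo 0 1) := fun r hr =>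
    ((rh_cont h hr.1).div (continuous_pow 3).continuousAt (pow_ne_zero 3 hr.1.ne')).continuousWithinAt
  have brh : ∀ r ∈ Set.Ioo (0:ℝ) 1, |rh f r / r^3| ≤ C := fun r hr => by
    have := hr.1
    rw [abs_of_nonneg (div_nonneg (rh_nn f r) (by positivity)), div_le_iff₀ (by positivity)]
    refine (hb r hr).1.trans ?_
    have : r^4 ≤ r^3 := pow_le_pow_of_le_one hr.1.le hr.2.le (by omega)
    gcongr
  have irh : IntegrableOn (fun r => rh f r / r^3) (Set.Ioo 0 1) := bdd_int crh brh
  have iW : IntegrableOn (fun r => (8 * WW ε M f r + 8 * n * Ω * rh f r) / r^3) (Set.Ioo 0 1) := by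
    have e : (fun r => (8 * WW ε M f r + 8 * n * Ω * rh f r) / r^3) =
        fun r => (rh f r / r^3) * (2 * (VV ε M f r - M) + 8 * n * Ω) := by
      funext r; rw [WW_eq]; ring
    rw [e]
    refine bdd_int (C := C * (2 * (C + |M|) + 8 * n * Ω)) ?_ ?_
    · refine crh.mul fun r hr => ?_
      have := (VV_deriv h hr.1).continuousAt
      exact (((this.sub continuousAt_const).const_mul 2).add continuousAt_const).continuousWithinAt
    · intro r hr
      rw [abs_mul]
      refine mul_le_mul (brh r hr) ?_ (abs_nonneg _) hC
      have h5 := (hb r hr).2.2.2.2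
      have h6 : |VV ε M f r - M| ≤ C + |M| := (abs_sub _ _).trans (by linarith)
      refine (abs_add_le _ _).trans ?_
      rw [abs_mul, abs_of_nonneg (by positivity : (0:ℝ) ≤ 8 * n * Ω)]
      norm_num
      exact h6
  have ftc := intervalIntegral.integral_eq_sub_of_hasDerivAt_of_tendsto zero_lt_one
    (fun r hr => TT_deriv h hε Ω hr) ((ii_iff.2 hq).sub (ii_iff.2 iW)) (TT_zero h hn Ω) (TT_one h Ω)
  rw [intervalIntegral.integral_sub (ii_iff.2 hq) (ii_iff.2 iW)] at ftc
  have hT1 : -4 * (n:ℝ)^2 * rh f 1 + 4 * WW ε M f 1 + 4 * n * Ω * rh f 1 ≤ 0 := by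
    have := hW 1 ⟨one_pos, le_rfl⟩
    have h1 := rh_nn f 1
    have : 0 ≤ (n:ℝ)^2 * rh f 1 := by positivity
    have : 0 ≤ (M + (n:ℝ)^2 - 4 * n * Ω) * rh f 1 := by positivity
    linarith
  have e2 : ∫ r in (0:ℝ)..1, (8 * WW ε M f r + 8 * n * Ω * rh f r) / r^3 ≤
      ∫ r in (0:ℝ)..1, (-2 * (M + (n:ℝ)^2 - 4 * n * Ω)) * (r * rh f r) := by
    refine intervalIntegral.integral_mono_on_of_le_Ioo zero_le_one (ii_iff.2 iW) ((ii_iff.2 hint).const_mul _) fun r hr => ?_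
    have h1 := hW r ⟨hr.1, hr.2.le⟩
    have h2 := rh_nn f r
    have h0 := hr.1
    rw [div_le_iff₀ (by positivity)]
    have h4 : r * r^3 ≤ 1 := by
      have : r * r^3 = r^4 := by ring
      rw [this]; exact pow_le_one₀ hr.1.le hr.2.le
    have h5 : 0 ≤ (M + (n:ℝ)^2 - 4 * n * Ω) * rh f r := by positivity
    nlinarith
  rw [intervalIntegral.integral_const_mul] at e2
  have hpos : 0 < ∫ r in (0:ℝ)..1, r * rh f r := by
    by_contra! hc
    nlinarith
  have := mul_pos hA hpos
  linarith

end

open MeasureTheory Real Filter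

noncomputable section

/-- the combination `α Z + β conj Z` -/
def cmb (α β Z : ℂ) : ℂ := α * Z + β * starRingEnd ℂ Z

/-- the sum of two modes -/
def mm (n : ℕ) (a b : ℝ → ℂ) (x : Pt) : ℂ := md a (n+2) x + md b (n-2) x

/-- the squared angular factor -/
def ZZ (x : Pt) : ℂ := (zc x / (‖x‖:ℂ))^2

lemma grad_alg (F1 F2 G1 G2 : ℂ) {p q r : ℝ} (hr : 0 < r) (h : p^2 + q^2 = r^2) :
    rip (F1 * (p / r) - Complex.I * G1 * (q / r^2)) (F2 * (p / r) - Complex.I * G2 * (q / r^2))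
    + rip (F1 * (q / r) + Complex.I * G1 * (p / r^2)) (F2 * (q / r) + Complex.I * G2 * (p / r^2))
    = rip F1 F2 + rip G1 G2 / r^2 := by
  have e1 : ∀ p : ℝ, ∀ z : ℂ, z * ((p:ℂ) / r) = ((p/r : ℝ):ℂ) * z := fun p z => by push_cast; ring
  have e2 : ∀ p : ℝ, ∀ z : ℂ, Complex.I * z * ((p:ℂ) / r^2) = ((p/r^2 : ℝ):ℂ) * (Complex.I * z) := fun p z => by push_cast; ring
  simp only [e1, e2, rip_eq, Complex.mul_re, Complex.mul_im, Complex.add_re, Complex.add_im, Complex.sub_re,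
    Complex.sub_im, Complex.ofReal_re, Complex.ofReal_im, Complex.I_re, Complex.I_im]
  have hr' := hr.ne'
  have hq : q^2 = r^2 - p^2 := by linarith
  field_simp
  ring_nf
  have hq4 : q^4 = (r^2-p^2)^2 := by rw [← hq]; ring
  simp only [hq]
  ring

lemma pw {n : ℕ} (hn : 2 ≤ n) {x : Pt} (hx : x ≠ 0) {f a b : ℝ → ℂ} {f' a' b' : ℂ}
    (hf : HasDerivAt f f' ‖x‖) (ha : HasDerivAt a a' ‖x‖) (hb : HasDerivAt b b' ‖x‖) :
    rip (md f n x) (mm n a b x) = rip (f ‖x‖) (cmb (a ‖x‖) (b ‖x‖) (ZZ x)) ∧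
    ‖mm n a b x‖^2 = rip (cmb (a ‖x‖) (b ‖x‖) (ZZ x)) (cmb (a ‖x‖) (b ‖x‖) (ZZ x)) ∧
    gG (mm n a b) x = rip (cmb a' b' (ZZ x)) (cmb a' b' (ZZ x)) +
      rip (cmb ((n+2) * a ‖x‖) ((n-2) * b ‖x‖) (ZZ x)) (cmb ((n+2) * a ‖x‖) ((n-2) * b ‖x‖) (ZZ x)) / ‖x‖^2 ∧
    gB (md f n) (mm n a b) x = rip f' (cmb a' b' (ZZ x)) +
      rip (n * f ‖x‖) (cmb ((n+2) * a ‖x‖) ((n-2) * b ‖x‖) (ZZ x)) / ‖x‖^2 ∧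
    gL (md f n) (mm n a b) x = rip (f ‖x‖) (cmb ((n+2) * a ‖x‖) ((n-2) * b ‖x‖) (ZZ x)) ∧
    gL (mm n a b) (md f n) x = rip (cmb (a ‖x‖) (b ‖x‖) (ZZ x)) (n * f ‖x‖) ∧
    gL (mm n a b) (mm n a b) x = rip (cmb (a ‖x‖) (b ‖x‖) (ZZ x)) (cmb ((n+2) * a ‖x‖) ((n-2) * b ‖x‖) (ZZ x)) := by
  obtain ⟨-, f1, f2⟩ := md_hasFDerivAt (m := n) hx hf
  obtain ⟨da, a1, a2⟩ := md_hasFDerivAt (m := n+2) hx ha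
  obtain ⟨db, b1, b2⟩ := md_hasFDerivAt (m := n-2) hx hb
  have La := md_ang (m := n+2) hx ha
  have Lb := md_ang (m := n-2) hx hb
  have Lf := md_ang (m := n) hx hf
  have hr : 0 < ‖x‖ := norm_pos_iff.2 hx
  have hsq : (x 0)^2 + (x 1)^2 = ‖x‖^2 := by rw [norm_sq_pt]
  have w1 : pd1 (mm n a b) x = pd1 (md a (n+2)) x + pd1 (md b (n-2)) x := by
    rw [pd1]; erw [(da.hasFDerivAt.add db.hasFDerivAt).fderiv]; simp [pd1]
  have w2 : pd2 (mm n a b) x = pd2 (md a (n+2)) x + pd2 (md b (n-2)) x := by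
    rw [pd2]; erw [(da.hasFDerivAt.add db.hasFDerivAt).fderiv]; simp [pd2]
  have Lw : angMom (mm n a b) x = angMom (md a (n+2)) x + angMom (md b (n-2)) x := by
    simp only [angMom, w1, w2]; ring
  have hen := norm_evm hx n
  have he1 := norm_evm hx 1
  rw [pow_one] at he1
  set e := zc x / (‖x‖:ℂ) with he
  have hZ : ZZ x = e^2 := rfl
  have hee : e * starRingEnd ℂ e = 1 := by
    rw [Complex.mul_conj, Complex.normSq_eq_norm_sq, he1]; simp
  have p1 : e^(n+2) = ZZ x * e^n := by rw [hZ, pow_add]; ring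
  have p2 : e^(n-2) = starRingEnd ℂ (ZZ x) * e^n := by
    obtain ⟨k, rfl⟩ := Nat.exists_eq_add_of_le hn
    rw [hZ, map_pow, Nat.add_sub_cancel_left, pow_add, ← mul_assoc, ← mul_pow, mul_comm (starRingEnd ℂ e), hee]
    simp
  have c2 : ((n-2:ℕ):ℂ) = (n:ℂ) - 2 := by push_cast [Nat.cast_sub hn]; ring
  have c1 : ((n+2:ℕ):ℂ) = (n:ℂ) + 2 := by push_cast; ring
  have W1 : pd1 (mm n a b) x = (cmb a' b' (ZZ x) * (x 0 / ‖x‖) - Complex.I * cmb ((n+2) * a ‖x‖) ((n-2) * b ‖x‖) (ZZ x) * (x 1 / ‖x‖^2)) * e^n := by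
    rw [w1, a1, b1, p1, p2, c1, c2, cmb, cmb]; ring
  have W2 : pd2 (mm n a b) x = (cmb a' b' (ZZ x) * (x 1 / ‖x‖) + Complex.I * cmb ((n+2) * a ‖x‖) ((n-2) * b ‖x‖) (ZZ x) * (x 0 / ‖x‖^2)) * e^n := by
    rw [w2, a2, b2, p1, p2, c1, c2, cmb, cmb]; ring
  have W0 : mm n a b x = cmb (a ‖x‖) (b ‖x‖) (ZZ x) * e^n := by
    rw [mm, md, md, ← he, p1, p2, cmb]; ring
  have WL : angMom (mm n a b) x = cmb ((n+2) * a ‖x‖) ((n-2) * b ‖x‖) (ZZ x) * e^n := by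
    rw [Lw, La, Lb, md, md, ← he, p1, p2, c1, c2, cmb]; ring
  have F0 : md f n x = f ‖x‖ * e^n := rfl
  have FL : angMom (md f n) x = (n * f ‖x‖) * e^n := by rw [Lf, F0]; ring
  have F1 : pd1 (md f n) x = (f' * (x 0 / ‖x‖) - Complex.I * (n * f ‖x‖) * (x 1 / ‖x‖^2)) * e^n := by
    rw [f1]; ring
  have F2 : pd2 (md f n) x = (f' * (x 1 / ‖x‖) + Complex.I * (n * f ‖x‖) * (x 0 / ‖x‖^2)) * e^n := by
    rw [f2]; ring
  refine ⟨?_, ?_, ?_, ?_, ?_, ?_, ?_⟩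
  · rw [F0, W0, rip_rot hen]
  · rw [← rip_self, W0, rip_rot hen]
  · rw [gG, ← rip_self, ← rip_self, W1, W2, rip_rot hen, rip_rot hen]
    exact grad_alg _ _ _ _ hr hsq
  · rw [gB, F1, F2, W1, W2, rip_rot hen, rip_rot hen]
    exact grad_alg _ _ _ _ hr hsq
  · rw [gL, F0, WL, rip_rot hen]
  · rw [gL, W0, FL, rip_rot hen]
  · rw [gL, W0, WL, rip_rot hen]

lemma cmb_neg (α β Z : ℂ) : cmb α β (-Z) = - cmb α β Z := by
  simp only [cmb, map_neg]; ring

lemma rip_neg (a b : ℂ) : rip a (-b) = - rip a b := by simp [rip]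
lemma rip_neg' (a b : ℂ) : rip (-a) b = - rip a b := by simp [rip]

lemma cmb_avg (α β γ δ Z : ℂ) (hZ : ‖Z‖ = 1) :
    rip (cmb α β Z) (cmb γ δ Z) + rip (cmb α β (Complex.I * Z)) (cmb γ δ (Complex.I * Z)) =
    2 * (rip α γ + rip β δ) := by
  have h : Z.re * Z.re + Z.im * Z.im = 1 := by rw [← nsq, hZ]; norm_num
  simp only [cmb, rip_eq, Complex.mul_re, Complex.mul_im, Complex.add_re, Complex.add_im, Complex.conj_re,
    Complex.conj_im, Complex.I_re, Complex.I_im]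
  linear_combination (2 * (α.re * γ.re + α.im * γ.im + (β.re * δ.re + β.im * δ.im))) * h

lemma cmb_avg2 (f α β Z : ℂ) (hZ : ‖Z‖ = 1) :
    rip f (cmb α β Z)^2 + rip f (cmb α β (Complex.I * Z))^2 =
    ‖f‖^2 * (‖α‖^2 + ‖β‖^2) + 2 * ((starRingEnd ℂ f)^2 * (α * β)).re := by
  have h : Z.re * Z.re + Z.im * Z.im = 1 := by rw [← nsq, hZ]; norm_num
  simp only [cmb, nsq, pow_two (starRingEnd ℂ f), rip_eq, Complex.mul_re, Complex.mul_im, Complex.add_re, Complex.add_im, Complex.conj_re,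
    Complex.conj_im, Complex.I_re, Complex.I_im]
  obtain ⟨f1, f2⟩ := f
  obtain ⟨a1, a2⟩ := α
  obtain ⟨b1, b2⟩ := β
  obtain ⟨z1, z2⟩ := Z
  simp only at *
  linear_combination ((f1*f1+f2*f2)*((a1*a1+a2*a2)+(b1*b1+b2*b2)) + 2 * ((f1*f1-f2*f2)*(a1*b1-a2*b2) + 2*f1*f2*(a1*b2+a2*b1))) * h

end

open MeasureTheory Real Filter

noncomputable section

lemma nice_add {w1 w2 : Pt → ℂ} (h1 : Nice w1) (h2 : Nice w2) : Nice (fun x => 1 * w1 x + 1 * w2 x) := by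
  obtain ⟨d1, C1, hC1, b1⟩ := h1
  obtain ⟨d2, C2, hC2, b2⟩ := h2
  refine ⟨(d1.const_mul 1).add (d2.const_mul 1), C1 + C2, by positivity, fun x hx => ?_⟩
  obtain ⟨p1, p2⟩ := pd_lin d1 d2 1 1 hx
  obtain ⟨x1, x2, x3⟩ := b1 x hx
  obtain ⟨y1, y2, y3⟩ := b2 x hx
  rw [p1, p2]
  simp only [one_mul]
  exact ⟨(norm_add_le _ _).trans (by linarith), (norm_add_le _ _).trans (by linarith),
    (norm_add_le _ _).trans (by linarith)⟩

lemma nice_smooth {w : Pt → ℂ} (h : ContDiff ℝ 1 w) : Nice w := by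
  have hc := h.continuous
  have hf : Continuous (fderiv ℝ w) := h.continuous_fderiv (by norm_num)
  have c1 : Continuous (pd1 w) := hf.clm_apply continuous_const
  have c2 : Continuous (pd2 w) := hf.clm_apply continuous_const
  have K := isCompact_closedBall (0:Pt) 1
  obtain ⟨C0, h0⟩ := K.exists_bound_of_continuousOn hc.continuousOn
  obtain ⟨C1, h1⟩ := K.exists_bound_of_continuousOn c1.continuousOn
  obtain ⟨C2, h2⟩ := K.exists_bound_of_continuousOn c2.continuousOn
  refine ⟨(h.differentiable (by norm_num)).differentiableOn, |C0| + |C1| + |C2|, by positivity, fun x hx => ?_⟩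
  have hx' : x ∈ Metric.closedBall (0:Pt) 1 := Metric.ball_subset_closedBall hx
  have g0 := abs_nonneg C0
  have g1 := abs_nonneg C1
  have g2 := abs_nonneg C2
  exact ⟨(h0 x hx').trans (by linarith [le_abs_self C0]), (h1 x hx').trans (by linarith [le_abs_self C1]),
    (h2 x hx').trans (by linarith [le_abs_self C2])⟩

lemma nice_zc (c : ℂ) (k : ℕ) : Nice (fun x => c * zc x ^ k) := by
  refine nice_smooth ?_
  have : zc = fun x => zcL x := by ext x; rw [zcL_apply]
  rw [this]
  exact contDiff_const.mul (zcL.contDiff.pow k)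

variable {n : ℕ} {ε M : ℝ} {f K : ℝ → ℂ}

/-- corrected `b` -/
def bt (n : ℕ) (f K : ℝ → ℂ) (c : ℂ) (r : ℝ) : ℂ := (vv n f K r - c * (r:ℂ)^n) / (r:ℂ)^2

lemma aa_deriv (h : Sol n ε M f K) {r : ℝ} (hr : r ∈ Set.Ioo (0:ℝ) 1) :
    HasDerivAt (aa n f K) (aa' n ε M f K r) r := by
  have h0 : (r:ℂ) ≠ 0 := by exact_mod_cast hr.1.ne'
  refine ((u_deriv h hr).div (pow_deriv 2 hr.1) (pow_ne_zero _ h0)).congr_deriv ?_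
  rw [aa']; push_cast; field_simp; ring

lemma bt_deriv (h : Sol n ε M f K) (c : ℂ) {r : ℝ} (hr : r ∈ Set.Ioo (0:ℝ) 1) :
    HasDerivAt (bt n f K c) (((n:ℂ)-2) * (vv n f K r - c * (r:ℂ)^n) / r^3 + VV ε M f r * f r / r) r := by
  have h0 : (r:ℂ) ≠ 0 := by exact_mod_cast hr.1.ne'
  refine (((v_deriv h hr).sub ((pow_deriv n hr.1).const_mul c)).div (pow_deriv 2 hr.1) (pow_ne_zero _ h0)).congr_deriv ?_
  simp only [Pi.sub_apply]
  push_cast; field_simp; ring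

lemma bb_deriv (h : Sol n ε M f K) {r : ℝ} (hr : r ∈ Set.Ioo (0:ℝ) 1) :
    HasDerivAt (bb n f K) (bb' n ε M f K r) r := by
  have e : bb n f K = bt n f K 0 := by funext r; simp [bb, bt]
  rw [e]
  refine (bt_deriv h 0 hr).congr_deriv ?_
  simp [bb']

lemma ab_bound {C r : ℝ} {y g : ℂ} {s : ℂ} {V : ℝ} (hr : r ∈ Set.Ioo (0:ℝ) 1) (hn : 2 ≤ n) (hC : 0 ≤ C)
    (hy : ‖y‖ ≤ C * r^(n+2)) (hg : ‖g‖ ≤ C * r^n) (hV : |V| ≤ C) (hs : ‖s‖ ≤ n + 2) :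
    ‖y / (r:ℂ)^2‖ ≤ (C + (n+2) * C + C * C) * r^2 ∧
      ‖s * y / (r:ℂ)^3 + V * g / r‖ ≤ C + (n+2) * C + C * C := by
  have h0 := hr.1
  have nr : ‖(r:ℂ)‖ = r := by rw [Complex.norm_real, Real.norm_of_nonneg h0.le]
  have y4 : ‖y‖ ≤ C * r^4 := hy.trans (by
    have : r^(n+2) ≤ r^4 := pow_le_pow_of_le_one hr.1.le hr.2.le (by omega)
    gcongr)
  have y3 : ‖y‖ ≤ C * r^3 := hy.trans (by
    have : r^(n+2) ≤ r^3 := pow_le_pow_of_le_one hr.1.le hr.2.le (by omega)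
    gcongr)
  have g1 : ‖g‖ ≤ C * r := hg.trans (by
    have : r^n ≤ r^1 := pow_le_pow_of_le_one hr.1.le hr.2.le (by omega)
    rw [pow_one] at this
    gcongr)
  constructor
  · rw [norm_div, norm_pow, nr, div_le_iff₀ (by positivity)]
    refine y4.trans ?_
    have : 0 ≤ ((n+2) * C + C * C) * r^4 := by positivity
    nlinarith
  · refine (norm_add_le _ _).trans ?_
    rw [norm_div, norm_mul, norm_div, norm_mul, norm_pow, nr, Complex.norm_real]
    have t1 : ‖s‖ * ‖y‖ / r^3 ≤ (n+2) * C := by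
      rw [div_le_iff₀ (by positivity), mul_assoc]
      gcongr
    have t2 : ‖V‖ * ‖g‖ / r ≤ C * C := by
      rw [div_le_iff₀ h0, mul_assoc]
      exact mul_le_mul hV g1 (norm_nonneg _) hC
    linarith

/-- existence of the good perturbation -/
lemma exists_w (h : Sol n ε M f K) (hn : 2 ≤ n) :
    ∃ w : Pt → ℂ, Nice w ∧ ∀ x ∈ B1, x ≠ 0 → w x = mm n (aa n f K) (bb n f K) x := by
  obtain ⟨C, c, hC, hb⟩ := reg h (by omega)
  have n2 : (2:ℝ) ≤ n := by exact_mod_cast hn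
  have Na : Nice (md (aa n f K) (n+2)) := by
    refine (nice_md (F' := aa' n ε M f K) (C := C + (n+2) * C + C * C) (by positivity) (by simp [aa]) fun r hr => ?_).1
    obtain ⟨h1, h2, h3, -, h5, h6⟩ := hb r hr
    have := ab_bound (s := -((n:ℂ)+2)) hr hn hC h3 h1 h6 (by
      rw [norm_neg]; refine (norm_add_le _ _).trans ?_; simp)
    exact ⟨aa_deriv h hr, this.1, this.2⟩
  have Nb : Nice (md (bt n f K c) (n-2)) := by
    refine (nice_md (F' := fun r : ℝ => ((n:ℂ)-2) * (vv n f K r - c * (r:ℂ)^n) / (r:ℂ)^3 + VV ε M f r * f r / r)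
      (C := C + (n+2) * C + C * C) (by positivity) (by simp [bt]) fun r hr => ?_).1
    obtain ⟨h1, h2, h3, -, h5, h6⟩ := hb r hr
    have := ab_bound (s := ((n:ℂ)-2)) hr hn hC h5 h1 h6 (by
      refine (norm_sub_le _ _).trans ?_; simp)
    exact ⟨bt_deriv h c hr, this.1, this.2⟩
  refine ⟨_, nice_add (nice_zc c (n-2)) (nice_add Nb Na), fun x hx h0 => ?_⟩
  have hr : (‖x‖:ℂ) ≠ 0 := by exact_mod_cast norm_ne_zero_iff.2 h0
  obtain ⟨k, rfl⟩ := Nat.exists_eq_add_of_le hn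
  simp only [mm, md, bt, bb, Nat.add_sub_cancel_left, div_pow]
  field_simp
  ring

lemma intble_rot (R : Pt ≃ₗᵢ[ℝ] Pt) {F : Pt → ℝ} (h : IntegrableOn F B1) : IntegrableOn (fun x => F (R x)) B1 := by
  have e : R ⁻¹' B1 = B1 := by
    ext x; simp [B1]
  have := (R.measurePreserving.integrableOn_comp_preimage R.toHomeomorph.measurableEmbedding (f := F) (s := B1)).2 h
  rw [e] at this
  exact this

lemma ZZ_rot {R : Pt ≃ₗᵢ[ℝ] Pt} (hR : ∀ x, zc (R x)^2 = Complex.I * zc x^2) (x : Pt) :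
    ZZ (R x) = Complex.I * ZZ x := by
  rw [ZZ, ZZ, div_pow, div_pow, hR, R.norm_map]; ring

lemma norm_ZZ {x : Pt} (hx : x ≠ 0) : ‖ZZ x‖ = 1 := norm_evm hx 2

lemma lin_zero {R : Pt ≃ₗᵢ[ℝ] Pt} {F : Pt → ℝ} {G : ℝ → ℂ → ℝ}
    (h : ∀ x ∈ B1, x ≠ 0 → F x = G ‖x‖ (ZZ x)) (hR : ∀ x, zc (R x)^2 = Complex.I * zc x^2)
    (hG : ∀ r ∈ Set.Ioo (0:ℝ) 1, ∀ Z, G r (-Z) = - G r Z) : ∫ x in B1, F x = 0 := by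
  have h1 : ∫ x in B1, F (R (R x)) = ∫ x in B1, F x := by
    rw [integral_rot R (fun x => F (R x)), integral_rot R F]
  have h2 : ∫ x in B1, F (R (R x)) = ∫ x in B1, - F x := by
    refine integral_congr_ae ?_
    filter_upwards [ae_ne0, ae_restrict_mem measB1] with x hx0 hx
    have m : R (R x) ∈ B1 := by simpa [B1] using hx
    have m0 : R (R x) ≠ 0 := by simpa using hx0
    rw [h _ m m0, h x hx hx0, ZZ_rot hR, ZZ_rot hR, R.norm_map, R.norm_map, ← hG _ (nrm_mem hx hx0), ← mul_assoc, Complex.I_mul_I]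
    simp
  rw [integral_neg] at h2
  linarith

lemma quad_avg {R : Pt ≃ₗᵢ[ℝ] Pt} {F : Pt → ℝ} {G : ℝ → ℂ → ℝ} {q : ℝ → ℝ}
    (hF : IntegrableOn F B1)
    (h : ∀ x ∈ B1, x ≠ 0 → F x = G ‖x‖ (ZZ x)) (hR : ∀ x, zc (R x)^2 = Complex.I * zc x^2)
    (hG : ∀ r ∈ Set.Ioo (0:ℝ) 1, ∀ Z, ‖Z‖ = 1 → G r Z + G r (Complex.I * Z) = 2 * q r) :
    ∫ x in B1, F x = 2 * π * ∫ r in (0:ℝ)..1, r * q r ∧ IntegrableOn (fun r => r * q r) (Set.Ioo 0 1) := by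
  have key : ∀ x ∈ B1, x ≠ 0 → 1/2 * (F x + F (R x)) = q ‖x‖ := by
    intro x hx hx0
    have m : R x ∈ B1 := by simpa [B1] using hx
    have m0 : R x ≠ 0 := by simpa using hx0
    rw [h _ m m0, h x hx hx0, ZZ_rot hR, R.norm_map, hG _ (nrm_mem hx hx0) _ (norm_ZZ hx0)]
    ring
  have hFR := intble_rot R hF
  have hI : IntegrableOn (fun x => 1/2 * (F x + F (R x))) B1 := (hF.add hFR).const_mul _
  refine ⟨?_, (rad_intble (φ := q) key).1 hI⟩
  rw [← rad_int (φ := q) key, integral_const_mul, integral_add hF hFR, integral_rot R F]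
  ring

end

open MeasureTheory Real Filter

noncomputable section

lemma G_avg {n : ℕ} {ε M : ℝ} {f K : ℝ → ℂ} (Ω μ : ℝ) (hM : M = μ + n * Ω) (r : ℝ) (Z : ℂ) (hZ : ‖Z‖ = 1)
    (G : ℂ → ℝ) (hG : ∀ Z, G Z =
      (rip (cmb (aa' n ε M f K r) (bb' n ε M f K r) Z) (cmb (aa' n ε M f K r) (bb' n ε M f K r) Z)
       + rip (cmb ((n+2) * aa n f K r) ((n-2) * bb n f K r) Z) (cmb ((n+2) * aa n f K r) ((n-2) * bb n f K r) Z) / r^2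
       - Ω * rip (cmb (aa n f K r) (bb n f K r) Z) (cmb ((n+2) * aa n f K r) ((n-2) * bb n f K r) Z))
      + (4 * rip (f r) (cmb (aa n f K r) (bb n f K r) Z)^2
        + 2 * ‖f r‖^2 * rip (cmb (aa n f K r) (bb n f K r) Z) (cmb (aa n f K r) (bb n f K r) Z)) / ε^2
      - μ * rip (cmb (aa n f K r) (bb n f K r) Z) (cmb (aa n f K r) (bb n f K r) Z)) :
    G Z + G (Complex.I * Z) = 2 * qr n ε Ω M f K r := by
  rw [hG, hG, qr]
  have e1 : (n:ℂ) + 2 = (((n:ℝ) + 2 : ℝ) : ℂ) := by push_cast; ring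
  have e2 : (n:ℂ) - 2 = (((n:ℝ) - 2 : ℝ) : ℂ) := by push_cast; ring
  have k1 := cmb_avg (aa' n ε M f K r) (bb' n ε M f K r) (aa' n ε M f K r) (bb' n ε M f K r) Z hZ
  have k2 := cmb_avg ((n+2) * aa n f K r) ((n-2) * bb n f K r) ((n+2) * aa n f K r) ((n-2) * bb n f K r) Z hZ
  have k3 := cmb_avg (aa n f K r) (bb n f K r) ((n+2) * aa n f K r) ((n-2) * bb n f K r) Z hZ
  have k4 := cmb_avg (aa n f K r) (bb n f K r) (aa n f K r) (bb n f K r) Z hZ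
  have k5 := cmb_avg2 (f r) (aa n f K r) (bb n f K r) Z hZ
  simp only [e1, e2, rip_smul, rip_smul', rip_self (aa' n ε M f K r), rip_self (bb' n ε M f K r),
    rip_self (aa n f K r), rip_self (bb n f K r)] at k1 k2 k3 k4 k5 ⊢
  rw [hM]
  rw [hM] at k1
  linear_combination k1 + k2 / r^2 - Ω * k3 + (4 * k5 + 2 * ‖f r‖^2 * k4) / ε^2 - μ * k4

end

theorem stmt3_aux (ε Ω : ℝ) (n : ℕ) (hε : 0 < ε) (hn : 2 ≤ n) (hΩ : 0 ≤ Ω)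
    (hΩ' : Ω ≤ 1 / (Real.sqrt π * ε)) (Ψ : Pt → ℂ) (hadm : gpAdm Ψ)
    (heig : ∀ x ∈ B1, angMom Ψ x = (n:ℂ) * Ψ x)
    (hmin : ∀ Φ : Pt → ℂ, gpAdm Φ → (∀ x ∈ B1, angMom Φ x = (n:ℂ) * Φ x) → gpEnergy ε Ω Ψ ≤ gpEnergy ε Ω Φ)
    (δ : ℝ) (hδ : 0 < δ) : ∃ Φ : Pt → ℂ, gpAdm Φ ∧
      √(∫ x in B1, (‖Ψ x - Φ x‖^2 + ‖pd1 (fun y => Ψ y - Φ y) x‖^2 + ‖pd2 (fun y => Ψ y - Φ y) x‖^2)) < δ ∧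
      gpEnergy ε Ω Φ < gpEnergy ε Ω Ψ := by
  have hn0 : n ≠ 0 := by omega
  have hd := hadm.1
  have hrep0 : ∀ x ∈ B1, x ≠ 0 → Ψ x = md (fun r => Ψ (r • e0)) n x := fun x hx h0 => repr_md hd heig hx h0
  have hfd : ∀ r ∈ Set.Ioo (0:ℝ) 1, DifferentiableAt ℝ (fun r => Ψ (r • e0)) r := fun r hr =>
    (f_deriv hd hr.1 hr.2).differentiableAt
  obtain ⟨-, C, η, hC, hη, hη1, hs⟩ := f_small hn0 hd heig
  obtain ⟨C', hC', hb⟩ := f_bound hfd hrep0 hadm hC hη hη1 hs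
  obtain ⟨f, K, hfe, hsol⟩ := get_sol ε Ω hn0 hfd hrep0 hadm heig hmin hC' hb
  set μ := gpEnergy ε Ω Ψ + (∫ x in B1, ‖Ψ x‖^4) / ε^2 with hμ
  set M := μ + n * Ω with hM
  have hrep : ∀ x ∈ B1, x ≠ 0 → Ψ x = md f n x := fun x hx h0 => by
    rw [hrep0 x hx h0, md, md, hfe _ (nrm_mem hx h0)]
  obtain ⟨w, hw, hwr⟩ := exists_w hsol hn
  obtain ⟨R, hR⟩ := exists_rot
  -- pointwise formulas
  have pt : ∀ x ∈ B1, x ≠ 0 → _ := fun x hx h0 =>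
    pw hn h0 (hsol.hf _ (nrm_mem hx h0).1) (aa_deriv hsol (nrm_mem hx h0)) (bb_deriv hsol (nrm_mem hx h0))
  have tG : ∀ x ∈ B1, x ≠ 0 → gG w x = gG (mm n (aa n f K) (bb n f K)) x := fun x hx h0 => by
    obtain ⟨h1, h2, -⟩ := pd_congr hwr hx h0
    rw [gG, gG, h1, h2]
  have tB : ∀ x ∈ B1, x ≠ 0 → gB Ψ w x = gB (md f n) (mm n (aa n f K) (bb n f K)) x := fun x hx h0 => by
    obtain ⟨h1, h2, -⟩ := pd_congr hwr hx h0
    obtain ⟨h3, h4, -⟩ := pd_congr hrep hx h0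
    rw [gB, gB, h1, h2, h3, h4]
  have tL1 : ∀ x ∈ B1, x ≠ 0 → gL Ψ w x = gL (md f n) (mm n (aa n f K) (bb n f K)) x := fun x hx h0 => by
    rw [gL, gL, (pd_congr hwr hx h0).2.2, hrep x hx h0]
  have tL2 : ∀ x ∈ B1, x ≠ 0 → gL w Ψ x = gL (mm n (aa n f K) (bb n f K)) (md f n) x := fun x hx h0 => by
    rw [gL, gL, (pd_congr hrep hx h0).2.2, hwr x hx h0]
  have tL3 : ∀ x ∈ B1, x ≠ 0 → gL w w x = gL (mm n (aa n f K) (bb n f K)) (mm n (aa n f K) (bb n f K)) x :=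
    fun x hx h0 => by rw [gL, gL, (pd_congr hwr hx h0).2.2, hwr x hx h0]
  have tn : ∀ x ∈ B1, x ≠ 0 → ‖Ψ x‖ = ‖f ‖x‖‖ := fun x hx h0 => by
    rw [hrep x hx h0, norm_md h0]
  -- first order terms
  have z1 : ∫ x in B1, rip (Ψ x) (w x) = 0 := by
    refine lin_zero (G := fun r Z => rip (f r) (cmb (aa n f K r) (bb n f K r) Z)) (fun x hx h0 => ?_) hR (fun r hr Z => ?_)
    · rw [hrep x hx h0, hwr x hx h0, (pt x hx h0).1]
    · simp only [cmb_neg, rip_neg]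
  have z2 : ∫ x in B1, dE1 Ω Ψ w x = 0 := by
    refine lin_zero (G := fun r Z =>
      2 * (rip (K r / r) (cmb (aa' n ε M f K r) (bb' n ε M f K r) Z) +
       rip (n * f r) (cmb ((n+2) * aa n f K r) ((n-2) * bb n f K r) Z) / r^2)
      - Ω * (rip (f r) (cmb ((n+2) * aa n f K r) ((n-2) * bb n f K r) Z)
        + rip (cmb (aa n f K r) (bb n f K r) Z) (n * f r))) (fun x hx h0 => ?_) hR (fun r hr Z => ?_)
    · obtain ⟨-, -, -, p4, p5, p6, -⟩ := pt x hx h0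
      rw [dE1, tB x hx h0, tL1 x hx h0, tL2 x hx h0, p4, p5, p6]
    · simp only [cmb_neg, rip_neg, rip_neg']; ring
  have z3 : ∫ x in B1, dF1 ε Ψ w x = 0 := by
    refine lin_zero (G := fun r Z => 4 * ‖f r‖^2 * rip (f r) (cmb (aa n f K r) (bb n f K r) Z) / ε^2)
      (fun x hx h0 => ?_) hR (fun r hr Z => ?_)
    · rw [dF1, tn x hx h0, hrep x hx h0, hwr x hx h0, (pt x hx h0).1]
    · simp only [cmb_neg, rip_neg]; ring
  -- second order term
  obtain ⟨j1, j2, j3, j4, j5, j6, j7, j8, j9, j10, j11, j12⟩ := int_cross hadm hw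
  have iE2 : IntegrableOn (dE2 Ω w) B1 := j6.sub (j7.const_mul Ω)
  have iF2 : IntegrableOn (dF2 ε Ψ w) B1 := by
    have := ((j9.const_mul 4).add (j10.const_mul 2)).div_const (ε^2)
    refine this.congr ?_
    filter_upwards with x
    simp only [dF2, Pi.add_apply]; ring
  have iQ : IntegrableOn (fun x => dE2 Ω w x + dF2 ε Ψ w x - μ * ‖w x‖^2) B1 :=
    (iE2.add iF2).sub (j2.const_mul μ)
  have hQ := quad_avg (q := qr n ε Ω M f K) (G := fun r Z =>
      (rip (cmb (aa' n ε M f K r) (bb' n ε M f K r) Z) (cmb (aa' n ε M f K r) (bb' n ε M f K r) Z)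
       + rip (cmb ((n+2) * aa n f K r) ((n-2) * bb n f K r) Z) (cmb ((n+2) * aa n f K r) ((n-2) * bb n f K r) Z) / r^2
       - Ω * rip (cmb (aa n f K r) (bb n f K r) Z) (cmb ((n+2) * aa n f K r) ((n-2) * bb n f K r) Z))
      + (4 * rip (f r) (cmb (aa n f K r) (bb n f K r) Z)^2
        + 2 * ‖f r‖^2 * rip (cmb (aa n f K r) (bb n f K r) Z) (cmb (aa n f K r) (bb n f K r) Z)) / ε^2
      - μ * rip (cmb (aa n f K r) (bb n f K r) Z) (cmb (aa n f K r) (bb n f K r) Z)) iQ (fun x hx h0 => by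
        obtain ⟨p1, p2, p3, p4, p5, p6, p7⟩ := pt x hx h0
        rw [dE2, dF2, tG x hx h0, tL3 x hx h0, tn x hx h0, hrep x hx h0, hwr x hx h0, p1, p2, p3, p7]) hR
      (fun r hr Z hZ => G_avg Ω μ hM r Z hZ _ (fun Z => rfl))
  -- normalization
  have hrho : ∀ x ∈ B1, x ≠ 0 → ‖Ψ x‖^2 = rh f ‖x‖ := fun x hx h0 => by
    rw [tn x hx h0, rh, rip_self]
  have hneg := q_neg hsol hn hε hΩ hΩ' ((rad_intble (φ := rh f) hrho).1 hadm.2.1)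
    ((rad_int (φ := rh f) hrho).symm.trans hadm.2.2.2.2.2) hQ.2
  have hQneg : (∫ x in B1, dE2 Ω w x) + (∫ x in B1, dF2 ε Ψ w x) - μ * (∫ x in B1, ‖w x‖^2) < 0 := by
    have e : ∫ x in B1, (dE2 Ω w x + dF2 ε Ψ w x - μ * ‖w x‖^2) =
        (∫ x in B1, dE2 Ω w x) + (∫ x in B1, dF2 ε Ψ w x) - μ * (∫ x in B1, ‖w x‖^2) := by
      have iS : IntegrableOn (fun x => dE2 Ω w x + dF2 ε Ψ w x) B1 := iE2.add iF2
      have iW : IntegrableOn (fun x => μ * ‖w x‖^2) B1 := j2.const_mul μ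
      rw [integral_sub iS iW, integral_add iE2 iF2, integral_const_mul]
    rw [← e, hQ.1]
    exact mul_neg_of_pos_of_neg (by positivity) hneg
  -- conclusion
  have hvl := fun t h => var_lemma ε Ω hadm hw t _ _ _ _ rfl rfl rfl h rfl
  have hds := dist_small hadm hw (∫ x in B1, rip (Ψ x) (w x)) (∫ x in B1, ‖w x‖ ^ 2) hδ
  rw [z1, z2, z3] at hvl
  rw [z1] at hds
  generalize (∫ x in B1, dE2 Ω w x) = B at *
  generalize (∫ x in B1, dF2 ε Ψ w x) = D at *
  generalize (∫ x in B1, dF3 ε Ψ w x) = F at *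
  generalize (∫ x in B1, ‖w x‖ ^ 4) / ε ^ 2 = G at *
  generalize (∫ x in B1, ‖Ψ x‖ ^ 4) / ε ^ 2 = E4 at *
  generalize (∫ x in B1, ‖w x‖ ^ 2) = n2 at *
  have hcont : ContinuousAt (fun t : ℝ => (B + D - μ * n2) + t * F + t^2 * (B * n2 + G - gpEnergy ε Ω Ψ * n2^2)) 0 := by
    fun_prop
  have ev1 : ∀ᶠ t in nhds (0:ℝ), (B + D - μ * n2) + t * F + t^2 * (B * n2 + G - gpEnergy ε Ω Ψ * n2^2) < 0 :=
    hcont.eventually (gt_mem_nhds (by simp; linarith))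
  obtain ⟨t, ⟨ht1, ht2, ht3⟩, ht0⟩ := (((ev1.and hds).filter_mono nhdsWithin_le_nhds).and
    (self_mem_nhdsWithin (a := (0:ℝ)) (s := Set.Ioi 0))).exists
  obtain ⟨v1, v2⟩ := hvl t ht2
  refine ⟨_, v1, ht3, ?_⟩
  have hN2 := pow_pos ht2 2
  refine lt_of_mul_lt_mul_right ?_ hN2.le
  rw [v2]
  have ht0' : (0:ℝ) < t := ht0
  have : t^2 * ((B + D - μ * n2) + t * F + t^2 * (B * n2 + G - gpEnergy ε Ω Ψ * n2^2)) < 0 :=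
    mul_neg_of_pos_of_neg (by positivity) ht1
  rw [hμ] at this
  nlinarith [this]

end

theorem stmt3 (ε Ω : ℝ) (n : ℕ) (hε : 0 < ε) (hn : 2 ≤ n)
    (hΩ : 0 ≤ Ω) (hΩ' : Ω ≤ 1 / (Real.sqrt π * ε))
    (Ψn : Pt → ℂ)
    (hadm : gpAdm Ψn)
    (heig : ∀ x ∈ B1, angMom Ψn x = (n : ℂ) * Ψn x)
    (hmin : ∀ Φ : Pt → ℂ, gpAdm Φ → (∀ x ∈ B1, angMom Φ x = (n : ℂ) * Φ x) →
      gpEnergy ε Ω Ψn ≤ gpEnergy ε Ω Φ) :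
    ∀ δ : ℝ, 0 < δ → ∃ Φ : Pt → ℂ, gpAdm Φ ∧
      Real.sqrt (∫ x in B1, (‖Ψn x - Φ x‖ ^ 2 +
        ‖pd1 (fun y => Ψn y - Φ y) x‖ ^ 2 + ‖pd2 (fun y => Ψn y - Φ y) x‖ ^ 2)) < δ ∧
      gpEnergy ε Ω Φ < gpEnergy ε Ω Ψn := by
  intro δ hδ
  exact stmt3_aux ε Ω n hε hn hΩ hΩ' Ψn hadm heig hmin δ hδ
end

section
/- Define, for ε > 0, E₁(ε) as the infimum of ∫_{B₁}(|∇ξ|² + ξ²/|x|² + ξ⁴/ε²)dx over real-valued radial ξ ∈ H¹(B₁) with ‖ξ‖_{L²(B₁)} = 1. Then for ε sufficiently small, E₁(ε) ≤ 1/(πε²) + log(1/ε²) + 1. (The bound is obtained from the normalized trial function which equals c_ε r/ε for 0 ≤ r ≤ ε and c_ε for ε ≤ r ≤ 1.) -/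
open MeasureTheory Real Filter

noncomputable section

/-- First partial derivative of a real-valued function. -/
def pd1R (ξ : Pt → ℝ) (x : Pt) : ℝ := fderiv ℝ ξ x (EuclideanSpace.single 0 1)

/-- Second partial derivative of a real-valued function. -/
def pd2R (ξ : Pt → ℝ) (x : Pt) : ℝ := fderiv ℝ ξ x (EuclideanSpace.single 1 1)

/-- The energy density `|∇ξ|² + ξ²/|x|² + ξ⁴/ε²`. -/
def e1Density (ε : ℝ) (ξ : Pt → ℝ) (x : Pt) : ℝ :=
  (pd1R ξ x) ^ 2 + (pd2R ξ x) ^ 2 + (ξ x) ^ 2 / ‖x‖ ^ 2 + (ξ x) ^ 4 / ε ^ 2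

/-- `E₁(ε)`: infimum of the energy over normalized real radial functions. -/
def E1 (ε : ℝ) : ℝ :=
  sInf {E | ∃ ξ : Pt → ℝ, (∀ x y : Pt, ‖x‖ = ‖y‖ → ξ x = ξ y) ∧
    DifferentiableOn ℝ ξ B1 ∧
    IntegrableOn (fun x => (ξ x) ^ 2) B1 ∧
    IntegrableOn (e1Density ε ξ) B1 ∧
    (∫ x in B1, (ξ x) ^ 2) = 1 ∧
    E = ∫ x in B1, e1Density ε ξ x}


lemma radial_int (g H : ℝ → ℝ) (hg : Continuous g)
    (hH : ∀ y : ℝ, HasDerivAt H (y * g y) y) :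
    IntegrableOn (fun x : Pt => g ‖x‖) B1 ∧
    ∫ x in B1, g ‖x‖ = 2 * π * (H 1 - H 0) := by
  constructor
  · have : Continuous (fun x : Pt => g ‖x‖) := hg.comp continuous_norm
    exact (this.continuousOn.integrableOn_compact (isCompact_closedBall (0 : Pt) 1)).mono_set
      Metric.ball_subset_closedBall
  · have h1 : ∫ x in B1, g ‖x‖ = ∫ x : Pt, (Set.Iio (1:ℝ)).indicator g ‖x‖ := by
      rw [← integral_indicator (by exact measurableSet_ball)]
      congr 1
      ext x
      by_cases h : ‖x‖ < 1 <;> simp [B1, Set.indicator, h]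
    rw [h1, integral_fun_norm_addHaar]
    have h2 : ∫ y in Set.Ioi (0:ℝ), y ^ (Module.finrank ℝ Pt - 1) • (Set.Iio (1:ℝ)).indicator g y
        = H 1 - H 0 := by
      have h3 : (fun y : ℝ => y ^ (Module.finrank ℝ Pt - 1) • (Set.Iio (1:ℝ)).indicator g y)
          = (Set.Iio (1:ℝ)).indicator (fun y => y * g y) := by
        ext y
        by_cases h : y < 1 <;> simp [Set.indicator, h]
      rw [h3, setIntegral_indicator measurableSet_Iio, Set.Ioi_inter_Iio,
        ← integral_Ioc_eq_integral_Ioo, ← intervalIntegral.integral_of_le zero_le_one]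
      exact intervalIntegral.integral_eq_sub_of_hasDerivAt (fun y _ => hH y)
        ((continuous_id.mul hg).intervalIntegrable _ _)
    rw [h2]
    simp [Measure.real, EuclideanSpace.volume_ball_fin_two, pi_pos.le]
    try ring

/-- trial function -/
def trial (c a : ℝ) (x : Pt) : ℝ := c * (‖x‖ ^ 2 / (‖x‖ ^ 2 + a))

lemma trial_deriv (c a : ℝ) (ha : 0 < a) (x : Pt) :
    HasFDerivAt (trial c a) ((c * (a / (‖x‖ ^ 2 + a) ^ 2)) • (2 • innerSL ℝ x)) x := by
  have h1 : HasFDerivAt (fun x : Pt => ‖x‖ ^ 2) (2 • innerSL ℝ x) x :=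
    (hasStrictFDerivAt_norm_sq x).hasFDerivAt
  have hp : ‖x‖ ^ 2 + a ≠ 0 := by positivity
  have h2 : HasDerivAt (fun s : ℝ => c * (s / (s + a))) (c * (a / (‖x‖ ^ 2 + a) ^ 2)) (‖x‖ ^ 2) := by
    have := (((hasDerivAt_id (‖x‖ ^ 2)).div ((hasDerivAt_id (‖x‖ ^ 2)).add_const a) hp).const_mul c)
    refine HasDerivAt.congr_deriv this ?_
    simp
  exact HasDerivAt.comp_hasFDerivAt (h₂ := fun s : ℝ => c * (s / (s + a))) (f := fun x : Pt => ‖x‖ ^ 2) x h2 h1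

lemma trial_density (c ε : ℝ) (hε : 0 < ε) (x : Pt) :
    e1Density ε (trial c (ε^2)) x =
      c^2 * (4 * ‖x‖^2 * (ε^2)^2 / (‖x‖^2 + ε^2)^4 + ‖x‖^2 / (‖x‖^2+ε^2)^2)
        + c^4 * (‖x‖^8/(‖x‖^2+ε^2)^4) / ε^2 := by
  have hf := (trial_deriv c (ε^2) (by positivity) x).fderiv
  have hp : ‖x‖ ^ 2 + ε^2 ≠ 0 := by positivity
  have hx : ‖x‖^2 = x 0 ^ 2 + x 1 ^ 2 := by
    rw [EuclideanSpace.norm_sq_eq]; simp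
  have h0 : pd1R (trial c (ε^2)) x = (c * (ε^2 / (‖x‖ ^ 2 + ε^2) ^ 2)) * (2 * x 0) := by
    rw [pd1R, hf]; simp [EuclideanSpace.inner_single_right]
  have h1 : pd2R (trial c (ε^2)) x = (c * (ε^2 / (‖x‖ ^ 2 + ε^2) ^ 2)) * (2 * x 1) := by
    rw [pd2R, hf]; simp [EuclideanSpace.inner_single_right]
  have e : pd1R (trial c (ε^2)) x ^ 2 + pd2R (trial c (ε^2)) x ^ 2 =
      c^2 * (4 * ‖x‖^2 * (ε^2)^2 / (‖x‖^2 + ε^2)^4) := by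
    rw [h0, h1]
    trans (c * (ε^2 / (‖x‖ ^ 2 + ε^2) ^ 2))^2 * (4 * (x 0 ^ 2 + x 1 ^ 2))
    · ring
    · rw [← hx]; field_simp
  rw [e1Density, e, trial]
  rcases eq_or_ne ‖x‖ 0 with h | h
  · simp [h]
  · field_simp

lemma mass_int (a : ℝ) (ha : 0 < a) (c : ℝ) :
    IntegrableOn (fun x => trial c a x ^ 2) B1 ∧
    ∫ x in B1, trial c a x ^ 2 =
      c^2 * (π * (1 - 2 * a * (log (1 + a) - log a) + a / (1 + a))) := by
  have := radial_int (fun r => (c * (r^2/(r^2+a)))^2)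
    (fun r => c^2 / 2 * (r^2 - 2 * a * log (r^2+a) - a^2 / (r^2+a))) ?_ ?_
  · refine ⟨this.1, this.2.trans ?_⟩
    have : 1 + a ≠ 0 := by positivity
    simp
    field_simp
    ring
  · have : ∀ r : ℝ, r^2 + a ≠ 0 := fun r => by positivity
    fun_prop (disch := assumption)
  · intro y
    have hp : y^2 + a ≠ 0 := by positivity
    have h1 : HasDerivAt (fun r : ℝ => r^2 + a) (2 * y) y := by
      simpa using (hasDerivAt_pow 2 y).add_const a
    have h0 : HasDerivAt (fun r : ℝ => r^2) (2 * y) y := by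
      simpa using (hasDerivAt_pow 2 y)
    have := ((h0.sub ((h1.log hp).const_mul (2*a))).sub (((h1.inv hp)).const_mul (a^2))).const_mul (c^2/2)
    simp only [div_eq_mul_inv]
    simp only [div_eq_mul_inv] at this
    refine HasDerivAt.congr_deriv this ?_
    field_simp
    ring

lemma energy_int (ε : ℝ) (hε : 0 < ε) (a : ℝ) (haε : a = ε^2) (c : ℝ) :
    IntegrableOn (e1Density ε (trial c a)) B1 ∧
    ∫ x in B1, e1Density ε (trial c a) x =
      π * (c^2 * (4 * a^2 * ((1/a^2 - 1/(1+a)^2)/2 - a/3 * (1/a^3 - 1/(1+a)^3))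
        + (log (1 + a) - log a) - 1/(1+a))
      + c^4/a * (1 - 4*a*(log (1 + a) - log a) + 6 * a/(1+a) - 2*a^3*(1/a^2-1/(1+a)^2)
        + a^4/3*(1/a^3-1/(1+a)^3))) := by
  have ha : 0 < a := by rw [haε]; positivity
  have hD : e1Density ε (trial c a) = fun x => c^2 * (4 * ‖x‖^2 * a^2 / (‖x‖^2 + a)^4 + ‖x‖^2 / (‖x‖^2+a)^2)
        + c^4 * (‖x‖^8/(‖x‖^2+a)^4) / a := by
    ext x; rw [haε]; exact trial_density c ε hε x
  rw [hD]
  have := radial_int (fun r => c^2 * (4 * r^2 * a^2 / (r^2 + a)^4 + r^2 / (r^2+a)^2)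
        + c^4 * (r^8/(r^2+a)^4) / a)
    (fun r => 1/2 * (c^2 * (4 * a^2 * (-(1/2) * ((r^2+a)⁻¹)^2 + a/3 * ((r^2+a)⁻¹)^3)
      + log (r^2+a) + a * (r^2+a)⁻¹)
      + c^4/a * (r^2 - 4 * a * log (r^2+a) - 6 * a^2 * (r^2+a)⁻¹ + 2 * a^3 * ((r^2+a)⁻¹)^2
        - a^4/3 * ((r^2+a)⁻¹)^3))) ?_ ?_
  · refine ⟨this.1, this.2.trans ?_⟩
    have : 1 + a ≠ 0 := by positivity
    simp
    field_simp
    ring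
  · have : ∀ r : ℝ, r^2 + a ≠ 0 := fun r => by positivity
    have h2 : ∀ r : ℝ, (r^2 + a)^2 ≠ 0 := fun r => by positivity
    have h4 : ∀ r : ℝ, (r^2 + a)^4 ≠ 0 := fun r => by positivity
    fun_prop (disch := assumption)
  · intro y
    have hp : y^2 + a ≠ 0 := by positivity
    have h1 : HasDerivAt (fun r : ℝ => r^2 + a) (2 * y) y := by
      simpa using (hasDerivAt_pow 2 y).add_const a
    have h0 : HasDerivAt (fun r : ℝ => r^2) (2 * y) y := by
      simpa using (hasDerivAt_pow 2 y)
    have hl := h1.log hp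
    have i1 : HasDerivAt (fun r : ℝ => (r^2 + a)⁻¹) (-(2*y)/(y^2+a)^2) y := h1.inv hp
    have i2 : HasDerivAt (fun r : ℝ => ((r^2 + a)⁻¹)^2) _ y := i1.pow 2
    have i3 : HasDerivAt (fun r : ℝ => ((r^2 + a)⁻¹)^3) _ y := i1.pow 3
    have := (((((i2.const_mul (-(1/2))).add (i3.const_mul (a/3))).const_mul (4*a^2)).add hl).add
      (i1.const_mul a)).const_mul (c^2) |>.add
      (((((h0.sub (hl.const_mul (4*a))).sub (i1.const_mul (6*a^2))).add (i2.const_mul (2*a^3))).sub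
        (i3.const_mul (a^4/3))).const_mul (c^4/a)) |>.const_mul (1/2)
    refine HasDerivAt.congr_deriv this ?_
    simp only [Nat.reduceSub, pow_one, inv_pow, Nat.cast_ofNat]
    field_simp
    ring

set_option maxHeartbeats 1000000 in
lemma key_bound (a L l : ℝ) (ha : 0 < a) (ha1 : a < 1/1000) (hL1 : 1 ≤ L) (hLl : L ≤ l + a)
    (hL2 : a * L^2 < 1/1000) :
    0 < π * (1 - 2 * a * L + a / (1 + a)) ∧
    ∀ c : ℝ, c^2 * (π * (1 - 2 * a * L + a / (1 + a))) = 1 →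
    π * (c^2 * (4 * a^2 * ((1/a^2 - 1/(1+a)^2)/2 - a/3 * (1/a^3 - 1/(1+a)^3))
        + L - 1/(1+a))
      + c^4/a * (1 - 4*a*L + 6 * a/(1+a) - 2*a^3*(1/a^2-1/(1+a)^2)
        + a^4/3*(1/a^3-1/(1+a)^3))) ≤ 1 / (π * a) + l + 1 := by
  have hq : 0 < 1 + a := by positivity
  have haL : a * L < 1/1000 := by nlinarith
  have haL0 : 0 < a * L := by positivity
  obtain ⟨b, hb⟩ : ∃ b, b = a / (1 + a) := ⟨_, rfl⟩
  have hb0 : 0 < b := by rw [hb]; positivity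
  have hba : b ≤ a := by rw [hb, div_le_iff₀ hq]; nlinarith
  have hba2 : a - a^2 ≤ b := by
    rw [hb, le_div_iff₀ hq]; nlinarith [pow_pos ha 3]
  obtain ⟨m, hm⟩ : ∃ m, m = 1 - 2 * a * L + a / (1 + a) := ⟨_, rfl⟩
  have hmb : m = 1 - 2 * (a * L) + b := by rw [hm, hb]; ring
  rw [← hm]
  have hm0 : 1/2 < m := by rw [hmb]; linarith
  have hm0' : 0 < m := by linarith
  have hpi := pi_pos
  refine ⟨by positivity, fun c hc => ?_⟩
  have hc2 : c^2 = 1/(π*m) := by field_simp; linarith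
  have hc4 : c^4 = 1/(π*m)^2 := by
    rw [show c^4 = (c^2)^2 by ring, hc2]; field_simp
  -- kinetic part
  have hN : 4 * a^2 * ((1/a^2 - 1/(1+a)^2)/2 - a/3 * (1/a^3 - 1/(1+a)^3))
        + L - 1/(1+a) ≤ L - 1/3 + a := by
    have e : 4 * a^2 * ((1/a^2 - 1/(1+a)^2)/2 - a/3 * (1/a^3 - 1/(1+a)^3))
        + L - 1/(1+a) = 2/3 - 2 * b^2 + 4/3 * b^3 + L - (1 - b) := by
      rw [hb]; field_simp; ring
    rw [e]
    have h1 : b^2 * b ≤ b^2 * 1 := mul_le_mul_of_nonneg_left (by linarith) (sq_nonneg b)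
    nlinarith [sq_nonneg b]
  have hF : 1 - 4*a*L + 6 * a/(1+a) - 2*a^3*(1/a^2-1/(1+a)^2)
        + a^4/3*(1/a^3-1/(1+a)^3) ≤ 1 - 4*(a*L) + 13/3*a + 2*a^2 := by
    have e : 1 - 4*a*L + 6 * a/(1+a) - 2*a^3*(1/a^2-1/(1+a)^2)
        + a^4/3*(1/a^3-1/(1+a)^3) = 1 - 4*(a*L) + 6*b - 2*a + 2*a*b^2 + a/3 - a*b^3/3 := by
      rw [hb]; field_simp; ring
    rw [e]
    have h1 : 0 < a*b^3 := by positivity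
    have h2 : a*b^2 ≤ a*a := by
      apply mul_le_mul_of_nonneg_left _ ha.le
      nlinarith
    nlinarith
  have hF2 : 1 - 4*(a*L) + 13/3*a + 2*a^2 ≤ m^2 * (1 + 5/2 * a) := by
    have h1 : 1 - 4*(a*L) + 2*a - 2*a^2 ≤ m^2 := by
      have := sq_nonneg (m-1)
      nlinarith
    have h2 : (1 - 4*(a*L) + 2*a - 2*a^2) * (1 + 5/2*a) ≤ m^2 * (1 + 5/2*a) :=
      mul_le_mul_of_nonneg_right h1 (by positivity)
    refine le_trans ?_ h2
    have h3 : 0 ≤ a * (1/6 - 10 * (a*L) - 5 * a^2 + a) := by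
      apply mul_nonneg ha.le; nlinarith
    have h4 : (1 - 4*(a*L) + 2*a - 2*a^2) * (1 + 5/2*a) - (1 - 4*(a*L) + 13/3*a + 2*a^2)
        = a * (1/6 - 10 * (a*L) - 5 * a^2 + a) := by ring
    linarith
  have hA : (L - 1/3 + a)/m ≤ L - 1/3 + a + 4*(a*L^2) := by
    rw [div_le_iff₀ hm0', hmb]
    have : 0 ≤ (L - 1/3 + a + 4*(a*L^2)) := by
      have : 0 < a * L^2 := by positivity
      linarith
    have h5 : 0 ≤ (L - 1/3 + a + 4*(a*L^2)) * b := by positivity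
    have h6 : 0 ≤ a*L*(2*L + 2/3 - 2*a - 8*(a*L^2)) := by
      apply mul_nonneg haL0.le; nlinarith
    have h7 : (L - 1/3 + a + 4*(a*L^2)) * (1 - 2*(a*L) + b) - (L - 1/3 + a)
        = (L - 1/3 + a + 4*(a*L^2)) * b + a*L*(2*L + 2/3 - 2*a - 8*(a*L^2)) := by ring
    linarith
  obtain ⟨N, hNe⟩ : ∃ N, N = 4 * a^2 * ((1/a^2 - 1/(1+a)^2)/2 - a/3 * (1/a^3 - 1/(1+a)^3))
        + L - 1/(1+a) := ⟨_, rfl⟩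
  obtain ⟨F, hFe⟩ : ∃ F, F = 1 - 4*a*L + 6 * a/(1+a) - 2*a^3*(1/a^2-1/(1+a)^2)
        + a^4/3*(1/a^3-1/(1+a)^3) := ⟨_, rfl⟩
  rw [← hNe] at hN ⊢
  rw [← hFe] at hF ⊢
  rw [hc2, hc4]
  have e : π * (1 / (π * m) * N + 1 / (π * m) ^ 2 / a * F) = N/m + F/m^2 * (1/(π*a)) := by
    field_simp
  rw [e]
  have hN2 : N/m ≤ L - 1/3 + a + 4*(a*L^2) :=
    le_trans (div_le_div_of_nonneg_right hN hm0'.le) hA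
  have hF3 : F/m^2 ≤ 1 + 5/2*a := by
    rw [div_le_iff₀ (by positivity)]; linarith
  have hF4 : F/m^2 * (1/(π*a)) ≤ 1/(π*a) + 5/2/π := by
    have := mul_le_mul_of_nonneg_right hF3 (show 0 ≤ 1/(π*a) by positivity)
    refine this.trans (le_of_eq ?_)
    field_simp
  have hp : 5/2/π ≤ 5/6 := by
    rw [div_le_iff₀ hpi]; linarith [pi_gt_three]
  linarith

theorem stmt4 : ∃ ε₀ : ℝ, 0 < ε₀ ∧ ∀ ε : ℝ, 0 < ε → ε < ε₀ →
    E1 ε ≤ 1 / (π * ε ^ 2) + Real.log (1 / ε ^ 2) + 1 := by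
  have hlim : Tendsto (fun x : ℝ => x * |Real.log x|) (nhdsWithin 0 (Set.Ioi 0)) (nhds 0) := by
    have := (tendsto_log_mul_rpow_nhdsGT_zero one_pos).abs
    simp only [rpow_one, abs_zero] at this
    refine this.congr' ?_
    filter_upwards [self_mem_nhdsWithin] with x hx
    rw [abs_mul, abs_of_pos (show 0 < x from hx)]; ring
  have hev : ∀ᶠ x : ℝ in nhdsWithin 0 (Set.Ioi 0), x * |Real.log x| < 1/1000 :=
    hlim.eventually_lt_const (by norm_num)
  rw [eventually_nhdsWithin_iff, Metric.eventually_nhds_iff] at hev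
  obtain ⟨δ, hδ, hev⟩ := hev
  refine ⟨min δ (1/1000), by positivity, fun ε hε hεl => ?_⟩
  have h1 : ε < δ := lt_of_lt_of_le hεl (min_le_left _ _)
  have h2 : ε < 1/1000 := lt_of_lt_of_le hεl (min_le_right _ _)
  have h3 := hev (y := ε) (by simpa [abs_of_pos hε] using h1) hε
  obtain ⟨a, haε⟩ : ∃ a, a = ε^2 := ⟨_, rfl⟩
  have ha : 0 < a := by rw [haε]; positivity
  have ha1 : a < 1/1000 := by rw [haε]; nlinarith
  have hlog : Real.log a = 2 * Real.log ε := by rw [haε, Real.log_pow]; norm_num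
  have hlε : Real.log ε ≤ -1 := by
    rw [Real.log_le_iff_le_exp hε, Real.exp_neg]
    have := exp_one_lt_d9
    rw [le_inv_comm₀ hε (exp_pos 1)]
    have : 1000 < ε⁻¹ := by rw [lt_inv_comm₀ (by norm_num) hε]; norm_num at h2 ⊢; exact h2
    linarith
  rw [abs_of_neg (by linarith)] at h3
  have hl0 : 0 ≤ Real.log (1+a) := Real.log_nonneg (by linarith)
  have hl1 : Real.log (1+a) ≤ a := by
    have := Real.log_le_sub_one_of_pos (show 0 < 1 + a by positivity); linarith
  have hLsq : a * (Real.log (1+a) - Real.log a)^2 < 1/1000 := by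
    have hb : ε * (Real.log (1+a) - Real.log a) < 3/1000 := by
      rw [hlog]; nlinarith
    have hb0 : 0 ≤ ε * (Real.log (1+a) - Real.log a) := by
      apply mul_nonneg hε.le; linarith
    have : a * (Real.log (1+a) - Real.log a)^2 = (ε * (Real.log (1+a) - Real.log a))^2 := by
      rw [mul_pow, ← haε]
    rw [this]; nlinarith
  obtain ⟨hpos, hkey⟩ := key_bound a (Real.log (1+a) - Real.log a) (Real.log (1/ε^2)) ha ha1
    (by linarith) (by rw [← haε, one_div, Real.log_inv]; linarith) hLsq
  obtain ⟨c, hc⟩ : ∃ c : ℝ, c^2 * (π * (1 - 2 * a * (Real.log (1+a) - Real.log a) + a / (1 + a))) = 1 :=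
    ⟨√((π * (1 - 2 * a * (Real.log (1+a) - Real.log a) + a / (1 + a)))⁻¹), by
      rw [Real.sq_sqrt (inv_nonneg.2 hpos.le)]; exact inv_mul_cancel₀ hpos.ne'⟩
  have hE := energy_int ε hε a haε c
  have hM := mass_int a ha c
  have hk := hkey c hc
  rw [← haε] at *
  refine le_trans (csInf_le ?_ ⟨trial c a, ?_, ?_, hM.1, hE.1, hM.2.trans hc, rfl⟩) ?_
  · refine ⟨0, ?_⟩
    rintro E ⟨ξ, -, -, -, -, -, rfl⟩
    apply integral_nonneg
    intro x
    simp only [e1Density, Pi.zero_apply]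
    positivity
  · intro x y h; simp [trial, h]
  · intro x _; exact (trial_deriv c a ha x).differentiableAt.differentiableWithinAt
  · rw [hE.2]
    exact hk
end
end
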